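/- There exists a universal constant ε > 0 with the following property: if (v,q) is a suitable weak solution of the Navier–Stokes equations on the parabolic cylinder Q(z₀,r) = B(x₀,r)×(t₀−r²,t₀) and z₀ = (x₀,t₀) is a singular point of v (i.e., v is not essentially bounded on Q(z₀,ρ) for any ρ ∈ (0,r]), then (1/a²) ∫_{Q(z₀,a)} ( |v|³ + |q|^{3/2} ) dx dt > ε for every a ∈ (0,r]. -/

import Mathlib

/-!
This is the ε-regularity theorem of Caffarelli–Kohn–Nirenberg, in the form due to Lin, proved in its
direct form (`bounded_of_small`): if `∫_{Q(z₀,a)} (|v|³ + |q|^{3/2}) ≤ ε a²`, then `v` is essentially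
bounded on `Q(z₀,a/2)`, so `z₀` is not singular.

Put `R = a/2` and fix a centre `(c,T)` in `Q(z₀,R)`. The heart of the proof is `energy_all`: by strong
induction on the dyadic scales `ρ = R/2^j`, the kinetic energy `∫_{B(c,ρ)} |v|²` at almost every time
and the dissipation on `Q((c,T),ρ)` are at most `N²ρ³`, where `N = n/R` with a small universal `n`
(`EnergyAt`). As `ρ → 0`, Lebesgue differentiation along countably many centres and top times
(`ae_le_of_averages`) turns this into a pointwise bound for `|v|²`.

In the induction step the local energy inequality is tested with a localised backward heat kernel
(`testK`, `energy_step`). This leaves the flux `(|v|² + 2q) v·∇φ`, which is split into dyadic shells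
(`shell`, `fluxJ`); the contribution of the `j`-th shell is bounded through the bounds at scales up to
`j` and carries a factor `(2/3)^j` (`flux_one`), so the sum is finite, and it is cubic in `n` where a
quadratic bound is needed. The cubic term is estimated by the interior Gagliardo–Nirenberg
inequality (`ball_l4`, `slice_l4`).

The pressure term `∫ q v·∇Γ`, `Γ` a dyadic piece of the kernel, is treated on almost every time slice
by duality (`pressure_slice`): the equation `-Δq = ∂ᵢ∂ⱼ(vᵢvⱼ)` is tested with the truncated regularised
Newtonian potential of `v·∇Γ`. Because `div v = 0`, `v·∇Γ` is a divergence, and the potential gains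
one order of decay (`conv_dens_le`, `pot_bounds`). No Calderón–Zygmund theory is used: the only
singular-integral input is the `L²` bound `hessian_l2` of the Hessian by the Laplacian. That the
pressure equation holds on almost every slice for all tests at once (`slice_pres`) rests on a
countable dense family of tests (`countable_tests`).
-/

open MeasureTheory Metric Set Filter
open scoped ENNReal NNReal Topology

noncomputable section

/-- Three-dimensional Euclidean space. -/
abbrev E3 := EuclideanSpace ℝ (Fin 3)

/-- The parabolic cylinder `Q(z₀,r) = B(x₀,r) × (t₀−r²,t₀) ⊂ ℝ³ × ℝ`, `z₀ = (x₀,t₀)`. -/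
def pCyl (x₀ : E3) (t₀ r : ℝ) : Set (E3 × ℝ) :=
  ball x₀ r ×ˢ Set.Ioo (t₀ - r ^ 2) t₀

/-- Pointwise squared norm `|∇v|² = Σ_{ij} (∂_j v_i)²` of a (weak) gradient,
where `dv x t j` is the vector `∂_j v(x,t)`. -/
def gradSq (dv : E3 → ℝ → Fin 3 → E3) (x : E3) (t : ℝ) : ℝ :=
  ∑ j : Fin 3, ‖dv x t j‖ ^ 2

/-- The spatial Laplacian `Δφ(x) = Σ_i ∂_i ∂_i φ(x)` of a scalar function on `ℝ³`. -/
def lapScalar (φ : E3 → ℝ) (x : E3) : ℝ :=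
  ∑ i : Fin 3, fderiv ℝ (fun y => fderiv ℝ φ y (EuclideanSpace.single i 1)) x
    (EuclideanSpace.single i 1)

/-- `(v,q)` is a suitable weak solution of the Navier–Stokes equations on the parabolic
cylinder `Q((x₀,t₀)),r)`; `dv x t j` represents the weak spatial derivative `∂_j v`. -/
structure IsSuitableWeakSolution (v : E3 → ℝ → E3) (q : E3 → ℝ → ℝ)
    (dv : E3 → ℝ → Fin 3 → E3) (x₀ : E3) (t₀ r : ℝ) : Prop where
  meas : Measurable (Function.uncurry v)
  meas_q : Measurable (Function.uncurry q)
  meas_dv : Measurable (Function.uncurry dv)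
  /-- `v ∈ L^∞(t₀−r²,t₀; L²(B(x₀,r)))` -/
  linf_l2 : ∃ C : ℝ≥0∞, C < ⊤ ∧
    ∀ᵐ t ∂(volume.restrict (Set.Ioo (t₀ - r ^ 2) t₀)),
      ∫⁻ x in ball x₀ r, (‖v x t‖₊ : ℝ≥0∞) ^ 2 ≤ C
  /-- `∇v ∈ L²(Q(z₀,r))` -/
  grad_l2 : ∫⁻ t in Set.Ioo (t₀ - r ^ 2) t₀,
      ∫⁻ x in ball x₀ r, ENNReal.ofReal (gradSq dv x t) < ⊤
  /-- `dv` is the distributional spatial gradient of `v` in `B(x₀,r)` -/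
  weak_grad : ∀ᵐ t ∂(volume.restrict (Set.Ioo (t₀ - r ^ 2) t₀)),
    ∀ ψ : E3 → ℝ, ContDiff ℝ (⊤ : ℕ∞) ψ → HasCompactSupport ψ → tsupport ψ ⊆ ball x₀ r →
      ∀ i j : Fin 3,
        ∫ x, v x t i * fderiv ℝ ψ x (EuclideanSpace.single j 1)
          = - ∫ x, dv x t j i * ψ x
  /-- `q ∈ L^{3/2}(Q(z₀,r))` -/
  q_l32 : ∫⁻ z in pCyl x₀ t₀ r, ENNReal.ofReal (|q z.1 z.2| ^ ((3:ℝ)/2)) < ⊤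
  /-- `div v = 0` in the sense of distributions on `Q(z₀,r)` -/
  div_free : ∀ φ : E3 → ℝ → ℝ,
    ContDiff ℝ (⊤ : ℕ∞) (fun p : E3 × ℝ => φ p.1 p.2) →
    HasCompactSupport (fun p : E3 × ℝ => φ p.1 p.2) →
    tsupport (fun p : E3 × ℝ => φ p.1 p.2) ⊆ pCyl x₀ t₀ r →
    ∫ t in Set.Ioo (t₀ - r ^ 2) t₀, ∫ x,
      ∑ i : Fin 3, v x t i * fderiv ℝ (fun y => φ y t) x (EuclideanSpace.single i 1) = 0
  /-- `∂_t v + div(v⊗v) − Δv = −∇q` in the sense of distributions on `Q(z₀,r)` -/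
  weak_solution : ∀ φ : E3 → ℝ → E3,
    ContDiff ℝ (⊤ : ℕ∞) (fun p : E3 × ℝ => φ p.1 p.2) →
    HasCompactSupport (fun p : E3 × ℝ => φ p.1 p.2) →
    tsupport (fun p : E3 × ℝ => φ p.1 p.2) ⊆ pCyl x₀ t₀ r →
    ∫ t in Set.Ioo (t₀ - r ^ 2) t₀, ∫ x,
      ((∑ i : Fin 3, v x t i * deriv (fun s => φ x s i) t)
        + (∑ i : Fin 3, ∑ j : Fin 3,
            v x t i * v x t j * fderiv ℝ (fun y => φ y t i) x (EuclideanSpace.single j 1))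
        - (∑ i : Fin 3, ∑ j : Fin 3,
            dv x t j i * fderiv ℝ (fun y => φ y t i) x (EuclideanSpace.single j 1))
        + q x t * (∑ i : Fin 3,
            fderiv ℝ (fun y => φ y t i) x (EuclideanSpace.single i 1))) = 0
  /-- the local energy inequality -/
  local_energy : ∀ᵐ t ∂(volume.restrict (Set.Ioo (t₀ - r ^ 2) t₀)),
    ∀ φ : E3 → ℝ → ℝ,
      ContDiff ℝ (⊤ : ℕ∞) (fun p : E3 × ℝ => φ p.1 p.2) →
      HasCompactSupport (fun p : E3 × ℝ => φ p.1 p.2) →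
      tsupport (fun p : E3 × ℝ => φ p.1 p.2) ⊆ ball x₀ r ×ˢ Set.Ioc (t₀ - r ^ 2) t₀ →
      (∀ x s, 0 ≤ φ x s) →
      (∫ x, φ x t * ‖v x t‖ ^ 2)
        + 2 * ∫ s in Set.Ioc (t₀ - r ^ 2) t, ∫ x, φ x s * gradSq dv x s
        ≤ ∫ s in Set.Ioc (t₀ - r ^ 2) t, ∫ x,
            (‖v x s‖ ^ 2 * (deriv (fun τ => φ x τ) s + lapScalar (fun y => φ y s) x)
              + (‖v x s‖ ^ 2 + 2 * q x s) *
                  (∑ i : Fin 3,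
                    v x s i * fderiv ℝ (fun y => φ y s) x (EuclideanSpace.single i 1)))

/-- `z₀ = (x₀,t₀)` is a singular point of `v` relative to the cylinder radius `r`: `v` is
not essentially bounded on `Q(z₀,ρ)` for any `ρ ∈ (0,r]`. -/
def IsSingularPointIn (v : E3 → ℝ → E3) (x₀ : E3) (t₀ r : ℝ) : Prop :=
  ∀ ρ : ℝ, 0 < ρ → ρ ≤ r →
    ¬ ∃ C : ℝ, ∀ᵐ z : E3 × ℝ ∂(volume.restrict (pCyl x₀ t₀ ρ)), ‖v z.1 z.2‖ ≤ C

/-! ### Partial derivatives and integration by parts -/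

/-- The `i`-th partial derivative `∂_i f` of a scalar function on `ℝ³`. -/
def pd (i : Fin 3) (f : E3 → ℝ) (x : E3) : ℝ := fderiv ℝ f x (EuclideanSpace.single i 1)

/-- Smooth scalar functions on `ℝ³`. -/
def Smooth (f : E3 → ℝ) : Prop := ContDiff ℝ (⊤ : ℕ∞) f

lemma Smooth.diff {f : E3 → ℝ} (hf : Smooth f) : Differentiable ℝ f :=
  ContDiff.differentiable hf (by simp)

lemma Smooth.cont {f : E3 → ℝ} (hf : Smooth f) : Continuous f := ContDiff.continuous hf

lemma Smooth.pd {f : E3 → ℝ} (hf : Smooth f) (i : Fin 3) : Smooth (pd i f) := by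
  have h : ContDiff ℝ (⊤ : ℕ∞) (fderiv ℝ f) := ContDiff.fderiv_right (m := (⊤ : ℕ∞)) hf (by simp)
  exact h.clm_apply contDiff_const

lemma Smooth.mul {f g : E3 → ℝ} (hf : Smooth f) (hg : Smooth g) : Smooth (fun x => f x * g x) :=
  ContDiff.mul hf hg

lemma Smooth.add {f g : E3 → ℝ} (hf : Smooth f) (hg : Smooth g) : Smooth (fun x => f x + g x) :=
  ContDiff.add hf hg

lemma smooth_lap {f : E3 → ℝ} (hf : Smooth f) : Smooth (lapScalar f) := by
  change ContDiff ℝ _ (fun x => ∑ i, pd i (pd i f) x)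
  exact ContDiff.sum fun i _ => (hf.pd i).pd i

lemma lap_eq (f : E3 → ℝ) (x : E3) : lapScalar f x = ∑ i, pd i (pd i f) x := rfl

lemma tsupport_pd (i : Fin 3) (f : E3 → ℝ) : tsupport (pd i f) ⊆ tsupport f := by
  refine (closure_mono ?_).trans (tsupport_fderiv_subset ℝ (f := f))
  intro x hx
  simp only [Function.mem_support, pd] at hx ⊢
  intro h; rw [h] at hx; simp at hx

lemma compact_pd {f : E3 → ℝ} (hf : HasCompactSupport f) (i : Fin 3) :
    HasCompactSupport (pd i f) := hf.mono' ((subset_tsupport _).trans (tsupport_pd i f))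

lemma pd_eq_zero {f : E3 → ℝ} {x : E3} (h : x ∉ tsupport f) (i : Fin 3) : pd i f x = 0 :=
  image_eq_zero_of_notMem_tsupport fun hx => h (tsupport_pd i f hx)

lemma pd_congr {f g : E3 → ℝ} {x : E3} (h : f =ᶠ[𝓝 x] g) (i : Fin 3) : pd i f x = pd i g x := by
  simp only [pd, h.fderiv_eq]

lemma pd_eventuallyEq {f g : E3 → ℝ} {x : E3} (h : f =ᶠ[𝓝 x] g) (i : Fin 3) :
    pd i f =ᶠ[𝓝 x] pd i g := by
  filter_upwards [h.eventuallyEq_nhds] with y hy using pd_congr hy i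

lemma pd_mul {f g : E3 → ℝ} {x : E3} (hf : DifferentiableAt ℝ f x) (hg : DifferentiableAt ℝ g x)
    (i : Fin 3) : pd i (fun y => f y * g y) x = pd i f x * g x + f x * pd i g x := by
  simp only [pd, fderiv_fun_mul hf hg]
  simp; ring

lemma pd_add {f g : E3 → ℝ} {x : E3} (hf : DifferentiableAt ℝ f x) (hg : DifferentiableAt ℝ g x)
    (i : Fin 3) : pd i (fun y => f y + g y) x = pd i f x + pd i g x := by
  simp only [pd, fderiv_fun_add hf hg]
  simp

lemma pd_const_mul {f : E3 → ℝ} {x : E3} (hf : DifferentiableAt ℝ f x) (c : ℝ) (i : Fin 3) :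
    pd i (fun y => c * f y) x = c * pd i f x := by
  simp only [pd, fderiv_const_mul hf c]
  simp

lemma pd_comm {f : E3 → ℝ} (hf : Smooth f) (i j : Fin 3) (x : E3) :
    pd i (pd j f) x = pd j (pd i f) x := by
  have hs : IsSymmSndFDerivAt ℝ f x :=
    (ContDiff.contDiffAt hf).isSymmSndFDerivAt (by simp only [minSmoothness_of_isRCLikeNormedField]; exact WithTop.coe_le_coe.2 le_top)
  have hd : DifferentiableAt ℝ (fderiv ℝ f) x :=
    (ContDiff.fderiv_right (m := (⊤ : ℕ∞)) hf (by simp)).differentiable (by simp) x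
  have key : ∀ a b : Fin 3, pd a (pd b f) x =
      fderiv ℝ (fderiv ℝ f) x (EuclideanSpace.single a 1) (EuclideanSpace.single b 1) := by
    intro a b
    simp only [pd]
    rw [show pd b f = fun y => fderiv ℝ f y (EuclideanSpace.single b 1) from rfl]
    rw [fderiv_clm_apply hd (differentiableAt_const _)]
    simp
  rw [key, key, hs.eq]

lemma abs_pd_le (f : E3 → ℝ) (x : E3) (i : Fin 3) : |pd i f x| ≤ ‖fderiv ℝ f x‖ := by
  have := (fderiv ℝ f x).le_opNorm (EuclideanSpace.single i 1)
  simpa [pd] using this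

/-- Integration by parts for scalar functions, one of which has compact support. -/
lemma integral_mul_pd {f g : E3 → ℝ} (hf : Smooth f) (hg : Smooth g)
    (hc : HasCompactSupport g) (i : Fin 3) :
    ∫ x, f x * pd i g x = - ∫ x, pd i f x * g x := by
  refine integral_mul_fderiv_eq_neg_fderiv_mul_of_integrable ?_ ?_ ?_
    (fun x _ => hf.diff x) (fun x _ => hg.diff x)
  · exact ((hf.pd i).cont.mul hg.cont).integrable_of_hasCompactSupport hc.mul_left
  · exact (hf.cont.mul (hg.pd i).cont).integrable_of_hasCompactSupport (compact_pd hc i).mul_left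
  · exact (hf.cont.mul hg.cont).integrable_of_hasCompactSupport hc.mul_left

/-- The `L²` norm of the Hessian of a test function is controlled by that of the Laplacian. -/
lemma hessian_l2 {f : E3 → ℝ} (hf : Smooth f) (hc : HasCompactSupport f) :
    ∑ a, ∑ b, ∫ x, (pd a (pd b f) x) ^ 2 = ∫ x, (lapScalar f x) ^ 2 := by
  have key : ∀ a b : Fin 3, ∫ x, (pd a (pd b f) x) ^ 2 = ∫ x, pd a (pd a f) x * pd b (pd b f) x := by
    intro a b
    have h1 : ∫ x, (pd a (pd b f) x) ^ 2 = ∫ x, pd a (pd b f) x * pd a (pd b f) x := by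
      congr 1; ext x; ring
    have hcb := compact_pd hc b
    rw [h1, integral_mul_pd ((hf.pd b).pd a) (hf.pd b) hcb a]
    have h2 : ∀ x, pd a (pd a (pd b f)) x = pd b (pd a (pd a f)) x := by
      intro x
      have : pd a (pd b f) = pd b (pd a f) := by ext y; exact pd_comm hf a b y
      rw [this, pd_comm (hf.pd a) a b]
    simp_rw [h2]
    have h3 := integral_mul_pd ((hf.pd a).pd a) (hf.pd b) hcb b
    rw [h3]
  simp_rw [key]
  have hi : ∀ a b : Fin 3, Integrable (fun x => pd a (pd a f) x * pd b (pd b f) x) := fun a b =>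
    (((hf.pd a).pd a).cont.mul ((hf.pd b).pd b).cont).integrable_of_hasCompactSupport
      (compact_pd (compact_pd hc b) b).mul_left
  have h4 : ∀ x, (lapScalar f x) ^ 2 = ∑ a, ∑ b, pd a (pd a f) x * pd b (pd b f) x := by
    intro x; rw [lap_eq, sq, Finset.sum_mul_sum]
  simp_rw [h4]
  rw [integral_finsetSum _ fun a _ => integrable_finsetSum _ fun b _ => hi a b]
  refine Finset.sum_congr rfl fun a _ => ?_
  rw [integral_finsetSum _ fun b _ => hi a b]

/-! ### Cutoffs and Young inequalities -/

/-- The fixed radial bump from which all spatial cutoffs are obtained by scaling. -/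
def bump0 : ContDiffBump (0 : E3) := ⟨1 / 2, 3 / 4, by norm_num, by norm_num⟩

/-- The spatial cutoff equal to `1` on `B(c, r/2)` and supported in `B̄(c, 3r/4)`. -/
def cutoff (c : E3) (r : ℝ) (x : E3) : ℝ := bump0 (r⁻¹ • (x - c))

lemma cutoff_smooth (c : E3) (r : ℝ) : Smooth (cutoff c r) := by
  have h : ContDiff ℝ (⊤ : ℕ∞) (fun x : E3 => bump0 x) := bump0.contDiff
  exact h.comp (g := fun x : E3 => bump0 x) (f := fun x => r⁻¹ • (x - c)) (by fun_prop)

lemma cutoff_nonneg (c : E3) (r : ℝ) (x : E3) : 0 ≤ cutoff c r x := bump0.nonneg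
lemma cutoff_le_one (c : E3) (r : ℝ) (x : E3) : cutoff c r x ≤ 1 := bump0.le_one

lemma norm_scale {r : ℝ} (hr : 0 < r) (x c : E3) : ‖r⁻¹ • (x - c)‖ = dist x c / r := by
  rw [norm_smul, norm_inv, Real.norm_of_nonneg hr.le, dist_eq_norm]; field_simp

lemma cutoff_one {c : E3} {r : ℝ} (hr : 0 < r) {x : E3} (hx : dist x c ≤ r / 2) :
    cutoff c r x = 1 := by
  apply bump0.one_of_mem_closedBall
  rw [mem_closedBall_zero_iff, norm_scale hr]
  rw [div_le_iff₀ hr]; simp [bump0]; linarith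

lemma cutoff_zero {c : E3} {r : ℝ} (hr : 0 < r) {x : E3} (hx : 3 / 4 * r ≤ dist x c) :
    cutoff c r x = 0 := by
  apply bump0.zero_of_le_dist
  rw [dist_zero_right, norm_scale hr, le_div_iff₀ hr]; simpa [bump0] using hx

lemma tsupport_cutoff {c : E3} {r : ℝ} (hr : 0 < r) :
    tsupport (cutoff c r) ⊆ closedBall c (3 / 4 * r) := by
  refine closure_minimal ?_ isClosed_closedBall
  intro x hx
  by_contra h
  rw [mem_closedBall, not_le] at h
  exact hx (cutoff_zero hr h.le)

lemma tsupport_cutoff' {c : E3} {r : ℝ} (hr : 0 < r) : tsupport (cutoff c r) ⊆ ball c r :=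
  (tsupport_cutoff hr).trans (closedBall_subset_ball (by linarith))

lemma compact_cutoff {c : E3} {r : ℝ} (hr : 0 < r) : HasCompactSupport (cutoff c r) :=
  (isCompact_closedBall c _).of_isClosed_subset (isClosed_tsupport _) (tsupport_cutoff hr)

lemma pd_scale {f : E3 → ℝ} (hf : Smooth f) (c : E3) (r : ℝ) (i : Fin 3) (x : E3) :
    pd i (fun y => f (r⁻¹ • (y - c))) x = r⁻¹ * pd i f (r⁻¹ • (x - c)) := by
  have h1 : HasFDerivAt (fun y : E3 => r⁻¹ • (y - c))
      (r⁻¹ • ContinuousLinearMap.id ℝ E3) x :=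
    ((hasFDerivAt_id x).sub_const c).const_smul r⁻¹
  have h2 := ((hf.diff (r⁻¹ • (x - c))).hasFDerivAt).comp x h1
  have h3 := h2.fderiv
  simp only [pd]
  rw [show (fun y => f (r⁻¹ • (y - c))) = f ∘ fun y => r⁻¹ • (y - c) from rfl, h3]
  simp

lemma exists_bound {f : E3 → ℝ} (hf : Continuous f) (hc : HasCompactSupport f) :
    ∃ C, 0 ≤ C ∧ ∀ x, |f x| ≤ C := by
  obtain ⟨C, hC⟩ := hc.exists_bound_of_continuous hf
  exact ⟨C, (norm_nonneg _).trans (hC 0), hC⟩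

lemma exists_bound3 {f : Fin 3 → E3 → ℝ} (hf : ∀ i, Continuous (f i))
    (hc : ∀ i, HasCompactSupport (f i)) : ∃ C, 0 ≤ C ∧ ∀ i x, |f i x| ≤ C := by
  choose C h0 hC using fun i => exists_bound (hf i) (hc i)
  refine ⟨∑ i, C i, Finset.sum_nonneg fun i _ => h0 i, fun i x => (hC i x).trans ?_⟩
  exact Finset.single_le_sum (fun j _ => h0 j) (Finset.mem_univ i)

lemma cutoff_bounds : ∃ C, 0 < C ∧ ∀ (c : E3) (r : ℝ), 0 < r → ∀ x,
    (∀ i, |pd i (cutoff c r) x| ≤ C / r) ∧ (∀ i j, |pd i (pd j (cutoff c r)) x| ≤ C / r ^ 2) := by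
  have hs : Smooth (fun x => bump0 x) := bump0.contDiff
  have hcs : HasCompactSupport (fun x => bump0 x) := bump0.hasCompactSupport
  obtain ⟨C1, h1, hC1⟩ := exists_bound3 (fun i => (hs.pd i).cont) (fun i => compact_pd hcs i)
  obtain ⟨C2, h2, hC2⟩ : ∃ C, 0 ≤ C ∧ ∀ i j x, |pd i (pd j fun x => bump0 x) x| ≤ C := by
    choose C h0 hC using fun j => exists_bound3 (fun i => ((hs.pd j).pd i).cont)
      (fun i => compact_pd (compact_pd hcs j) i)
    exact ⟨∑ i, C i, Finset.sum_nonneg fun i _ => h0 i, fun i j x => (hC j i x).trans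
      (Finset.single_le_sum (fun j _ => h0 j) (Finset.mem_univ j))⟩
  refine ⟨C1 + C2 + 1, by positivity, fun c r hr x => ?_⟩
  have e1 : ∀ i, pd i (cutoff c r) = fun y => r⁻¹ * pd i (fun x => bump0 x) (r⁻¹ • (y - c)) := by
    intro i; ext y; exact pd_scale hs c r i y
  constructor
  · intro i
    rw [e1, abs_mul, abs_of_pos (inv_pos.2 hr), inv_mul_eq_div]
    gcongr; linarith [hC1 i (r⁻¹ • (x - c))]
  · intro i j
    rw [e1, pd_const_mul]
    · rw [pd_scale (hs.pd j), ← mul_assoc, abs_mul, abs_of_pos (by positivity)]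
      rw [show (C1 + C2 + 1) / r ^ 2 = r⁻¹ * r⁻¹ * (C1 + C2 + 1) by field_simp]
      gcongr; linarith [hC2 i j (r⁻¹ • (x - c))]
    · exact ((hs.pd j).diff _).comp x (by fun_prop)

lemma lintegral_mul_sq_le {α : Type*} [MeasurableSpace α] {μ : Measure α} {f g : α → ℝ≥0∞}
    (hf : AEMeasurable f μ) (hg : AEMeasurable g μ) :
    (∫⁻ x, f x * g x ∂μ) ^ 2 ≤ (∫⁻ x, f x ^ 2 ∂μ) * ∫⁻ x, g x ^ 2 ∂μ := by
  have h := ENNReal.lintegral_mul_le_Lp_mul_Lq μ Real.HolderConjugate.two_two hf hg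
  have h2 := pow_le_pow_left' h 2
  refine h2.trans (le_of_eq ?_)
  rw [mul_pow, ← ENNReal.rpow_natCast, ← ENNReal.rpow_natCast, ← ENNReal.rpow_mul,
    ← ENNReal.rpow_mul]
  norm_num

/-- Weighted Cauchy–Schwarz inequality. -/
lemma lintegral_weight_sq_le {α : Type*} [MeasurableSpace α] {μ : Measure α} {ρ g : α → ℝ≥0∞}
    (hρ : AEMeasurable ρ μ) (hg : AEMeasurable g μ) :
    (∫⁻ x, ρ x * g x ∂μ) ^ 2 ≤ (∫⁻ x, ρ x ∂μ) * ∫⁻ x, ρ x * g x ^ 2 ∂μ := by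
  have e : ∀ x, ρ x = ρ x ^ (1 / 2 : ℝ) * ρ x ^ (1 / 2 : ℝ) := fun x => by
    rw [← ENNReal.rpow_add_of_nonneg _ _ (by norm_num) (by norm_num)]; norm_num
  have e2 : ∀ x, (ρ x ^ (1 / 2 : ℝ)) ^ 2 = ρ x := fun x => by rw [sq, ← e]
  have h := lintegral_mul_sq_le (μ := μ) (hρ.pow_const (1 / 2 : ℝ)) ((hρ.pow_const (1 / 2 : ℝ)).mul hg)
  simp only [Pi.mul_apply, mul_pow] at h
  simp only [e2, ← mul_assoc, ← e] at h
  exact h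

/-- Young's inequality `‖ρ * f‖₂ ≤ ‖ρ‖₁ ‖f‖₂`. -/
lemma young_l2 {ρ f : E3 → ℝ} (hρ : Measurable ρ) (hf : Measurable f) :
    ∫⁻ x, (∫⁻ y, ‖ρ (x - y)‖ₑ * ‖f y‖ₑ) ^ 2 ≤ (∫⁻ y, ‖ρ y‖ₑ) ^ 2 * ∫⁻ y, ‖f y‖ₑ ^ 2 := by
  have e1 : ∀ x, ∫⁻ y, ‖ρ (x - y)‖ₑ = ∫⁻ y, ‖ρ y‖ₑ := fun x =>
    lintegral_sub_left_eq_self (fun y => ‖ρ y‖ₑ) x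
  calc ∫⁻ x, (∫⁻ y, ‖ρ (x - y)‖ₑ * ‖f y‖ₑ) ^ 2
      ≤ ∫⁻ x, (∫⁻ y, ‖ρ y‖ₑ) * ∫⁻ y, ‖ρ (x - y)‖ₑ * ‖f y‖ₑ ^ 2 := by
        refine lintegral_mono fun x => ?_
        have := lintegral_weight_sq_le (μ := (volume : Measure E3)) (ρ := fun y => ‖ρ (x - y)‖ₑ)
          (g := fun y => ‖f y‖ₑ) (by fun_prop) (by fun_prop)
        rwa [e1] at this
    _ = (∫⁻ y, ‖ρ y‖ₑ) * ∫⁻ y, ∫⁻ x, ‖ρ (x - y)‖ₑ * ‖f y‖ₑ ^ 2 := by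
        rw [lintegral_const_mul _ (by
          have hm : Measurable (fun p : E3 × E3 => ‖ρ (p.1 - p.2)‖ₑ * ‖f p.2‖ₑ ^ 2) := by fun_prop
          exact hm.lintegral_prod_right')]
        rw [lintegral_lintegral_swap]
        fun_prop
    _ = _ := by
        have : ∀ y, ∫⁻ x, ‖ρ (x - y)‖ₑ * ‖f y‖ₑ ^ 2 = (∫⁻ y, ‖ρ y‖ₑ) * ‖f y‖ₑ ^ 2 := by
          intro y
          rw [lintegral_mul_const _ (by fun_prop),
            lintegral_sub_right_eq_self (fun x => ‖ρ x‖ₑ) y]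
        simp_rw [this]
        rw [lintegral_const_mul _ (by fun_prop), sq, mul_assoc]

/-! ### Convolution and the Gagliardo–Nirenberg inequality -/

/-- The convolution `(K * w)(x) = ∫ K(x-y) w(y) dy`. -/
def conv (K w : E3 → ℝ) (x : E3) : ℝ := ∫ y, K (x - y) * w y

lemma conv_eq (K w : E3 → ℝ) :
    conv K w = MeasureTheory.convolution K w (ContinuousLinearMap.lsmul ℝ ℝ) volume := by
  ext x
  rw [convolution_eq_swap]
  simp [conv]

lemma conv_smooth {K w : E3 → ℝ} (hK : Smooth K) (hc : HasCompactSupport K)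
    (hw : LocallyIntegrable w) : Smooth (conv K w) := by
  rw [conv_eq]
  exact hc.contDiff_convolution_left _ hK hw

lemma conv_compact {K w : E3 → ℝ} (hc : HasCompactSupport K) (hw : HasCompactSupport w) :
    HasCompactSupport (conv K w) := by
  rw [conv_eq]; exact hc.convolution _ hw

lemma pd_conv {K w : E3 → ℝ} (hK : Smooth K) (hc : HasCompactSupport K)
    (hw : LocallyIntegrable w) (i : Fin 3) (x : E3) :
    pd i (conv K w) x = conv (pd i K) w x := by
  have hK1 : ContDiff ℝ 1 K := ContDiff.of_le hK (by exact_mod_cast le_top)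
  have h := hc.hasFDerivAt_convolution_left (ContinuousLinearMap.lsmul ℝ ℝ) hK1 hw x
  rw [← conv_eq] at h
  rw [pd, h.fderiv]
  have hce := (hc.fderiv ℝ).convolutionExists_left
    ((ContinuousLinearMap.lsmul ℝ ℝ).precompL E3) (hK1.continuous_fderiv one_ne_zero) hw x
  have hi := (convolutionExistsAt_iff_integrable_swap.1 hce)
  rw [convolution_eq_swap, ContinuousLinearMap.integral_apply hi]
  rfl

lemma norm_fderiv_le (f : E3 → ℝ) (x : E3) : ‖fderiv ℝ f x‖ ≤ ∑ i, |pd i f x| := by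
  refine ContinuousLinearMap.opNorm_le_bound _ (Finset.sum_nonneg fun i _ => abs_nonneg _) ?_
  intro v
  have hv : v = ∑ i, v i • (EuclideanSpace.single i (1 : ℝ) : E3) := by
    ext j; simp [Finset.sum_apply, Fin.sum_univ_three]; fin_cases j <;> simp
  conv_lhs => rw [hv, map_sum]
  refine (norm_sum_le _ _).trans ?_
  rw [Finset.sum_mul]
  refine Finset.sum_le_sum fun i _ => ?_
  rw [map_smul, norm_smul, mul_comm]
  have : ‖v i‖ ≤ ‖v‖ := PiLp.norm_apply_le v i
  exact mul_le_mul_of_nonneg_left this (abs_nonneg _)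

lemma fderiv_sq_le (f : E3 → ℝ) (x : E3) : ‖fderiv ℝ f x‖ₑ ^ 2 ≤ 3 * ∑ i, ‖pd i f x‖ₑ ^ 2 := by
  have h := norm_fderiv_le f x
  have h2 : ‖fderiv ℝ f x‖ ^ 2 ≤ 3 * ∑ i, |pd i f x| ^ 2 := by
    calc _ ≤ (∑ i, |pd i f x|) ^ 2 := by gcongr
      _ ≤ _ := by
        have := sq_sum_le_card_mul_sum_sq (s := Finset.univ) (f := fun i => |pd i f x|)
        simpa using this
  have h3 := ENNReal.ofReal_le_ofReal h2
  rw [ENNReal.ofReal_mul (by norm_num), ENNReal.ofReal_sum_of_nonneg (fun i _ => by positivity),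
    ENNReal.ofReal_pow (norm_nonneg _)] at h3
  simp only [ENNReal.ofReal_pow (abs_nonneg _)] at h3
  simp only [ofReal_norm, ← Real.norm_eq_abs] at h3
  simpa using h3

/-- Gagliardo–Nirenberg: `‖u‖₄⁴ ≤ ‖u‖₂ ‖u‖₆³` combined with Sobolev's inequality. -/
lemma gn_smooth : ∃ C : ℝ≥0, ∀ u : E3 → ℝ, Smooth u → HasCompactSupport u →
    (∫⁻ x, ‖u x‖ₑ ^ 4) ^ 2 ≤ C * (∫⁻ x, ‖u x‖ₑ ^ 2) * (∑ i, ∫⁻ x, ‖pd i u x‖ₑ ^ 2) ^ 3 := by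
  set S := eLpNormLESNormFDerivOfEqInnerConst (volume : Measure E3) ((2 : ℝ≥0) : ℝ) with hS
  refine ⟨S ^ 6 * 3 ^ 3, fun u hu hc => ?_⟩
  have hfr : Module.finrank ℝ E3 = 3 := by simp
  have h := eLpNorm_le_eLpNorm_fderiv_of_eq_inner (volume : Measure E3) (u := u)
    (ContDiff.of_le hu (by exact_mod_cast le_top)) hc (p := 2) (p' := 6) (by norm_num)
    (by rw [hfr]; norm_num) (by rw [hfr]; norm_num)
  have h6 := eLpNorm_nnreal_pow_eq_lintegral (μ := (volume : Measure E3)) (f := u)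
    (p := 6) (by norm_num)
  have h2 := eLpNorm_nnreal_pow_eq_lintegral (μ := (volume : Measure E3)) (f := fderiv ℝ u)
    (p := 2) (by norm_num)
  have c6 : ((6 : ℝ≥0) : ℝ) = ((6 : ℕ) : ℝ) := by norm_num
  have c2 : ((2 : ℝ≥0) : ℝ) = ((2 : ℕ) : ℝ) := by norm_num
  simp only [c6, c2, ENNReal.rpow_natCast] at h6 h2
  have hsix : ∫⁻ x, ‖u x‖ₑ ^ 6 ≤ (S : ℝ≥0∞) ^ 6 * (∫⁻ x, ‖fderiv ℝ u x‖ₑ ^ 2) ^ 3 := by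
    rw [← h6, ← h2, ← pow_mul]
    have := pow_le_pow_left' h 6
    rw [mul_pow] at this
    exact this
  have hg : ∫⁻ x, ‖fderiv ℝ u x‖ₑ ^ 2 ≤ 3 * ∑ i, ∫⁻ x, ‖pd i u x‖ₑ ^ 2 := by
    rw [← lintegral_finsetSum, ← lintegral_const_mul]
    · exact lintegral_mono fun x => fderiv_sq_le u x
    · refine Finset.measurable_sum _ fun i _ => ?_
      exact ((hu.pd i).cont.measurable.enorm).pow_const 2
    · exact fun i _ => ((hu.pd i).cont.measurable.enorm).pow_const 2
  have hm : Measurable fun x => ‖u x‖ₑ := hu.cont.measurable.enorm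
  have hcs := lintegral_mul_sq_le (μ := (volume : Measure E3)) (f := fun x => ‖u x‖ₑ)
    (g := fun x => ‖u x‖ₑ ^ 3) hm.aemeasurable (hm.pow_const 3).aemeasurable
  calc (∫⁻ x, ‖u x‖ₑ ^ 4) ^ 2 = (∫⁻ x, ‖u x‖ₑ * ‖u x‖ₑ ^ 3) ^ 2 := by
        congr 2; ext x; ring
    _ ≤ _ := hcs
    _ = (∫⁻ x, ‖u x‖ₑ ^ 2) * ∫⁻ x, ‖u x‖ₑ ^ 6 := by
        congr 2; ext x; ring
    _ ≤ (∫⁻ x, ‖u x‖ₑ ^ 2) * (S ^ 6 * (3 * ∑ i, ∫⁻ x, ‖pd i u x‖ₑ ^ 2) ^ 3) := by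
        gcongr
        exact hsix.trans (by gcongr)
    _ = _ := by push_cast; ring

/-! ### Mollification and the interior L⁴ bound -/

lemma integrable_mul_test {X : Type*} [TopologicalSpace X] [MeasurableSpace X] [BorelSpace X]
    {μ : Measure X} {f φ : X → ℝ} {s : Set X} (hf : IntegrableOn f s μ) (hφ : Continuous φ)
    (hc : HasCompactSupport φ) (hs : tsupport φ ⊆ s) : Integrable (fun x => f x * φ x) μ := by
  obtain ⟨C, hC⟩ := hc.exists_bound_of_continuous hφ
  have h : IntegrableOn (fun x => f x * φ x) s μ :=
    hf.mul_bdd hφ.aestronglyMeasurable (Eventually.of_forall hC)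
  refine (integrableOn_iff_integrable_of_support_subset ?_).1 h
  intro x hx
  apply hs
  apply subset_tsupport
  intro h0
  exact hx (by simp [h0])

lemma integrableOn_of_sq {X : Type*} [MeasurableSpace X] {μ : Measure X} {f : X → ℝ} {s : Set X}
    (hf : AEStronglyMeasurable f (μ.restrict s)) (hs : μ s ≠ ⊤)
    (h : ∫⁻ x in s, ‖f x‖ₑ ^ 2 ∂μ ≠ ⊤) : IntegrableOn f s μ := by
  have : IsFiniteMeasure (μ.restrict s) := ⟨by simpa using hs.lt_top⟩
  have : MemLp f 2 (μ.restrict s) := by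
    refine ⟨hf, ?_⟩
    rw [eLpNorm_lt_top_iff_lintegral_rpow_enorm_lt_top (by norm_num) (by norm_num)]
    simpa using h.lt_top
  exact this.integrable (by norm_num)

lemma conv_enorm_le (ρ w : E3 → ℝ) (x : E3) :
    ‖conv ρ w x‖ₑ ≤ ∫⁻ y, ‖ρ (x - y)‖ₑ * ‖w y‖ₑ := by
  refine (enorm_integral_le_lintegral_enorm _).trans (le_of_eq ?_)
  simp [enorm_mul]

lemma conv_l2 {ρ w : E3 → ℝ} (hρ : Measurable ρ) (hw : Measurable w)  :
    ∫⁻ x, ‖conv ρ w x‖ₑ ^ 2 ≤ (∫⁻ y, ‖ρ y‖ₑ) ^ 2 * ∫⁻ y, ‖w y‖ₑ ^ 2 :=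
  (lintegral_mono fun x => pow_le_pow_left' (conv_enorm_le ρ w x) 2).trans (young_l2 hρ hw)

/-- The standard mollifier supported in `B(0, 1/(n+1))`. -/
def moll (n : ℕ) : ContDiffBump (0 : E3) :=
  ⟨1 / (2 * ((n : ℝ) + 1)), 1 / ((n : ℝ) + 1), by positivity, by
    have : (0 : ℝ) < (n : ℝ) + 1 := by positivity
    rw [div_lt_div_iff₀ (by positivity) this]; linarith⟩

lemma moll_tendsto : Tendsto (fun n => (moll n).rOut) atTop (𝓝 0) :=
  tendsto_one_div_add_atTop_nhds_zero_nat

lemma moll_ratio (n : ℕ) : (moll n).rOut ≤ 2 * (moll n).rIn := by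
  simp only [moll]
  have : (0 : ℝ) < (n : ℝ) + 1 := by positivity
  apply le_of_eq
  field_simp

lemma moll_l1 (n : ℕ) : ∫⁻ y, ‖(moll n).normed volume y‖ₑ = 1 := by
  have h := (moll n).integral_normed (μ := (volume : Measure E3))
  have hi : Integrable ((moll n).normed (volume : Measure E3)) :=
    (moll n).continuous_normed.integrable_of_hasCompactSupport (moll n).hasCompactSupport_normed
  have h2 := ofReal_integral_norm_eq_lintegral_enorm hi
  rw [← h2]
  have : ∀ x, ‖(moll n).normed (volume : Measure E3) x‖ = (moll n).normed volume x := fun x =>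
    Real.norm_of_nonneg ((moll n).nonneg_normed x)
  simp_rw [this]
  rw [h]; simp

/-- The Gagliardo–Nirenberg inequality for weakly differentiable compactly supported functions;
the weak gradient `G` enters through its mollifications. -/
lemma gn_weak : ∃ C : ℝ≥0, ∀ (w : E3 → ℝ) (G : Fin 3 → E3 → ℝ), Measurable w →
    (∀ j, Measurable (G j)) → Integrable w → HasCompactSupport w →
    (∀ ρ : E3 → ℝ, Smooth ρ → HasCompactSupport ρ → ∀ j x, conv (pd j ρ) w x = conv ρ (G j) x) →
    (∫⁻ x, ‖w x‖ₑ ^ 4) ^ 2 ≤ C * (∫⁻ x, ‖w x‖ₑ ^ 2) * (∑ i, ∫⁻ x, ‖G i x‖ₑ ^ 2) ^ 3 := by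
  obtain ⟨C, hC⟩ := gn_smooth
  refine ⟨C, fun w G hw hG hi hc hconv => ?_⟩
  set ρ : ℕ → E3 → ℝ := fun n => (moll n).normed volume with hρ
  have hρs : ∀ n, Smooth (ρ n) := fun n => (moll n).contDiff_normed
  have hρc : ∀ n, HasCompactSupport (ρ n) := fun n => (moll n).hasCompactSupport_normed
  have hu : ∀ n, Smooth (conv (ρ n) w) := fun n => conv_smooth (hρs n) (hρc n) hi.locallyIntegrable
  have hb : ∀ n, (∫⁻ x, ‖conv (ρ n) w x‖ₑ ^ 4) ^ 2
      ≤ C * (∫⁻ x, ‖w x‖ₑ ^ 2) * (∑ i, ∫⁻ x, ‖G i x‖ₑ ^ 2) ^ 3 := by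
    intro n
    refine (hC _ (hu n) (conv_compact (hρc n) hc)).trans ?_
    have h1 : ∫⁻ x, ‖conv (ρ n) w x‖ₑ ^ 2 ≤ ∫⁻ x, ‖w x‖ₑ ^ 2 := by
      have := conv_l2 (hρs n).cont.measurable hw
      rwa [moll_l1, one_pow, one_mul] at this
    have h2 : ∀ i, ∫⁻ x, ‖pd i (conv (ρ n) w) x‖ₑ ^ 2 ≤ ∫⁻ x, ‖G i x‖ₑ ^ 2 := by
      intro i
      have := conv_l2 (hρs n).cont.measurable (hG i)
      rw [moll_l1, one_pow, one_mul] at this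
      refine le_trans (le_of_eq ?_) this
      congr 1; ext x
      rw [pd_conv (hρs n) (hρc n) hi.locallyIntegrable, hconv _ (hρs n) (hρc n)]
    exact mul_le_mul' (mul_le_mul' le_rfl h1)
      (pow_le_pow_left' (Finset.sum_le_sum fun i _ => h2 i) 3)
  have hae := ContDiffBump.ae_convolution_tendsto_right_of_locallyIntegrable (K := 2)
    (φ := moll) (l := atTop) (μ := (volume : Measure E3)) moll_tendsto
    (Eventually.of_forall moll_ratio) hi.locallyIntegrable
  have hF : ∫⁻ x, ‖w x‖ₑ ^ 4 ≤ liminf (fun n => ∫⁻ x, ‖conv (ρ n) w x‖ₑ ^ 4) atTop := by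
    refine le_trans (le_of_eq ?_) (lintegral_liminf_le fun n =>
      ((hu n).cont.measurable.enorm).pow_const 4)
    refine lintegral_congr_ae ?_
    filter_upwards [hae] with x hx
    symm
    apply Tendsto.liminf_eq
    have hx' : Tendsto (fun n => conv (ρ n) w x) atTop (𝓝 (w x)) := by
      simpa only [hρ, conv_eq] using hx
    exact ((ENNReal.continuous_pow 4).tendsto _).comp ((continuous_enorm.tendsto _).comp hx')
  set B := (C : ℝ≥0∞) * (∫⁻ x, ‖w x‖ₑ ^ 2) * (∑ i, ∫⁻ x, ‖G i x‖ₑ ^ 2) ^ 3 with hB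
  have hb' : ∀ n, ∫⁻ x, ‖conv (ρ n) w x‖ₑ ^ 4 ≤ B ^ (1 / 2 : ℝ) := by
    intro n
    have := ENNReal.rpow_le_rpow (hb n) (by norm_num : (0 : ℝ) ≤ 1 / 2)
    rwa [← ENNReal.rpow_natCast, ← ENNReal.rpow_mul, show ((2 : ℕ) : ℝ) * (1 / 2) = 1 by norm_num,
      ENNReal.rpow_one] at this
  have hlim : ∫⁻ x, ‖w x‖ₑ ^ 4 ≤ B ^ (1 / 2 : ℝ) :=
    hF.trans (liminf_le_of_frequently_le' (Frequently.of_forall hb'))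
  calc _ ≤ (B ^ (1 / 2 : ℝ)) ^ 2 := by gcongr
    _ = B := by
      rw [← ENNReal.rpow_natCast, ← ENNReal.rpow_mul]; norm_num

/-- Local Sobolev (Ladyzhenskaya type) estimate on balls. -/
lemma ball_l4 : ∃ C : ℝ≥0, ∀ (c : E3) (r : ℝ), 0 < r → ∀ (f : E3 → ℝ) (g : Fin 3 → E3 → ℝ),
    Measurable f → (∀ j, Measurable (g j)) →
    (∀ ψ : E3 → ℝ, Smooth ψ → HasCompactSupport ψ → tsupport ψ ⊆ ball c r → ∀ j,
      ∫ x, f x * pd j ψ x = - ∫ x, g j x * ψ x) →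
    ∫⁻ x in ball c (r / 2), ‖f x‖ₑ ^ 4 ≤ C * ENNReal.ofReal r *
      ((∑ j, ∫⁻ x in ball c r, ‖g j x‖ₑ ^ 2)
        + ENNReal.ofReal (1 / r ^ 2) * ∫⁻ x in ball c r, ‖f x‖ₑ ^ 2) ^ 2 := by
  obtain ⟨C, hC⟩ := gn_weak
  obtain ⟨D, hD0, hD⟩ := cutoff_bounds
  set E : ℝ≥0 := 6 * (1 + D.toNNReal ^ 2) with hE
  refine ⟨1 + C * E ^ 3, fun c r hr f g hf hg hweak => ?_⟩
  set X := (∑ j, ∫⁻ x in ball c r, ‖g j x‖ₑ ^ 2)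
        + ENNReal.ofReal (1 / r ^ 2) * ∫⁻ x in ball c r, ‖f x‖ₑ ^ 2 with hX
  have hrn : ENNReal.ofReal r ≠ 0 := by simpa using hr
  have hr2 : ENNReal.ofReal r ^ 2 * ENNReal.ofReal (1 / r ^ 2) = 1 := by
    rw [← ENNReal.ofReal_pow hr.le, ← ENNReal.ofReal_mul (by positivity)]
    rw [mul_one_div_cancel (by positivity)]; simp
  -- if the right-hand side is infinite there is nothing to prove
  by_cases hXt : X = ⊤
  · rw [hXt]
    have : ((1 + C * E ^ 3 : ℝ≥0) : ℝ≥0∞) * ENNReal.ofReal r * ⊤ ^ 2 = ⊤ := by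
      rw [ENNReal.top_pow (by norm_num), ENNReal.mul_top]
      refine mul_ne_zero ?_ hrn
      exact_mod_cast (by positivity : (1 + C * E ^ 3 : ℝ≥0) ≠ 0)
    rw [this]; exact le_top
  have hfX : ENNReal.ofReal (1 / r ^ 2) * ∫⁻ x in ball c r, ‖f x‖ₑ ^ 2 ≤ X := by
    rw [hX]; exact le_add_self
  have hfB : ∫⁻ x in ball c r, ‖f x‖ₑ ^ 2 ≤ ENNReal.ofReal r ^ 2 * X := by
    calc _ = ENNReal.ofReal r ^ 2 * (ENNReal.ofReal (1 / r ^ 2) * ∫⁻ x in ball c r, ‖f x‖ₑ ^ 2) := by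
          rw [← mul_assoc, hr2, one_mul]
      _ ≤ _ := by gcongr
  have hgX : ∀ j, ∫⁻ x in ball c r, ‖g j x‖ₑ ^ 2 ≤ X := fun j =>
    (Finset.single_le_sum (f := fun j => ∫⁻ x in ball c r, ‖g j x‖ₑ ^ 2)
      (fun _ _ => zero_le) (Finset.mem_univ j)).trans le_self_add
  have hfi : IntegrableOn f (ball c r) := integrableOn_of_sq hf.aestronglyMeasurable
    measure_ball_lt_top.ne (ne_top_of_le_ne_top (ENNReal.mul_ne_top (by simp) hXt) hfB)
  have hgi : ∀ j, IntegrableOn (g j) (ball c r) := fun j =>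
    integrableOn_of_sq (hg j).aestronglyMeasurable
      measure_ball_lt_top.ne (ne_top_of_le_ne_top hXt (hgX j))
  set χ := cutoff c r with hχ
  have hχs : Smooth χ := cutoff_smooth c r
  have hχc : HasCompactSupport χ := compact_cutoff hr
  have hχt : tsupport χ ⊆ ball c r := tsupport_cutoff' hr
  have hχ0 : ∀ x, x ∉ ball c r → χ x = 0 := fun x hx =>
    image_eq_zero_of_notMem_tsupport fun h => hx (hχt h)
  have hdχ0 : ∀ j x, x ∉ ball c r → pd j χ x = 0 := fun j x hx =>
    pd_eq_zero (fun h => hx (hχt h)) j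
  set w : E3 → ℝ := fun x => f x * χ x with hw
  set G : Fin 3 → E3 → ℝ := fun j x => g j x * χ x + f x * pd j χ x with hG
  have hwi : Integrable w := integrable_mul_test hfi hχs.cont hχc hχt
  have hwm : Measurable w := hf.mul hχs.cont.measurable
  have hGm : ∀ j, Measurable (G j) := fun j =>
    ((hg j).mul hχs.cont.measurable).add (hf.mul (hχs.pd j).cont.measurable)
  have key := hC w G hwm hGm hwi hχc.mul_left ?_
  · have e1 : ∫⁻ x, ‖w x‖ₑ ^ 2 ≤ ENNReal.ofReal r ^ 2 * X := by
      refine le_trans ?_ hfB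
      rw [← lintegral_indicator measurableSet_ball]
      refine lintegral_mono fun x => ?_
      by_cases hx : x ∈ ball c r
      · rw [indicator_of_mem hx]
        simp only [hw, enorm_mul]
        have : ‖χ x‖ₑ ≤ 1 := by
          rw [← ofReal_norm, Real.norm_of_nonneg (cutoff_nonneg c r x)]
          exact ENNReal.ofReal_le_one.2 (cutoff_le_one c r x)
        exact pow_le_pow_left' (mul_le_of_le_one_right' this) 2
      · simp [hw, hχ0 x hx]
    have e2 : ∀ j, ∫⁻ x, ‖G j x‖ₑ ^ 2 ≤ 2 * (1 + D.toNNReal ^ 2 : ℝ≥0) * X := by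
      intro j
      calc ∫⁻ x, ‖G j x‖ₑ ^ 2 ≤ ∫⁻ x in ball c r, (2 * ‖g j x‖ₑ ^ 2
            + 2 * ENNReal.ofReal (D / r) ^ 2 * ‖f x‖ₑ ^ 2) := by
            rw [← lintegral_indicator measurableSet_ball]
            refine lintegral_mono fun x => ?_
            by_cases hx : x ∈ ball c r
            · rw [indicator_of_mem hx]
              have h1 : ‖χ x‖ ≤ 1 := by
                rw [Real.norm_of_nonneg (cutoff_nonneg c r x)]
                exact cutoff_le_one c r x
              have h2 : ‖pd j χ x‖ ≤ D / r := (hD c r hr x).1 j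
              have h3 : ‖G j x‖ ≤ ‖g j x‖ + D / r * ‖f x‖ := by
                refine (norm_add_le _ _).trans (add_le_add ?_ ?_)
                · rw [norm_mul]; exact mul_le_of_le_one_right (norm_nonneg _) h1
                · rw [norm_mul, mul_comm]; gcongr
              have h4 : ‖G j x‖ ^ 2 ≤ 2 * ‖g j x‖ ^ 2 + 2 * (D / r) ^ 2 * ‖f x‖ ^ 2 := by
                have := pow_le_pow_left₀ (norm_nonneg _) h3 2
                nlinarith [sq_nonneg (‖g j x‖ - D / r * ‖f x‖)]
              have h5 := ENNReal.ofReal_le_ofReal h4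
              rw [ENNReal.ofReal_add (by positivity) (by positivity),
                ENNReal.ofReal_mul (by norm_num), ENNReal.ofReal_mul (by positivity),
                ENNReal.ofReal_mul (by norm_num),
                ENNReal.ofReal_pow (norm_nonneg _), ENNReal.ofReal_pow (norm_nonneg _),
                ENNReal.ofReal_pow (norm_nonneg _), ENNReal.ofReal_pow (by positivity)] at h5
              simpa only [ofReal_norm, ENNReal.ofReal_ofNat] using h5
            · simp [hG, hχ0 x hx, hdχ0 j x hx]
        _ = 2 * (∫⁻ x in ball c r, ‖g j x‖ₑ ^ 2)
            + 2 * ENNReal.ofReal (D / r) ^ 2 * ∫⁻ x in ball c r, ‖f x‖ₑ ^ 2 := by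
            rw [lintegral_add_left (((hg j).enorm.pow_const 2).const_mul 2),
              lintegral_const_mul _ ((hg j).enorm.pow_const 2),
              lintegral_const_mul _ (hf.enorm.pow_const 2)]
        _ = 2 * (∫⁻ x in ball c r, ‖g j x‖ₑ ^ 2)
            + 2 * (ENNReal.ofReal D ^ 2 *
              (ENNReal.ofReal (1 / r ^ 2) * ∫⁻ x in ball c r, ‖f x‖ₑ ^ 2)) := by
            have : ENNReal.ofReal (D / r) ^ 2 = ENNReal.ofReal D ^ 2 * ENNReal.ofReal (1 / r ^ 2) := by
              rw [← ENNReal.ofReal_pow (by positivity), ← ENNReal.ofReal_pow hD0.le,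
                ← ENNReal.ofReal_mul (by positivity)]
              congr 1; field_simp
            rw [this]; ring
        _ ≤ 2 * X + 2 * (ENNReal.ofReal D ^ 2 * X) := by
            gcongr
            exact hgX j
        _ = _ := by
            push_cast
            rw [ENNReal.ofReal]; ring
    have e3 : ∑ j, ∫⁻ x, ‖G j x‖ₑ ^ 2 ≤ E * X := by
      calc _ ≤ ∑ _j : Fin 3, 2 * (1 + D.toNNReal ^ 2 : ℝ≥0) * X := Finset.sum_le_sum fun j _ => e2 j
        _ = _ := by simp [hE]; ring
    have e4 : (∫⁻ x in ball c (r / 2), ‖f x‖ₑ ^ 4) ≤ ∫⁻ x, ‖w x‖ₑ ^ 4 := by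
      rw [← lintegral_indicator measurableSet_ball]
      refine lintegral_mono fun x => ?_
      by_cases hx : x ∈ ball c (r / 2)
      · rw [indicator_of_mem hx]
        simp [hw, hχ, cutoff_one hr (mem_ball.1 hx).le]
      · simp [hx]
    refine e4.trans ?_
    set K : ℝ≥0 := 1 + C * E ^ 3 with hK
    have h6 : (∫⁻ x, ‖w x‖ₑ ^ 4) ^ 2 ≤ (K * ENNReal.ofReal r * X ^ 2) ^ 2 := by
      calc _ ≤ _ := key
        _ ≤ C * (ENNReal.ofReal r ^ 2 * X) * (E * X) ^ 3 := by gcongr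
        _ = ((C * E ^ 3 : ℝ≥0) : ℝ≥0∞) * (ENNReal.ofReal r * X ^ 2) ^ 2 := by push_cast; ring
        _ ≤ ((K ^ 2 : ℝ≥0) : ℝ≥0∞) * (ENNReal.ofReal r * X ^ 2) ^ 2 := by
          gcongr
          have h1 : 1 ≤ K := le_self_add
          calc C * E ^ 3 ≤ K := le_add_self
            _ ≤ K ^ 2 := by rw [sq]; exact le_mul_of_one_le_left' h1
        _ = _ := by push_cast; ring
    by_contra hlt
    exact absurd h6 (not_le.2 (ENNReal.pow_lt_pow_left two_ne_zero (not_le.1 hlt)))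
  · intro ρ hρ hρc j x
    have hρx : Smooth (fun y => ρ (x - y)) := by
      have : ContDiff ℝ (⊤ : ℕ∞) (fun y : E3 => x - y) := by fun_prop
      exact ContDiff.comp (g := ρ) hρ this
    have hdρ : ∀ y, pd j (fun y => ρ (x - y)) y = - pd j ρ (x - y) := by
      intro y
      have h1 : HasFDerivAt (fun y : E3 => x - y) (-(ContinuousLinearMap.id ℝ E3)) y :=
        (hasFDerivAt_id y).const_sub x
      have h2 := (hρ.diff (x - y)).hasFDerivAt.comp y h1
      have h3 := h2.fderiv
      rw [pd, show (fun y => ρ (x - y)) = ρ ∘ fun y => x - y from rfl, h3]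
      simp [pd]
    have h := hweak (fun y => ρ (x - y) * χ y) (hρx.mul hχs) hχc.mul_left
      ((tsupport_mul_subset_right).trans hχt) j
    have i1 : Integrable fun y => f y * (ρ (x - y) * pd j χ y) :=
      integrable_mul_test hfi (hρx.mul (hχs.pd j)).cont (compact_pd hχc j).mul_left
        (tsupport_mul_subset_right.trans ((tsupport_pd j χ).trans hχt))
    have i2 : Integrable fun y => f y * (pd j (fun y => ρ (x - y)) y * χ y) :=
      integrable_mul_test hfi ((hρx.pd j).mul hχs).cont hχc.mul_left
        (tsupport_mul_subset_right.trans hχt)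
    have i3 : Integrable fun y => g j y * (ρ (x - y) * χ y) :=
      integrable_mul_test (hgi j) (hρx.mul hχs).cont hχc.mul_left
        (tsupport_mul_subset_right.trans hχt)
    have h' : (∫ y, f y * (pd j (fun y => ρ (x - y)) y * χ y)) + ∫ y, f y * (ρ (x - y) * pd j χ y)
        = - ∫ y, g j y * (ρ (x - y) * χ y) := by
      rw [← h, ← integral_add i2 i1]
      congr 1; ext y
      rw [pd_mul (hρx.diff y) (hχs.diff y)]; ring
    simp only [conv, hw, hG]
    have t1 : ∫ y, pd j ρ (x - y) * (f y * χ y) =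
        - ∫ y, f y * (pd j (fun y => ρ (x - y)) y * χ y) := by
      rw [← integral_neg]; congr 1; ext y; rw [hdρ]; ring
    have t2 : ∫ y, ρ (x - y) * (g j y * χ y + f y * pd j χ y) =
        (∫ y, g j y * (ρ (x - y) * χ y)) + ∫ y, f y * (ρ (x - y) * pd j χ y) := by
      rw [← integral_add i3 i1]; congr 1; ext y; ring
    rw [t1, t2]; linarith

/-! ### The regularised Newtonian kernel -/

/-- The regularised Newtonian kernel `(|z|² + κ²)^{-1/2}`. -/
def newt (κ : ℝ) (z : E3) : ℝ := (Real.sqrt (‖z‖ ^ 2 + κ ^ 2))⁻¹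

/-- The density `-Δ newt κ = 3κ² (|z|² + κ²)^{-5/2}`. -/
def newtRho (κ : ℝ) (z : E3) : ℝ := 3 * κ ^ 2 * newt κ z ^ 5

lemma coord_smooth (a : Fin 3) : Smooth (fun z : E3 => z a) := by
  unfold Smooth; fun_prop

lemma pd_coord (a b : Fin 3) (z : E3) : pd b (fun z : E3 => z a) z = if a = b then 1 else 0 := by
  have : HasFDerivAt (fun z : E3 => z a) (EuclideanSpace.proj a : E3 →L[ℝ] ℝ) z :=
    (EuclideanSpace.proj a : E3 →L[ℝ] ℝ).hasFDerivAt
  rw [pd, this.fderiv]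
  simp

lemma newt_smooth {κ : ℝ} (hκ : 0 < κ) : Smooth (newt κ) := by
  have h : ContDiff ℝ (⊤ : ℕ∞) (fun z : E3 => ‖z‖ ^ 2 + κ ^ 2) := (contDiff_norm_sq ℝ).add contDiff_const
  have hp : ∀ z : E3, ‖z‖ ^ 2 + κ ^ 2 ≠ 0 := fun z => by positivity
  exact (h.sqrt hp).inv fun z => by
    have : 0 < ‖z‖ ^ 2 + κ ^ 2 := by positivity
    exact (Real.sqrt_pos.2 this).ne'

lemma newt_pos {κ : ℝ} (hκ : 0 < κ) (z : E3) : 0 < newt κ z := by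
  have : 0 < ‖z‖ ^ 2 + κ ^ 2 := by positivity
  exact inv_pos.2 (Real.sqrt_pos.2 this)

lemma newt_sq {κ : ℝ} (hκ : 0 < κ) (z : E3) : newt κ z ^ 2 * (‖z‖ ^ 2 + κ ^ 2) = 1 := by
  have h : 0 < ‖z‖ ^ 2 + κ ^ 2 := by positivity
  rw [newt, inv_pow, Real.sq_sqrt h.le, inv_mul_cancel₀ h.ne']

lemma pd_newt {κ : ℝ} (hκ : 0 < κ) (a : Fin 3) (z : E3) : pd a (newt κ) z = - z a * newt κ z ^ 3 := by
  have h1 : HasFDerivAt (fun z : E3 => ‖z‖ ^ 2 + κ ^ 2) (2 • (innerSL ℝ z)) z :=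
    (hasStrictFDerivAt_norm_sq z).hasFDerivAt.add_const _
  have h : 0 < ‖z‖ ^ 2 + κ ^ 2 := by positivity
  have h2 := h1.sqrt h.ne'
  have h3 := (hasDerivAt_inv (Real.sqrt_pos.2 h).ne').comp_hasFDerivAt z h2
  have h4 : pd a (newt κ) z = _ := congrArg (fun L : E3 →L[ℝ] ℝ => L (EuclideanSpace.single a 1)) h3.fderiv
  rw [h4]
  have : 0 < Real.sqrt (‖z‖ ^ 2 + κ ^ 2) := Real.sqrt_pos.2 h
  simp [newt, EuclideanSpace.inner_single_right]
  field_simp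

lemma newt_norm_le {κ : ℝ} (hκ : 0 < κ) (z : E3) : ‖z‖ * newt κ z ≤ 1 := by
  have h := newt_sq hκ z
  have h0 := newt_pos hκ z
  nlinarith [norm_nonneg z, mul_pos h0 hκ, mul_nonneg (norm_nonneg z) h0.le, sq_nonneg (newt κ z * κ)]

lemma newt_coord_le {κ : ℝ} (hκ : 0 < κ) (a : Fin 3) (z : E3) : |z a| * newt κ z ≤ 1 := by
  refine le_trans ?_ (newt_norm_le hκ z)
  exact mul_le_mul_of_nonneg_right (PiLp.norm_apply_le z a) (newt_pos hκ z).le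

lemma newt_le_inv {κ : ℝ} (hκ : 0 < κ) {z : E3} {d : ℝ} (hd : 0 < d) (hz : d ≤ ‖z‖) :
    newt κ z ≤ 1 / d := by
  rw [le_div_iff₀ hd]
  nlinarith [newt_norm_le hκ z, newt_pos hκ z]

lemma pd_pow {f : E3 → ℝ} (hf : Smooth f) (n : ℕ) (a : Fin 3) (x : E3) :
    pd a (fun y => f y ^ (n + 1)) x = (n + 1) * f x ^ n * pd a f x := by
  have := ((hf.diff x).hasFDerivAt.pow (n + 1)).fderiv
  rw [pd, this]
  simp [pd]

lemma Smooth.pow {f : E3 → ℝ} (hf : Smooth f) (n : ℕ) : Smooth (fun y => f y ^ n) := ContDiff.pow hf n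

lemma pd_neg' {f : E3 → ℝ} (a : Fin 3) (x : E3) : pd a (fun y => - f y) x = - pd a f x := by
  rw [pd, fderiv_fun_neg]; rfl

lemma pd2_newt {κ : ℝ} (hκ : 0 < κ) (a b : Fin 3) (z : E3) : pd b (pd a (newt κ)) z =
    - (if a = b then 1 else 0) * newt κ z ^ 3 + 3 * z a * z b * newt κ z ^ 5 := by
  have e : pd a (newt κ) = fun z => - (z a * newt κ z ^ 3) := by
    ext z; rw [pd_newt hκ]; ring
  have hs := newt_smooth hκ
  rw [e, pd_neg', pd_mul ((coord_smooth a).diff z) ((hs.pow 3).diff z), pd_coord,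
    pd_pow hs 2, pd_newt hκ]
  push_cast; ring

lemma pd3_newt {κ : ℝ} (hκ : 0 < κ) (a b c : Fin 3) (z : E3) : pd c (pd b (pd a (newt κ))) z =
    3 * ((if a = b then 1 else 0) * z c + (if a = c then 1 else 0) * z b
      + (if b = c then 1 else 0) * z a) * newt κ z ^ 5 - 15 * z a * z b * z c * newt κ z ^ 7 := by
  have e : pd b (pd a (newt κ)) = fun z => - (if a = b then 1 else 0) * newt κ z ^ 3 +
      3 * (z a * (z b * newt κ z ^ 5)) := by
    ext z; rw [pd2_newt hκ]; ring
  have hs := newt_smooth hκ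
  have hm := (coord_smooth b).mul (hs.pow 5)
  rw [e, pd_add, pd_const_mul ((hs.pow 3).diff z),
    pd_const_mul (((coord_smooth a).mul hm).diff z),
    pd_mul ((coord_smooth a).diff z) (hm.diff z),
    pd_mul ((coord_smooth b).diff z) ((hs.pow 5).diff z), pd_coord, pd_coord, pd_pow hs 2,
    pd_pow hs 4, pd_newt hκ]
  · push_cast; ring
  · exact ((hs.pow 3).diff z).const_mul _
  · exact (((coord_smooth a).mul hm).diff z).const_mul _

lemma lap_newt {κ : ℝ} (hκ : 0 < κ) (z : E3) : lapScalar (newt κ) z = - newtRho κ z := by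
  rw [lap_eq]
  have h := newt_sq hκ z
  have hn : ‖z‖ ^ 2 = z 0 ^ 2 + z 1 ^ 2 + z 2 ^ 2 := by
    rw [EuclideanSpace.norm_sq_eq, Fin.sum_univ_three]; simp
  simp only [pd2_newt hκ, Fin.sum_univ_three, newtRho]
  rw [hn] at h
  simp only [if_true]
  linear_combination (3 * newt κ z ^ 3) * h

lemma newt_bounds {κ : ℝ} (hκ : 0 < κ) {z : E3} {d : ℝ} (hd : 0 < d) (hz : d ≤ ‖z‖) (a b c : Fin 3) :
    |pd a (newt κ) z| ≤ 24 / d ^ 2 ∧ |pd b (pd a (newt κ)) z| ≤ 24 / d ^ 3 ∧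
    |pd c (pd b (pd a (newt κ))) z| ≤ 24 / d ^ 4 := by
  set s := newt κ z with hs
  have s0 : 0 < s := newt_pos hκ z
  have sd : s ≤ 1 / d := newt_le_inv hκ hd hz
  have hc : ∀ a, |z a * s| ≤ 1 := fun a => by
    rw [abs_mul, abs_of_pos s0]; exact newt_coord_le hκ a z
  have hpow : ∀ n, s ^ n ≤ 1 / d ^ n := fun n => by
    have := pow_le_pow_left₀ s0.le sd n
    rwa [div_pow, one_pow] at this
  have hite : ∀ a b : Fin 3, |(if a = b then (1 : ℝ) else 0)| ≤ 1 := fun a b => by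
    split_ifs <;> simp
  have m2 : ∀ {x y : ℝ}, |x| ≤ 1 → |y| ≤ 1 → |x * y| ≤ 1 := fun {x y} hx hy => by
    rw [abs_mul]; exact mul_le_one₀ hx (abs_nonneg _) hy
  have fin : ∀ (n : ℕ) (e : ℝ), |e| ≤ 24 → |e * s ^ n| ≤ 24 / d ^ n := fun n e he => by
    rw [abs_mul, abs_of_pos (pow_pos s0 n), div_eq_mul_one_div]
    exact mul_le_mul he (hpow n) (by positivity) (by norm_num)
  refine ⟨?_, ?_, ?_⟩
  · rw [pd_newt hκ, show - z a * newt κ z ^ 3 = -(z a * s) * s ^ 2 by rw [hs]; ring]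
    refine fin _ _ ?_
    rw [abs_neg]; linarith [hc a]
  · rw [pd2_newt hκ, show - (if a = b then (1:ℝ) else 0) * newt κ z ^ 3 + 3 * z a * z b * newt κ z ^ 5
      = (-(if a = b then (1:ℝ) else 0) + 3 * ((z a * s) * (z b * s))) * s ^ 3 by rw [← hs]; ring]
    refine fin _ _ ?_
    have h1 := abs_le.1 (hite a b)
    have h2 := abs_le.1 (m2 (hc a) (hc b))
    rw [abs_le]; constructor <;> linarith [h1.1, h1.2, h2.1, h2.2]
  · rw [pd3_newt hκ, show 3 * ((if a = b then 1 else 0) * z c + (if a = c then 1 else 0) * z b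
      + (if b = c then 1 else 0) * z a) * newt κ z ^ 5 - 15 * z a * z b * z c * newt κ z ^ 7 =
      (3 * ((if a = b then 1 else 0) * (z c * s) + (if a = c then 1 else 0) * (z b * s)
      + (if b = c then 1 else 0) * (z a * s)) - 15 * ((z a * s) * ((z b * s) * (z c * s)))) * s ^ 4 by
        rw [← hs]; ring]
    refine fin _ _ ?_
    have h1 := abs_le.1 (m2 (hite a b) (hc c))
    have h2 := abs_le.1 (m2 (hite a c) (hc b))
    have h3 := abs_le.1 (m2 (hite b c) (hc a))
    have h4 := abs_le.1 (m2 (hc a) (m2 (hc b) (hc c)))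
    rw [abs_le]; constructor <;> linarith [h1.1, h1.2, h2.1, h2.2, h3.1, h3.2, h4.1, h4.2]

/-- `newt κ` times a cutoff equal to `1` on `B(0,2L)` and supported in `B̄(0,3L)`. -/
def newtCut (κ L : ℝ) (z : E3) : ℝ := cutoff 0 (4 * L) z * newt κ z

lemma newtCut_smooth {κ : ℝ} (hκ : 0 < κ) (L : ℝ) : Smooth (newtCut κ L) :=
  (cutoff_smooth _ _).mul (newt_smooth hκ)

lemma newtCut_compact {κ L : ℝ} (hL : 0 < L) : HasCompactSupport (newtCut κ L) :=
  (compact_cutoff (by linarith : 0 < 4 * L)).mul_right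

lemma newtCut_eq {κ L : ℝ} (hL : 0 < L) {z : E3} (hz : ‖z‖ < 2 * L) :
    newtCut κ L =ᶠ[𝓝 z] newt κ := by
  filter_upwards [isOpen_ball.mem_nhds (by simpa using hz : z ∈ ball (0 : E3) (2 * L))] with y hy
  rw [newtCut, cutoff_one (by linarith), one_mul]
  have := mem_ball.1 hy
  linarith

lemma newtCut_bounds {κ L : ℝ} (hκ : 0 < κ) (hL : 0 < L) {z : E3} (hzL : ‖z‖ < 2 * L)
    {d : ℝ} (hd : 0 < d) (hz : d ≤ ‖z‖) (a b c : Fin 3) :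
    |pd a (newtCut κ L) z| ≤ 24 / d ^ 2 ∧ |pd b (pd a (newtCut κ L)) z| ≤ 24 / d ^ 3 ∧
    |pd c (pd b (pd a (newtCut κ L))) z| ≤ 24 / d ^ 4 := by
  have h := newtCut_eq (κ := κ) hL hzL
  rw [pd_congr h, pd_congr (pd_eventuallyEq h a),
    pd_congr (pd_eventuallyEq (pd_eventuallyEq h a) b)]
  exact newt_bounds hκ hd hz a b c

lemma lap_congr {f g : E3 → ℝ} {x : E3} (h : f =ᶠ[𝓝 x] g) : lapScalar f x = lapScalar g x := by
  rw [lap_eq, lap_eq]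
  exact Finset.sum_congr rfl fun i _ => pd_congr (pd_eventuallyEq h i) i

lemma lap_newtCut {κ L : ℝ} (hκ : 0 < κ) (hL : 0 < L) {z : E3} (hzL : ‖z‖ < 2 * L) :
    lapScalar (newtCut κ L) z = - newtRho κ z := by
  rw [lap_congr (newtCut_eq hL hzL), lap_newt hκ]

lemma newtRho_cont {κ : ℝ} (hκ : 0 < κ) : Continuous (newtRho κ) :=
  continuous_const.mul ((newt_smooth hκ).cont.pow 5)

lemma newtRho_nonneg {κ : ℝ} (hκ : 0 < κ) (z : E3) : 0 ≤ newtRho κ z := by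
  have := newt_pos hκ z
  unfold newtRho; positivity

/-- Scaling: `newtRho κ` is the `L¹`-normalised dilation of `newtRho 1`. -/
lemma newtRho_scale {κ : ℝ} (hκ : 0 < κ) (z : E3) :
    newtRho κ (κ • z) = κ⁻¹ ^ 3 * newtRho 1 z := by
  have : newt κ (κ • z) = κ⁻¹ * newt 1 z := by
    rw [newt, newt, norm_smul, Real.norm_of_nonneg hκ.le,
      show (κ * ‖z‖) ^ 2 + κ ^ 2 = κ ^ 2 * (‖z‖ ^ 2 + 1 ^ 2) by ring,
      Real.sqrt_mul (by positivity), Real.sqrt_sq hκ.le, mul_inv]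
  rw [newtRho, newtRho, this]
  field_simp

lemma newtRho_int : Integrable (newtRho 1) := by
  have h := integrable_rpow_neg_one_add_norm_sq (E := E3) (μ := volume) (r := 5) (by simp; norm_num)
  refine (h.const_mul 3).congr (Eventually.of_forall fun z => ?_)
  have hp : (0 : ℝ) < ‖z‖ ^ 2 + 1 := by positivity
  simp only [newtRho, newt, one_pow, mul_one]
  congr 1
  rw [add_comm, Real.sqrt_eq_rpow, ← Real.rpow_neg hp.le, ← Real.rpow_mul_natCast hp.le]
  norm_num

/-- The total mass of `newtRho κ`, independent of `κ`. -/
def newtMass : ℝ := ∫ z, newtRho 1 z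

lemma newtMass_pos : 0 < newtMass := by
  refine integral_pos_of_integrable_nonneg_nonzero (x := 0) (newtRho_cont one_pos) newtRho_int
    (fun z => newtRho_nonneg one_pos z) ?_
  have := newt_pos one_pos (0 : E3)
  unfold newtRho; positivity

lemma newtRho_integrable {κ : ℝ} (hκ : 0 < κ) : Integrable (newtRho κ) := by
  rw [← integrable_comp_smul_iff volume (newtRho κ) hκ.ne']
  simp_rw [newtRho_scale hκ]
  exact newtRho_int.const_mul _

lemma newtRho_integral {κ : ℝ} (hκ : 0 < κ) : ∫ z, newtRho κ z = newtMass := by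
  have h := Measure.integral_comp_smul (volume : Measure E3) (newtRho κ) κ
  simp_rw [newtRho_scale hκ] at h
  rw [integral_const_mul] at h
  have hfr : Module.finrank ℝ E3 = 3 := by simp
  rw [hfr, abs_of_pos (by positivity), smul_eq_mul, inv_pow] at h
  exact (mul_left_cancel₀ (by positivity) h).symm

lemma newtRho_l1 {κ : ℝ} (hκ : 0 < κ) : ∫⁻ z, ‖newtRho κ z‖ₑ = ENNReal.ofReal newtMass := by
  rw [← ofReal_integral_norm_eq_lintegral_enorm (newtRho_integrable hκ), ← newtRho_integral hκ]
  simp_rw [Real.norm_of_nonneg (newtRho_nonneg hκ _)]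

/-! ### Velocity slices and the density u·∇Γ -/

/-- The volume of the unit ball of `ℝ³`. -/
def ballVol : ℝ := (volume (ball (0 : E3) 1)).toReal

lemma ballVol_nonneg : 0 ≤ ballVol := ENNReal.toReal_nonneg

lemma vol_ball (c : E3) {r : ℝ} (hr : 0 < r) : volume.real (ball c r) = r ^ 3 * ballVol := by
  rw [measureReal_def, Measure.addHaar_ball_of_pos _ _ hr, ENNReal.toReal_mul,
    ENNReal.toReal_ofReal (by positivity)]
  simp [ballVol]

lemma vol_ball' (c : E3) {r : ℝ} (hr : 0 < r) : volume (ball c r) = ENNReal.ofReal (r ^ 3 * ballVol) := by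
  rw [← vol_ball c hr, measureReal_def, ENNReal.ofReal_toReal measure_ball_lt_top.ne]

lemma pd_reflect {T : E3 → ℝ} (hT : Smooth T) (x y : E3) (j : Fin 3) :
    pd j (fun y => T (x - y)) y = - pd j T (x - y) := by
  have h1 : HasFDerivAt (fun y : E3 => x - y) (-(ContinuousLinearMap.id ℝ E3)) y :=
    (hasFDerivAt_id y).const_sub x
  have h2 := (hT.diff (x - y)).hasFDerivAt.comp y h1
  have h3 := h2.fderiv
  rw [pd, show (fun y => T (x - y)) = T ∘ fun y => x - y from rfl, h3]
  simp [pd]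

lemma smooth_reflect {T : E3 → ℝ} (hT : Smooth T) (x : E3) : Smooth (fun y => T (x - y)) := by
  have : ContDiff ℝ (⊤ : ℕ∞) (fun y : E3 => x - y) := by fun_prop
  exact ContDiff.comp (g := T) hT this

lemma abs_coord_le (x : E3) (i : Fin 3) : |x i| ≤ ‖x‖ := PiLp.norm_apply_le x i

lemma abs_mul_coord_le (x : E3) (i j : Fin 3) : |x i * x j| ≤ ‖x‖ ^ 2 := by
  rw [abs_mul, sq]
  exact mul_le_mul (abs_coord_le x i) (abs_coord_le x j) (abs_nonneg _) (norm_nonneg _)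

/-- The slice data entering the pressure estimate: a square integrable weakly divergence free
field `u` on `B(c,L)`, of `L²` size `N² r³` on `B(c,r)`, and a test function `Γ` on `B(c,r)`. -/
structure Slice (u : E3 → E3) (Γ : E3 → ℝ) (c : E3) (r L N A : ℝ) : Prop where
  hr : 0 < r
  hrL : r ≤ L
  hN : 0 < N
  hA : 0 ≤ A
  meas : Measurable u
  int : IntegrableOn (fun x => ‖u x‖ ^ 2) (ball c L)
  bd : ∫ x in ball c r, ‖u x‖ ^ 2 ≤ N ^ 2 * r ^ 3
  smooth : Smooth Γ
  supp : tsupport Γ ⊆ ball c r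
  cpt : HasCompactSupport Γ
  g0 : ∀ x, |Γ x| ≤ A / r ^ 3
  g1 : ∀ i x, |pd i Γ x| ≤ A / r ^ 4
  div : ∀ ψ : E3 → ℝ, Smooth ψ → HasCompactSupport ψ → tsupport ψ ⊆ ball c L →
    ∫ x, ∑ i, u x i * pd i ψ x = 0

/-- The density `u·∇Γ`. -/
def dens (u : E3 → E3) (Γ : E3 → ℝ) (x : E3) : ℝ := ∑ i, u x i * pd i Γ x

namespace Slice
variable {u : E3 → E3} {Γ : E3 → ℝ} {c : E3} {r L N A : ℝ}

lemma meas_coord (h : Slice u Γ c r L N A) (i : Fin 3) : Measurable fun x => u x i :=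
  (EuclideanSpace.proj i : E3 →L[ℝ] ℝ).continuous.measurable.comp h.meas

lemma int_r (h : Slice u Γ c r L N A) : IntegrableOn (fun x => ‖u x‖ ^ 2) (ball c r) :=
  h.int.mono_set (ball_subset_ball h.hrL)

lemma int1 (h : Slice u Γ c r L N A) : IntegrableOn (fun x => ‖u x‖) (ball c L) := by
  have hf : IntegrableOn (fun x => 1 + ‖u x‖ ^ 2) (ball c L) :=
    (integrableOn_const (by exact measure_ball_lt_top.ne)).add h.int
  refine hf.mono' h.meas.norm.aestronglyMeasurable (Eventually.of_forall fun x => ?_)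
  rw [norm_norm]; nlinarith [sq_nonneg (‖u x‖ - 1)]

lemma int1c (h : Slice u Γ c r L N A) (i : Fin 3) : IntegrableOn (fun x => u x i) (ball c L) :=
  h.int1.mono' (h.meas_coord i).aestronglyMeasurable
    (Eventually.of_forall fun x => PiLp.norm_apply_le (u x) i)

lemma l1_bound (h : Slice u Γ c r L N A) :
    ∫ x in ball c r, ‖u x‖ ≤ (1 + ballVol) * N * r ^ 3 := by
  have h1 : ∫ x in ball c r, ‖u x‖ ≤ ∫ x in ball c r, (N + N⁻¹ * ‖u x‖ ^ 2) := by
    refine integral_mono (h.int1.mono_set (ball_subset_ball h.hrL))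
      ((integrableOn_const (by exact measure_ball_lt_top.ne)).add (h.int_r.const_mul _)) fun x => ?_
    have hN := h.hN
    have : 0 ≤ N⁻¹ * ((‖u x‖ - N) ^ 2 + ‖u x‖ * N) := by
      have := norm_nonneg (u x); positivity
    have e : N⁻¹ * ((‖u x‖ - N) ^ 2 + ‖u x‖ * N) = N + N⁻¹ * ‖u x‖ ^ 2 - ‖u x‖ := by
      field_simp; ring
    simp only; linarith
  refine h1.trans ?_
  have : IsFiniteMeasure (volume.restrict (ball c r)) := ⟨by
    rw [Measure.restrict_apply_univ]; exact measure_ball_lt_top⟩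
  rw [integral_add (integrable_const N) (h.int_r.const_mul _),
    integral_const_mul, setIntegral_const, vol_ball c h.hr, smul_eq_mul]
  have : N⁻¹ * ∫ x in ball c r, ‖u x‖ ^ 2 ≤ N⁻¹ * (N ^ 2 * r ^ 3) :=
    mul_le_mul_of_nonneg_left h.bd (inv_nonneg.2 h.hN.le)
  have e : N⁻¹ * (N ^ 2 * r ^ 3) = N * r ^ 3 := by have := h.hN; field_simp
  linarith

lemma dens_supp (h : Slice u Γ c r L N A) {x : E3} (hx : x ∉ ball c r) : dens u Γ x = 0 := by
  refine Finset.sum_eq_zero fun i _ => ?_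
  rw [pd_eq_zero (fun hh => hx (h.supp hh)), mul_zero]

lemma dens_meas (h : Slice u Γ c r L N A) : Measurable (dens u Γ) :=
  Finset.measurable_sum _ fun i _ => (h.meas_coord i).mul (h.smooth.pd i).cont.measurable

lemma dens_cpt (h : Slice u Γ c r L N A) : HasCompactSupport (dens u Γ) := by
  refine h.cpt.mono' fun x hx => ?_
  by_contra hh
  exact hx (Finset.sum_eq_zero fun i _ => by rw [pd_eq_zero hh, mul_zero])

lemma dens_int (h : Slice u Γ c r L N A) : Integrable (dens u Γ) :=
  integrable_finsetSum _ fun i _ => integrable_mul_test (h.int1c i) (h.smooth.pd i).cont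
    (compact_pd h.cpt i) ((tsupport_pd i Γ).trans (h.supp.trans (ball_subset_ball h.hrL)))

lemma dens_le (h : Slice u Γ c r L N A) (x : E3) : |dens u Γ x| ≤ 3 * (A / r ^ 4) * ‖u x‖ := by
  calc |dens u Γ x| ≤ ∑ i, |u x i * pd i Γ x| := Finset.abs_sum_le_sum_abs _ _
    _ ≤ ∑ _i : Fin 3, ‖u x‖ * (A / r ^ 4) := by
      refine Finset.sum_le_sum fun i _ => ?_
      rw [abs_mul]
      exact mul_le_mul (abs_coord_le _ _) (h.g1 i x) (abs_nonneg _) (norm_nonneg _)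
    _ = _ := by simp; ring

lemma dens_l2 (h : Slice u Γ c r L N A) :
    ∫⁻ x, ‖dens u Γ x‖ₑ ^ 2 ≤ ENNReal.ofReal (9 * A ^ 2 * N ^ 2 / r ^ 5) := by
  have h1 : ∫⁻ x, ‖dens u Γ x‖ₑ ^ 2 ≤ ∫⁻ x in ball c r, ENNReal.ofReal (9 * A ^ 2 / r ^ 8 * ‖u x‖ ^ 2) := by
    rw [← lintegral_indicator measurableSet_ball]
    refine lintegral_mono fun x => ?_
    by_cases hx : x ∈ ball c r
    · rw [indicator_of_mem hx, ← ofReal_norm, ← ENNReal.ofReal_pow (norm_nonneg _)]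
      refine ENNReal.ofReal_le_ofReal ?_
      have h2 := pow_le_pow_left₀ (abs_nonneg _) (h.dens_le x) 2
      rw [Real.norm_eq_abs]
      refine h2.trans (le_of_eq ?_)
      have := h.hr
      field_simp; norm_num; ring_nf
    · simp [h.dens_supp hx]
  refine h1.trans ?_
  have hr := h.hr
  rw [← ofReal_integral_eq_lintegral_ofReal (h.int_r.const_mul _)
    (Eventually.of_forall fun x => by positivity), integral_const_mul]
  refine ENNReal.ofReal_le_ofReal ?_
  calc 9 * A ^ 2 / r ^ 8 * ∫ x in ball c r, ‖u x‖ ^ 2 ≤ 9 * A ^ 2 / r ^ 8 * (N ^ 2 * r ^ 3) := by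
        gcongr; exact h.bd
    _ = _ := by field_simp

/-- Since `u` is divergence free, integration by parts in `∫ T(x-y) (u·∇Γ)(y) dy` moves the derivative
from `Γ` to the kernel `T`, so that only the size `B` of `∇T` on `x - B(c,r)` enters. -/
lemma conv_dens_le (h : Slice u Γ c r L N A) {T : E3 → ℝ} (hT : Smooth T) {x : E3} {B : ℝ}
    (hB : ∀ y ∈ ball c r, ∀ j, |pd j T (x - y)| ≤ B) :
    |conv T (dens u Γ) x| ≤ 3 * B * A * (1 + ballVol) * N := by
  have hr := h.hr
  have hB0 : 0 ≤ B := (abs_nonneg _).trans (hB c (mem_ball_self h.hr) 0)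
  have hTx := smooth_reflect hT x
  have hsub : tsupport Γ ⊆ ball c L := h.supp.trans (ball_subset_ball h.hrL)
  have hd := h.div (fun y => T (x - y) * Γ y) (hTx.mul h.smooth) h.cpt.mul_left
    (tsupport_mul_subset_right.trans hsub)
  have i1 : Integrable fun y => ∑ i, u y i * (pd i (fun y => T (x - y)) y * Γ y) :=
    integrable_finsetSum _ fun i _ => integrable_mul_test (h.int1c i)
      ((hTx.pd i).mul h.smooth).cont h.cpt.mul_left (tsupport_mul_subset_right.trans hsub)
  have i2 : Integrable fun y => ∑ i, u y i * (T (x - y) * pd i Γ y) :=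
    integrable_finsetSum _ fun i _ => integrable_mul_test (h.int1c i)
      (hTx.mul (h.smooth.pd i)).cont (compact_pd h.cpt i).mul_left
      (tsupport_mul_subset_right.trans ((tsupport_pd i Γ).trans hsub))
  have e1 : conv T (dens u Γ) x = ∫ y, ∑ i, u y i * (T (x - y) * pd i Γ y) := by
    unfold conv dens
    congr 1; ext y
    rw [Finset.mul_sum]
    exact Finset.sum_congr rfl fun i _ => by ring
  have e2 : (∫ y, ∑ i, u y i * (pd i (fun y => T (x - y)) y * Γ y)) +
      ∫ y, ∑ i, u y i * (T (x - y) * pd i Γ y) = 0 := by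
    rw [← hd, ← integral_add i1 i2]
    congr 1; ext y
    rw [← Finset.sum_add_distrib]
    refine Finset.sum_congr rfl fun i _ => ?_
    rw [pd_mul (hTx.diff y) (h.smooth.diff y)]; ring
  have e3 : |conv T (dens u Γ) x| = |∫ y, ∑ i, u y i * (pd i (fun y => T (x - y)) y * Γ y)| := by
    rw [e1, ← abs_neg]; congr 1; linarith
  rw [e3]
  have b1 : |∫ y, ∑ i, u y i * (pd i (fun y => T (x - y)) y * Γ y)|
      ≤ ∫ y, (ball c r).indicator (fun y => 3 * B * (A / r ^ 3) * ‖u y‖) y := by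
    rw [← Real.norm_eq_abs]
    refine norm_integral_le_of_norm_le ?_ (Eventually.of_forall fun y => ?_)
    · exact IntegrableOn.integrable_indicator
        ((h.int1.mono_set (ball_subset_ball h.hrL)).const_mul _) measurableSet_ball
    · by_cases hy : y ∈ ball c r
      · rw [indicator_of_mem hy]
        refine (norm_sum_le _ _).trans ?_
        calc _ ≤ ∑ _i : Fin 3, ‖u y‖ * (B * (A / r ^ 3)) := by
              refine Finset.sum_le_sum fun i _ => ?_
              rw [norm_mul, norm_mul, pd_reflect hT, norm_neg]
              exact mul_le_mul (abs_coord_le _ _) (mul_le_mul (hB y hy i) (h.g0 y)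
                (norm_nonneg _) hB0) (by positivity) (norm_nonneg _)
          _ = _ := by simp; ring
      · rw [indicator_of_notMem hy]
        have : Γ y = 0 := image_eq_zero_of_notMem_tsupport fun hh => hy (h.supp hh)
        simp [this]
  refine b1.trans ?_
  rw [integral_indicator measurableSet_ball, integral_const_mul]
  have hA := h.hA
  calc _ ≤ 3 * B * (A / r ^ 3) * ((1 + ballVol) * N * r ^ 3) := by gcongr; exact h.l1_bound
    _ = _ := by field_simp

end Slice

/-! ### The potential of u·∇Γ -/

lemma pd2_mul {f g : E3 → ℝ} (hf : Smooth f) (hg : Smooth g) (a b : Fin 3) (x : E3) :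
    pd b (pd a (fun y => f y * g y)) x = pd b (pd a f) x * g x + pd a f x * pd b g x
      + pd b f x * pd a g x + f x * pd b (pd a g) x := by
  have e : pd a (fun y => f y * g y) = fun x => pd a f x * g x + f x * pd a g x :=
    funext fun x => pd_mul (hf.diff x) (hg.diff x) a
  rw [e, pd_add (((hf.pd a).mul hg).diff x) ((hf.mul (hg.pd a)).diff x),
    pd_mul ((hf.pd a).diff x) (hg.diff x), pd_mul (hf.diff x) ((hg.pd a).diff x)]
  ring

lemma lap_mul {f g : E3 → ℝ} (hf : Smooth f) (hg : Smooth g) (x : E3) :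
    lapScalar (fun y => f y * g y) x = f x * lapScalar g x + 2 * ∑ i, pd i f x * pd i g x
      + g x * lapScalar f x := by
  simp only [lap_eq, pd2_mul hf hg, Fin.sum_univ_three]
  ring

lemma sq_lintegral_of_cont {f : E3 → ℝ} (hf : Continuous f) (hc : HasCompactSupport f) :
    ∫⁻ x, ‖f x‖ₑ ^ 2 = ENNReal.ofReal (∫ x, f x ^ 2) := by
  rw [ofReal_integral_eq_lintegral_ofReal]
  · congr 1; ext x
    rw [← ofReal_norm, ← ENNReal.ofReal_pow (norm_nonneg _), Real.norm_eq_abs, sq_abs]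
  · have h1 : HasCompactSupport (fun x => f x * f x) := hc.mul_left
    have h2 := (hf.mul hf).integrable_of_hasCompactSupport (μ := volume) h1
    refine h2.congr (Eventually.of_forall fun x => ?_)
    simp only [Pi.mul_apply]
    ring
  · exact Eventually.of_forall fun x => sq_nonneg _

lemma tsupport_lap (f : E3 → ℝ) : tsupport (lapScalar f) ⊆ tsupport f := by
  refine closure_minimal ?_ (isClosed_tsupport _)
  intro x hx
  by_contra h
  refine hx ?_
  rw [lap_eq]
  exact Finset.sum_eq_zero fun i _ => pd_eq_zero (fun hh => h (tsupport_pd i f hh)) i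

lemma compact_lap {f : E3 → ℝ} (hc : HasCompactSupport f) : HasCompactSupport (lapScalar f) :=
  hc.mono' ((subset_tsupport _).trans (tsupport_lap f))

lemma hessian_l2' {f : E3 → ℝ} (hf : Smooth f) (hc : HasCompactSupport f) (a b : Fin 3) :
    ∫⁻ x, ‖pd a (pd b f) x‖ₑ ^ 2 ≤ ∫⁻ x, ‖lapScalar f x‖ₑ ^ 2 := by
  rw [sq_lintegral_of_cont ((hf.pd b).pd a).cont (compact_pd (compact_pd hc b) a),
    sq_lintegral_of_cont (smooth_lap hf).cont (compact_lap hc), ← hessian_l2 hf hc]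
  refine ENNReal.ofReal_le_ofReal ?_
  have h1 : ∫ x, (pd a (pd b f) x) ^ 2 ≤ ∑ b, ∫ x, (pd a (pd b f) x) ^ 2 :=
    Finset.single_le_sum (f := fun b => ∫ x, (pd a (pd b f) x) ^ 2)
      (fun _ _ => integral_nonneg fun _ => sq_nonneg _) (Finset.mem_univ b)
  exact h1.trans (Finset.single_le_sum (f := fun a => ∑ b, ∫ x, (pd a (pd b f) x) ^ 2)
      (fun _ _ => Finset.sum_nonneg fun _ _ => integral_nonneg fun _ => sq_nonneg _)
      (Finset.mem_univ a))

/-- The regularised Newtonian potential of `u·∇Γ`. -/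
def pot (κ L : ℝ) (u : E3 → E3) (Γ : E3 → ℝ) : E3 → ℝ := conv (newtCut κ L) (dens u Γ)

/-- The constant in the pointwise bounds of the potential. -/
def potC : ℝ := 1152 * (1 + ballVol)

lemma potC_pos : 0 < potC := by have := ballVol_nonneg; unfold potC; positivity

namespace Slice
variable {u : E3 → E3} {Γ : E3 → ℝ} {c : E3} {r L N A κ : ℝ}

lemma hL (h : Slice u Γ c r L N A) : 0 < L := h.hr.trans_le h.hrL

lemma pot_smooth (h : Slice u Γ c r L N A) (hκ : 0 < κ) : Smooth (pot κ L u Γ) :=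
  conv_smooth (newtCut_smooth hκ L) (newtCut_compact h.hL) h.dens_int.locallyIntegrable

lemma pd_pot (h : Slice u Γ c r L N A) (hκ : 0 < κ) (a : Fin 3) :
    pd a (pot κ L u Γ) = conv (pd a (newtCut κ L)) (dens u Γ) :=
  funext fun x => pd_conv (newtCut_smooth hκ L) (newtCut_compact h.hL)
    h.dens_int.locallyIntegrable a x

lemma pd2_pot (h : Slice u Γ c r L N A) (hκ : 0 < κ) (a b : Fin 3) :
    pd b (pd a (pot κ L u Γ)) = conv (pd b (pd a (newtCut κ L))) (dens u Γ) := by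
  rw [h.pd_pot hκ]
  exact funext fun x => pd_conv ((newtCut_smooth hκ L).pd a) (compact_pd (newtCut_compact h.hL) a)
    h.dens_int.locallyIntegrable b x

/-- At distance `d` from `c` the potential decays like `d⁻²`, one order better than the Newtonian
kernel, and each derivative gains a further factor `d⁻¹`; the gain is that of `conv_dens_le`. -/
lemma pot_bounds (h : Slice u Γ c r L N A) (hκ : 0 < κ) {x : E3} {d : ℝ} (hd : 2 * r ≤ d)
    (hx : d ≤ dist x c) (hxL : dist x c < L) (a b : Fin 3) :
    |pot κ L u Γ x| ≤ potC * A * N / d ^ 2 ∧ |pd a (pot κ L u Γ) x| ≤ potC * A * N / d ^ 3 ∧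
      |pd b (pd a (pot κ L u Γ)) x| ≤ potC * A * N / d ^ 4 := by
  have hr := h.hr
  have hA := h.hA
  have hN := h.hN
  have hv := ballVol_nonneg
  have hd0 : 0 < d := by linarith
  have hy : ∀ y ∈ ball c r, d / 2 ≤ ‖x - y‖ ∧ ‖x - y‖ < 2 * L := by
    intro y hy
    have h1 := mem_ball.1 hy
    rw [← dist_eq_norm]
    have h2 := dist_triangle x y c
    have h3 := dist_triangle x c y
    rw [dist_comm c y] at h3
    have := h.hrL
    constructor <;> linarith
  have hb := fun y (hyy : y ∈ ball c r) => newtCut_bounds hκ h.hL (hy y hyy).2 (half_pos hd0) (hy y hyy).1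
  have hK := newtCut_smooth hκ L
  refine ⟨?_, ?_, ?_⟩
  · refine (h.conv_dens_le hK (B := 24 / (d / 2) ^ 2) fun y hyy j => (hb y hyy j 0 0).1).trans ?_
    rw [potC, le_div_iff₀ (by positivity)]
    field_simp; norm_num
    linarith
  · rw [h.pd_pot hκ]
    refine (h.conv_dens_le (hK.pd a) (B := 24 / (d / 2) ^ 3) fun y hyy j => (hb y hyy a j 0).2.1).trans ?_
    rw [potC, le_div_iff₀ (by positivity)]
    field_simp; norm_num
    linarith
  · rw [h.pd2_pot hκ]
    refine (h.conv_dens_le ((hK.pd a).pd b) (B := 24 / (d / 2) ^ 4) fun y hyy j => (hb y hyy a b j).2.2).trans ?_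
    rw [potC, le_div_iff₀ (by positivity)]
    field_simp; norm_num
    linarith

/-- On `B(c,L)` the truncation of the kernel is not felt: the potential solves
`-Δψ = newtRho κ * (u·∇Γ)`. -/
lemma lap_pot (h : Slice u Γ c r L N A) (hκ : 0 < κ) {x : E3} (hxL : dist x c < L) :
    lapScalar (pot κ L u Γ) x = - conv (newtRho κ) (dens u Γ) x := by
  rw [lap_eq]
  simp only [h.pd2_pot hκ, conv]
  rw [← integral_finsetSum, ← integral_neg]
  · congr 1; ext y
    by_cases hy : y ∈ ball c r
    · have : ‖x - y‖ < 2 * L := by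
        have h1 := mem_ball.1 hy
        rw [← dist_eq_norm]
        have h3 := dist_triangle x c y
        rw [dist_comm c y] at h3
        have := h.hrL
        linarith
      rw [← Finset.sum_mul, ← lap_eq, lap_newtCut hκ h.hL this]; ring
    · simp [h.dens_supp hy]
  · intro i _
    have hs := smooth_reflect (((newtCut_smooth hκ L).pd i).pd i) x
    obtain ⟨C, -, hC⟩ := exists_bound (((newtCut_smooth hκ L).pd i).pd i).cont
      (compact_pd (compact_pd (newtCut_compact h.hL) i) i)
    exact h.dens_int.bdd_mul hs.cont.aestronglyMeasurable (Eventually.of_forall fun y => hC (x - y))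

end Slice

/-- Interior `L²` bound of the second derivatives of the potential on `B(c,4r)`. -/
lemma pot_hess : ∃ C : ℝ, 0 < C ∧ ∀ {u : E3 → E3} {Γ : E3 → ℝ} {c : E3} {r L N A κ : ℝ},
    Slice u Γ c r L N A → 0 < κ → 8 * r ≤ L → ∀ a b,
    ∫⁻ x in ball c (4 * r), ‖pd a (pd b (pot κ L u Γ)) x‖ₑ ^ 2 ≤
      ENNReal.ofReal (C * A ^ 2 * N ^ 2 / r ^ 5) := by
  obtain ⟨D, hD0, hD⟩ := cutoff_bounds
  have hp := potC_pos
  have hv := ballVol_nonneg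
  have hm := newtMass_pos
  refine ⟨18 * newtMass ^ 2 + 2 * (9 * D * potC) ^ 2 * (8 ^ 3 * ballVol), by positivity,
    fun {u Γ c r L N A κ} h hκ hL a b => ?_⟩
  have hr := h.hr
  have hA := h.hA
  have hN := h.hN
  set ψ := pot κ L u Γ with hψ
  have hψs : Smooth ψ := h.pot_smooth hκ
  set χ := cutoff c (8 * r) with hχ
  have hχs : Smooth χ := cutoff_smooth _ _
  have hχc : HasCompactSupport χ := compact_cutoff (by linarith)
  have hχ1 : ∀ x, dist x c < 4 * r → χ =ᶠ[𝓝 x] fun _ => 1 := by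
    intro x hx
    filter_upwards [isOpen_ball.mem_nhds (mem_ball.2 hx)] with y hy
    exact cutoff_one (by linarith) (by have := mem_ball.1 hy; linarith)
  have hloc : ∀ x, dist x c < 4 * r → (fun y => χ y * ψ y) =ᶠ[𝓝 x] ψ := by
    intro x hx
    filter_upwards [hχ1 x hx] with y hy
    rw [hy, one_mul]
  set B : ℝ := 9 * D * potC * A * N / r ^ 4 with hB
  have hB0 : 0 ≤ B := by positivity
  -- between the radii `4r` and `8r` the commutator terms are bounded by the decay of the potential
  have hlap : ∀ x, |lapScalar (fun y => χ y * ψ y) x| ≤ |conv (newtRho κ) (dens u Γ) x| +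
      (ball c (8 * r)).indicator (fun _ => B) x := by
    intro x
    by_cases hx : dist x c < 4 * r
    · rw [lap_congr (hloc x hx), h.lap_pot hκ (by linarith), abs_neg]
      exact le_add_of_nonneg_right (indicator_nonneg (fun _ _ => hB0) _)
    by_cases hx8 : dist x c < 8 * r
    · rw [indicator_of_mem (mem_ball.2 hx8)]
      push Not at hx
      have hbd := fun i => h.pot_bounds hκ (d := r * 4) (by linarith) (by linarith) (by linarith : dist x c < L) i i
      have hc1 : ∀ i, |pd i χ x| ≤ D / r := fun i => by
        refine ((hD c (8 * r) (by linarith) x).1 i).trans ?_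
        gcongr; linarith
      have hc2 : ∀ i, |pd i (pd i χ) x| ≤ D / r ^ 2 := fun i => by
        refine ((hD c (8 * r) (by linarith) x).2 i i).trans ?_
        gcongr; linarith
      have hle : ∀ n, potC * A * N / (r * 4) ^ n ≤ potC * A * N / r ^ n := fun n => by
        gcongr; linarith
      rw [lap_mul hχs hψs, h.lap_pot hκ (by linarith), add_assoc]
      refine (abs_add_le _ _).trans (add_le_add ?_ ((abs_add_le _ _).trans ?_))
      · rw [abs_mul, abs_neg, abs_of_nonneg (cutoff_nonneg _ _ _)]
        exact mul_le_of_le_one_left (abs_nonneg _) (cutoff_le_one _ _ _)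
      · have s1 : |2 * ∑ i, pd i χ x * pd i ψ x| ≤ 2 * ∑ _i : Fin 3, D / r * (potC * A * N / r ^ 3) := by
          rw [abs_mul, abs_two]
          refine mul_le_mul_of_nonneg_left ((Finset.abs_sum_le_sum_abs _ _).trans
            (Finset.sum_le_sum fun i _ => ?_)) (by norm_num)
          rw [abs_mul]
          exact mul_le_mul (hc1 i) ((hbd i).2.1.trans (hle 3)) (abs_nonneg _) (by positivity)
        have s2 : |ψ x * lapScalar χ x| ≤ potC * A * N / r ^ 2 * ∑ _i : Fin 3, D / r ^ 2 := by
          rw [abs_mul]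
          refine mul_le_mul ((hbd 0).1.trans (hle 2)) ?_ (abs_nonneg _) (by positivity)
          rw [lap_eq]
          exact (Finset.abs_sum_le_sum_abs _ _).trans (Finset.sum_le_sum fun i _ => hc2 i)
        refine (add_le_add s1 s2).trans (le_of_eq ?_)
        simp [hB]; field_simp; norm_num
        ring
    · have h0 : x ∉ tsupport (fun y => χ y * ψ y) := fun hh => by
        have := tsupport_cutoff' (by linarith : 0 < 8 * r) (tsupport_mul_subset_left hh)
        exact hx8 (mem_ball.1 this)
      have : lapScalar (fun y => χ y * ψ y) x = 0 :=
        image_eq_zero_of_notMem_tsupport fun hh => h0 (tsupport_lap _ hh)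
      rw [this, abs_zero]
      exact add_nonneg (abs_nonneg _) (indicator_nonneg (fun _ _ => hB0) _)
  calc ∫⁻ x in ball c (4 * r), ‖pd a (pd b ψ) x‖ₑ ^ 2
      = ∫⁻ x in ball c (4 * r), ‖pd a (pd b (fun y => χ y * ψ y)) x‖ₑ ^ 2 := by
        refine setLIntegral_congr_fun measurableSet_ball fun x hx => ?_
        rw [pd_congr (pd_eventuallyEq (hloc x (mem_ball.1 hx)) b)]
    _ ≤ ∫⁻ x, ‖pd a (pd b (fun y => χ y * ψ y)) x‖ₑ ^ 2 := setLIntegral_le_lintegral _ _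
    _ ≤ ∫⁻ x, ‖lapScalar (fun y => χ y * ψ y) x‖ₑ ^ 2 := hessian_l2' (hχs.mul hψs) hχc.mul_right a b
    _ ≤ ∫⁻ x, (2 * ‖conv (newtRho κ) (dens u Γ) x‖ₑ ^ 2 +
          (ball c (8 * r)).indicator (fun _ => ENNReal.ofReal (2 * B ^ 2)) x) := by
        refine lintegral_mono fun x => ?_
        have hsq : lapScalar (fun y => χ y * ψ y) x ^ 2 ≤ 2 * |conv (newtRho κ) (dens u Γ) x| ^ 2 +
            (ball c (8 * r)).indicator (fun _ => 2 * B ^ 2) x := by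
          have h1 := pow_le_pow_left₀ (abs_nonneg _) (hlap x) 2
          rw [sq_abs] at h1
          refine h1.trans ?_
          by_cases hx : x ∈ ball c (8 * r)
          · simp only [indicator_of_mem hx]
            nlinarith [sq_nonneg (|conv (newtRho κ) (dens u Γ) x| - B)]
          · simp only [indicator_of_notMem hx, add_zero]
            nlinarith [sq_nonneg (|conv (newtRho κ) (dens u Γ) x|)]
        have h2 := ENNReal.ofReal_le_ofReal hsq
        rw [ENNReal.ofReal_add (by positivity) (indicator_nonneg (fun _ _ => by positivity) _),
          ENNReal.ofReal_mul (by norm_num), ENNReal.ofReal_pow (abs_nonneg _), ← Real.norm_eq_abs,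
          ofReal_norm, ← sq_abs, ENNReal.ofReal_pow (abs_nonneg _), ← Real.norm_eq_abs,
          ofReal_norm] at h2
        refine h2.trans (le_of_eq ?_)
        refine congrArg₂ (· + ·) ?_ ?_
        · rw [ENNReal.ofReal_ofNat]
        · by_cases hx : x ∈ ball c (8 * r)
          · simp only [indicator_of_mem hx]
          · simp [indicator_of_notMem hx]
    _ = 2 * (∫⁻ x, ‖conv (newtRho κ) (dens u Γ) x‖ₑ ^ 2) +
          ENNReal.ofReal (2 * B ^ 2) * volume (ball c (8 * r)) := by
        rw [lintegral_add_right _ (measurable_const.indicator measurableSet_ball),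
          lintegral_const_mul' _ _ (by norm_num), lintegral_indicator_const measurableSet_ball]
    _ ≤ 2 * (ENNReal.ofReal newtMass ^ 2 * ENNReal.ofReal (9 * A ^ 2 * N ^ 2 / r ^ 5)) +
          ENNReal.ofReal (2 * B ^ 2) * ENNReal.ofReal ((8 * r) ^ 3 * ballVol) := by
        have h1 := conv_l2 (newtRho_cont hκ).measurable h.dens_meas
        rw [newtRho_l1 hκ] at h1
        rw [vol_ball' c (by linarith : 0 < 8 * r)]
        gcongr
        exact h1.trans (by gcongr; exact h.dens_l2)
    _ = _ := by
        rw [← ENNReal.ofReal_pow hm.le, ← ENNReal.ofReal_mul (by positivity),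
          ← ENNReal.ofReal_mul (by positivity), ← ENNReal.ofReal_ofNat 2,
          ← ENNReal.ofReal_mul (by positivity), ← ENNReal.ofReal_add (by positivity) (by positivity)]
        congr 1
        rw [hB]
        field_simp
        ring

/-! ### Approximation of the identity in L^{3/2}–L³ duality -/

instance holder32 : ENNReal.HolderTriple (3/2) 3 1 := ⟨by
  rw [inv_one, ENNReal.inv_div (by norm_num) (by norm_num)]
  rw [show (3:ℝ≥0∞)⁻¹ = 1 / 3 by rw [one_div], ← ENNReal.add_div]
  rw [show (2:ℝ≥0∞) + 1 = 3 by norm_num]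
  exact ENNReal.div_self (by norm_num) (by norm_num)⟩

lemma holder_l32 {P h : E3 → ℝ} (hP : AEStronglyMeasurable P) (hh : AEStronglyMeasurable h) :
    ∫⁻ x, ‖P x‖ₑ * ‖h x‖ₑ ≤ eLpNorm P (3/2) volume * eLpNorm h 3 volume := by
  have := eLpNorm_smul_le_mul_eLpNorm (p := 3/2) (q := 3) (r := 1) (μ := volume) hh hP
  rw [eLpNorm_one_eq_lintegral_enorm] at this
  simpa [enorm_mul] using this

/-- Young's inequality tested against an `L^{3/2}` function. -/
lemma young_pair {P h ρ : E3 → ℝ} (hP : Measurable P) (hh : Measurable h) (hρ : Measurable ρ) :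
    ∫⁻ x, ‖P x‖ₑ * ‖conv ρ h x‖ₑ ≤
      (∫⁻ y, ‖ρ y‖ₑ) * (eLpNorm P (3/2) volume * eLpNorm h 3 volume) := by
  calc ∫⁻ x, ‖P x‖ₑ * ‖conv ρ h x‖ₑ
      ≤ ∫⁻ x, ∫⁻ y, ‖ρ y‖ₑ * (‖P x‖ₑ * ‖h (x - y)‖ₑ) := by
        refine lintegral_mono fun x => ?_
        have h1 := conv_enorm_le ρ h x
        rw [← lintegral_sub_left_eq_self (fun y => ‖ρ (x - y)‖ₑ * ‖h y‖ₑ) x] at h1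
        simp only [sub_sub_cancel] at h1
        refine (mul_le_mul_right h1 _).trans ?_
        rw [← lintegral_const_mul' _ _ enorm_ne_top]
        refine lintegral_mono fun y => le_of_eq ?_
        ring
    _ = ∫⁻ y, ∫⁻ x, ‖ρ y‖ₑ * (‖P x‖ₑ * ‖h (x - y)‖ₑ) := by
        refine lintegral_lintegral_swap (Measurable.aemeasurable ?_)
        fun_prop
    _ ≤ ∫⁻ y, ‖ρ y‖ₑ * (eLpNorm P (3/2) volume * eLpNorm h 3 volume) := by
        refine lintegral_mono fun y => ?_
        rw [lintegral_const_mul' _ _ enorm_ne_top]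
        refine mul_le_mul_right ((holder_l32 hP.aestronglyMeasurable (h := fun x => h (x - y)) (hh.comp (measurable_id.sub_const y)).aestronglyMeasurable).trans (le_of_eq ?_)) _
        rw [← eLpNorm_comp_measurePreserving hh.aestronglyMeasurable (measurePreserving_sub_right volume y)]
        rfl
    _ = _ := by
        rw [lintegral_mul_const _ hρ.enorm]

lemma conv_rho_le {κ : ℝ} (hκ : 0 < κ) {g : E3 → ℝ} {C : ℝ} (hC : ∀ x, |g x| ≤ C) (x : E3) :
    |conv (newtRho κ) g x| ≤ newtMass * C := by
  rw [← newtRho_integral hκ, ← integral_sub_left_eq_self (newtRho κ) volume x, ← integral_mul_const]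
  refine norm_integral_le_of_norm_le (f := fun y => newtRho κ (x - y) * g y)
    (((newtRho_integrable hκ).comp_sub_left x).mul_const C)
    (Eventually.of_forall fun y => ?_)
  rw [norm_mul, Real.norm_of_nonneg (newtRho_nonneg hκ _)]
  exact mul_le_mul_of_nonneg_left (hC y) (newtRho_nonneg hκ _)

lemma conv_rho_scale {κ : ℝ} (hκ : 0 < κ) (g : E3 → ℝ) (x : E3) :
    conv (newtRho κ) g x = ∫ z, newtRho 1 z * g (x - κ • z) := by
  have h := Measure.integral_comp_smul (volume : Measure E3) (fun y => newtRho κ y * g (x - y)) κ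
  have h2 := integral_sub_left_eq_self (fun y => newtRho κ (x - y) * g y) volume x
  simp only [sub_sub_cancel] at h2
  rw [conv, ← h2]
  simp only [newtRho_scale hκ, mul_assoc] at h
  rw [integral_const_mul] at h
  have hk : (0:ℝ) < (κ ^ 3)⁻¹ := by positivity
  simp only [finrank_euclideanSpace, Fintype.card_fin, smul_eq_mul, inv_pow, abs_of_pos hk] at h
  exact (mul_left_cancel₀ hk.ne' h).symm

lemma conv_rho_tendsto {g : E3 → ℝ} (hg : Continuous g) {C : ℝ} (hC : ∀ x, |g x| ≤ C)
    {κ : ℕ → ℝ} (hκ : ∀ n, 0 < κ n) (hκ0 : Tendsto κ atTop (𝓝 0)) (x : E3) :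
    Tendsto (fun n => conv (newtRho (κ n)) g x) atTop (𝓝 (newtMass * g x)) := by
  simp_rw [conv_rho_scale (hκ _)]
  rw [newtMass, ← integral_mul_const]
  refine tendsto_integral_of_dominated_convergence (fun z => newtRho 1 z * C) (fun n => ?_)
    (newtRho_int.mul_const C) (fun n => Eventually.of_forall fun z => ?_)
    (Eventually.of_forall fun z => ?_)
  · exact ((newtRho_cont one_pos).mul (hg.comp (by fun_prop))).aestronglyMeasurable
  · rw [norm_mul, Real.norm_of_nonneg (newtRho_nonneg one_pos _)]
    exact mul_le_mul_of_nonneg_left (hC _) (newtRho_nonneg one_pos _)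
  · refine Tendsto.const_mul _ ((hg.tendsto x).comp ?_)
    have := (tendsto_const_nhds (x := x)).sub (hκ0.smul_const z)
    simpa using this

lemma conv_rho_cont {κ : ℝ} (hκ : 0 < κ) {g : E3 → ℝ} (hg : Integrable g) :
    Continuous (conv (newtRho κ) g) := by
  have hb : ∀ z, ‖newtRho κ z‖ ≤ 3 * κ ^ 2 * (√(κ^2))⁻¹ ^ 5 := by
    intro z
    rw [Real.norm_of_nonneg (newtRho_nonneg hκ _), newtRho, newt]
    gcongr
    simp
  rw [continuous_iff_continuousAt]
  intro x
  refine continuousAt_of_dominated (bound := fun y => 3 * κ ^ 2 * (√(κ^2))⁻¹ ^ 5 * ‖g y‖)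
    (Eventually.of_forall fun x => ?_) (Eventually.of_forall fun x => Eventually.of_forall fun y => ?_)
    (hg.norm.const_mul _) (Eventually.of_forall fun y => ?_)
  · exact ((newtRho_cont hκ).comp (by fun_prop)).aestronglyMeasurable.mul hg.aestronglyMeasurable
  · rw [norm_mul]
    exact mul_le_mul_of_nonneg_right (hb _) (norm_nonneg _)
  · exact (((newtRho_cont hκ).comp (by fun_prop)).mul continuous_const).continuousAt

lemma conv_rho_integrable {κ : ℝ} (hκ : 0 < κ) {g : E3 → ℝ} (hg : Integrable g) (x : E3) :
    Integrable fun y => newtRho κ (x - y) * g y := by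
  have hb : ∀ z, ‖newtRho κ z‖ ≤ 3 * κ ^ 2 * (√(κ^2))⁻¹ ^ 5 := by
    intro z
    rw [Real.norm_of_nonneg (newtRho_nonneg hκ _), newtRho, newt]
    gcongr
    simp
  exact hg.bdd_mul ((newtRho_cont hκ).comp (by fun_prop)).aestronglyMeasurable
    (Eventually.of_forall fun y => hb (x - y))

/-- Approximation of the identity in the duality `L^{3/2}`–`L³`; the kernels `newtRho κ` are not
compactly supported, so the limit is taken first for continuous `g`. -/
lemma conv_rho_limit {P g : E3 → ℝ} (hPm : Measurable P) (hgm : Measurable g) (hP : MemLp P (3/2))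
    (hPi : Integrable P) (hg : MemLp g 3) (hgi : Integrable g)
    {κ : ℕ → ℝ} (hκ : ∀ n, 0 < κ n) (hκ0 : Tendsto κ atTop (𝓝 0)) :
    Tendsto (fun n => ∫ x, P x * conv (newtRho (κ n)) g x) atTop
      (𝓝 (newtMass * ∫ x, P x * g x)) := by
  have hm := newtMass_pos
  rw [Metric.tendsto_atTop]
  intro ε hε
  set K := eLpNorm P (3/2) volume with hK
  have hKt : K < ⊤ := hP.2
  set δ : ℝ := ε / (4 * newtMass * (K.toReal + 1)) with hδ
  have hδ0 : 0 < δ := by positivity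
  obtain ⟨g', hg'c, hg'd, hg'k, hg'L⟩ := hg.exists_hasCompactSupport_eLpNorm_sub_le (by norm_num)
    (ε := ENNReal.ofReal δ) (by simpa using hδ0)
  have hg'i : Integrable g' := hg'k.integrable_of_hasCompactSupport hg'c
  obtain ⟨C, hC0, hC⟩ := exists_bound hg'k hg'c
  have hdm : Measurable (g - g') := hgm.sub hg'k.measurable
  have hconv : ∀ n x, conv (newtRho (κ n)) g x = conv (newtRho (κ n)) (g - g') x
      + conv (newtRho (κ n)) g' x := by
    intro n x
    rw [conv, conv, conv, ← integral_add (conv_rho_integrable (hκ n) (hgi.sub hg'i) x)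
      (conv_rho_integrable (hκ n) hg'i x)]
    congr 1; ext y
    simp only [Pi.sub_apply]; ring
  have hsmall : newtMass * (K.toReal * δ) ≤ ε / 4 := by
    rw [hδ]
    have : 0 ≤ K.toReal := ENNReal.toReal_nonneg
    rw [show newtMass * (K.toReal * (ε / (4 * newtMass * (K.toReal + 1)))) =
      (ε / 4) * (K.toReal / (K.toReal + 1)) by field_simp]
    exact mul_le_of_le_one_right (by positivity) ((div_le_one (by positivity)).2 (by linarith))
  have hKd : ENNReal.ofReal newtMass * (K * ENNReal.ofReal δ) ≤ ENNReal.ofReal (ε / 4) := by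
    rw [← ENNReal.ofReal_toReal hKt.ne, ← ENNReal.ofReal_mul (by positivity),
      ← ENNReal.ofReal_mul hm.le]
    exact ENNReal.ofReal_le_ofReal hsmall
  have d1 : ∀ n, ∫⁻ x, ‖P x * conv (newtRho (κ n)) (g - g') x‖ₑ ≤ ENNReal.ofReal (ε / 4) := by
    intro n
    simp_rw [enorm_mul]
    refine (young_pair hPm hdm (newtRho_cont (hκ n)).measurable).trans (le_trans ?_ hKd)
    rw [newtRho_l1 (hκ n)]
    gcongr
  have d2 : ∫⁻ x, ‖newtMass * (P x * (g - g') x)‖ₑ ≤ ENNReal.ofReal (ε / 4) := by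
    simp_rw [enorm_mul]
    rw [lintegral_const_mul' _ _ enorm_ne_top]
    refine le_trans ?_ hKd
    rw [Real.enorm_eq_ofReal hm.le]
    gcongr
    refine (holder_l32 hP.1 hdm.aestronglyMeasurable).trans ?_
    gcongr
  have i1 : ∀ n, Integrable fun x => P x * conv (newtRho (κ n)) (g - g') x := fun n =>
    ⟨hP.1.mul (conv_rho_cont (hκ n) (hgi.sub hg'i)).aestronglyMeasurable,
      (d1 n).trans_lt ENNReal.ofReal_lt_top⟩
  have i2 : ∀ n, Integrable fun x => P x * conv (newtRho (κ n)) g' x := fun n =>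
    hPi.mul_bdd (conv_rho_cont (hκ n) hg'i).aestronglyMeasurable
      (Eventually.of_forall fun x => conv_rho_le (hκ n) hC x)
  have i3 : Integrable fun x => P x * g' x :=
    hPi.mul_bdd hg'k.aestronglyMeasurable (Eventually.of_forall hC)
  have i4 : Integrable fun x => P x * g x := MemLp.integrable_mul hP hg
  have hlim : Tendsto (fun n => ∫ x, P x * conv (newtRho (κ n)) g' x) atTop
      (𝓝 (∫ x, P x * (newtMass * g' x))) := by
    refine tendsto_integral_of_dominated_convergence (fun x => ‖P x‖ * (newtMass * C))
      (fun n => (i2 n).1) (hPi.norm.mul_const _) (fun n => Eventually.of_forall fun x => ?_)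
      (Eventually.of_forall fun x => (conv_rho_tendsto hg'k hC hκ hκ0 x).const_mul _)
    rw [norm_mul]
    exact mul_le_mul_of_nonneg_left (conv_rho_le (hκ n) hC x) (norm_nonneg _)
  obtain ⟨M, hM⟩ := Metric.tendsto_atTop.1 hlim (ε / 4) (by positivity)
  refine ⟨M, fun n hn => ?_⟩
  have h3 := hM n hn
  have abs_of : ∀ f : E3 → ℝ, ∫⁻ x, ‖f x‖ₑ ≤ ENNReal.ofReal (ε / 4) → |∫ x, f x| ≤ ε / 4 := by
    intro f hf
    have := (enorm_integral_le_lintegral_enorm f).trans hf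
    rw [← ofReal_norm] at this
    exact (ENNReal.ofReal_le_ofReal_iff (by positivity)).1 this
  have h1 := abs_of _ (d1 n)
  have h2 := abs_of _ d2
  have e1 : ∫ x, P x * conv (newtRho (κ n)) g x = (∫ x, P x * conv (newtRho (κ n)) (g - g') x)
      + ∫ x, P x * conv (newtRho (κ n)) g' x := by
    rw [← integral_add (i1 n) (i2 n)]
    congr 1; ext x
    rw [hconv n x]; ring
  have e2 : newtMass * ∫ x, P x * g x = (∫ x, newtMass * (P x * (g - g') x))
      + ∫ x, P x * (newtMass * g' x) := by
    rw [integral_const_mul]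
    have : ∫ x, P x * (newtMass * g' x) = newtMass * ∫ x, P x * g' x := by
      rw [← integral_const_mul]; congr 1; ext x; ring
    rw [this, ← mul_add]
    congr 1
    have : ∀ x, P x * (g - g') x = P x * g x - P x * g' x := fun x => by
      simp only [Pi.sub_apply]; ring
    simp_rw [this]
    rw [integral_sub i4 i3]; ring
  rw [Real.dist_eq] at h3 ⊢
  rw [e1, e2]
  rw [abs_lt] at h3 ⊢
  rw [abs_le] at h1 h2
  constructor <;> linarith [h1.1, h1.2, h2.1, h2.2, h3.1, h3.2]

/-! ### The truncated potential -/

/-- Pointwise bounds for the truncated potential `χψ`, `χ = cutoff c L`. -/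
lemma cutPot_bounds : ∃ C : ℝ, 0 < C ∧ ∀ {u : E3 → E3} {Γ : E3 → ℝ} {c : E3} {r L N A κ : ℝ},
    Slice u Γ c r L N A → 0 < κ → 8 * r ≤ L → ∀ x, dist x c < L →
    (∀ d, 4 * r ≤ d → d ≤ dist x c → ∀ i j,
      |pd i (pd j (fun y => cutoff c L y * pot κ L u Γ y)) x| ≤ C * A * N / d ^ 4) ∧
    |lapScalar (fun y => cutoff c L y * pot κ L u Γ y) x +
      cutoff c L x * conv (newtRho κ) (dens u Γ) x| ≤ C * A * N / L ^ 4 := by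
  obtain ⟨D, hD0, hD⟩ := cutoff_bounds
  have hp := potC_pos
  refine ⟨(1 + 150 * D) * potC, by positivity, fun {u Γ c r L N A κ} h hκ hL x hx => ?_⟩
  have hr := h.hr
  have hA := h.hA
  have hN := h.hN
  have hL0 := h.hL
  set ψ := pot κ L u Γ with hψ
  have hψs : Smooth ψ := h.pot_smooth hκ
  set χ := cutoff c L with hχ
  have hχs : Smooth χ := cutoff_smooth _ _
  have hc1 : ∀ d, 0 < d → d ≤ L → ∀ i, |pd i χ x| ≤ D / d := fun d hd hdL i =>
    ((hD c L hL0 x).1 i).trans (by gcongr)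
  have hc2 : ∀ d, 0 < d → d ≤ L → ∀ i j, |pd i (pd j χ) x| ≤ D / d ^ 2 := fun d hd hdL i j =>
    ((hD c L hL0 x).2 i j).trans (by gcongr)
  have hχle : |χ x| ≤ 1 := by
    rw [abs_of_nonneg (cutoff_nonneg _ _ _)]; exact cutoff_le_one _ _ _
  constructor
  · intro d hd hdx i j
    have hd0 : 0 < d := by linarith
    have hbd := fun a b => h.pot_bounds hκ (d := d) (by linarith) hdx hx a b
    have b0 := (hbd 0 0).1
    have b1 := fun i => (hbd i 0).2.1
    have b2 := fun i j => (hbd j i).2.2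
    rw [pd2_mul hχs hψs j i]
    refine (abs_add_le _ _).trans (le_trans (add_le_add ((abs_add_le _ _).trans (add_le_add ((abs_add_le _ _).trans
      (add_le_add (?_ : _ ≤ D / d ^ 2 * (potC * A * N / d ^ 2)) (?_ : _ ≤ D / d * (potC * A * N / d ^ 3))))
      (?_ : _ ≤ D / d * (potC * A * N / d ^ 3)))) (?_ : _ ≤ 1 * (potC * A * N / d ^ 4))) ?_)
    · rw [abs_mul]
      exact mul_le_mul (hc2 d hd0 (by linarith) i j) b0 (abs_nonneg _) (by positivity)
    · rw [abs_mul]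
      exact mul_le_mul (hc1 d hd0 (by linarith) j) (b1 i) (abs_nonneg _) (by positivity)
    · rw [abs_mul]
      exact mul_le_mul (hc1 d hd0 (by linarith) i) (b1 j) (abs_nonneg _) (by positivity)
    · rw [abs_mul]
      exact mul_le_mul hχle (b2 i j) (abs_nonneg _) (by positivity)
    · have : D / d ^ 2 * (potC * A * N / d ^ 2) + D / d * (potC * A * N / d ^ 3) +
          D / d * (potC * A * N / d ^ 3) + 1 * (potC * A * N / d ^ 4) =
          (1 + 3 * D) * potC * A * N / d ^ 4 := by field_simp; ring
      rw [this]
      gcongr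
      norm_num
  · rw [lap_mul hχs hψs, h.lap_pot hκ hx]
    have e : χ x * -conv (newtRho κ) (dens u Γ) x + 2 * ∑ i, pd i χ x * pd i ψ x + ψ x * lapScalar χ x
        + χ x * conv (newtRho κ) (dens u Γ) x = 2 * ∑ i, pd i χ x * pd i ψ x + ψ x * lapScalar χ x := by ring
    rw [e]
    by_cases hxL : dist x c < L / 2
    · have h1 : χ =ᶠ[𝓝 x] fun _ => 1 := by
        filter_upwards [isOpen_ball.mem_nhds (mem_ball.2 hxL)] with y hy
        exact cutoff_one hL0 (mem_ball.1 hy).le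
      have h2 : ∀ i, pd i χ x = 0 := fun i => by
        rw [pd_congr h1]; simp [pd]
      have h3 : lapScalar χ x = 0 := by
        rw [lap_congr h1]; simp [lapScalar]
      simp only [h2, h3, zero_mul, mul_zero, Finset.sum_const_zero, add_zero, abs_zero]
      positivity
    · push Not at hxL
      have hbd := fun a b => h.pot_bounds hκ (d := L / 2) (by linarith) hxL hx a b
      have s1 : |2 * ∑ i, pd i χ x * pd i ψ x| ≤ 2 * ∑ _i : Fin 3, D / L * (potC * A * N / (L / 2) ^ 3) := by
        rw [abs_mul, abs_two]
        refine mul_le_mul_of_nonneg_left ((Finset.abs_sum_le_sum_abs _ _).trans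
          (Finset.sum_le_sum fun i _ => ?_)) (by norm_num)
        rw [abs_mul]
        exact mul_le_mul (hc1 L hL0 le_rfl i) (hbd i 0).2.1 (abs_nonneg _) (by positivity)
      have s2 : |ψ x * lapScalar χ x| ≤ potC * A * N / (L / 2) ^ 2 * ∑ _i : Fin 3, D / L ^ 2 := by
        rw [abs_mul]
        refine mul_le_mul (hbd 0 0).1 ?_ (abs_nonneg _) (by positivity)
        rw [lap_eq]
        exact (Finset.abs_sum_le_sum_abs _ _).trans (Finset.sum_le_sum fun i _ => hc2 L hL0 le_rfl i i)
      refine ((abs_add_le _ _).trans (add_le_add s1 s2)).trans ?_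
      simp only [Finset.sum_const, Finset.card_univ, Fintype.card_fin, nsmul_eq_mul]
      have : 2 * (((3 : ℕ) : ℝ) * (D / L * (potC * A * N / (L / 2) ^ 3))) +
          potC * A * N / (L / 2) ^ 2 * (((3 : ℕ) : ℝ) * (D / L ^ 2)) =
          (60 * D) * potC * A * N / L ^ 4 := by
        push_cast; field_simp; ring
      rw [this]
      gcongr
      linarith

/-- Every point of `B(c, 2ⁿr) \ B(c,4r)` lies in a dyadic shell. -/
lemma exists_shell {r d : ℝ} {n : ℕ} (hr : 0 < r) (h4 : 4 * r ≤ d) (hd : d < 2 ^ n * r) :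
    ∃ m, m < n ∧ 2 ≤ m ∧ 2 ^ m * r ≤ d ∧ d < 2 ^ (m + 1) * r := by
  induction n with
  | zero =>
    simp at hd
    linarith
  | succ n ih =>
    by_cases hn : d < 2 ^ n * r
    · obtain ⟨m, h1, h2⟩ := ih hn
      exact ⟨m, by omega, h2⟩
    · push Not at hn
      refine ⟨n, by omega, ?_, hn, hd⟩
      by_contra h
      have : n = 0 ∨ n = 1 := by omega
      rcases this with rfl | rfl <;> norm_num at hd hn <;> linarith


/-- The quadratic term of the pressure identity, tested with the truncated potential. -/
lemma quad_bound : ∃ C : ℝ, 0 < C ∧ ∀ {u : E3 → E3} {Γ : E3 → ℝ} {c : E3} {r N A κ Y : ℝ} {n : ℕ},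
    4 ≤ n → Slice u Γ c r (2 ^ n * r) N A → 0 < κ →
    (∀ m ≤ n, ∫ x in ball c (2 ^ m * r), ‖u x‖ ^ 2 ≤ N ^ 2 * (2 ^ m * r) ^ 3) →
    0 ≤ Y → ∫⁻ x in ball c (4 * r), ‖u x‖ₑ ^ 4 ≤ ENNReal.ofReal (r * Y ^ 2) → ∀ i j,
    |∫ x, u x i * u x j * pd i (pd j (fun y => cutoff c (2 ^ n * r) y * pot κ (2 ^ n * r) u Γ y)) x|
      ≤ C * A * (N * Y / r ^ 2 + N ^ 3 / r) := by
  obtain ⟨C1, hC1, hb⟩ := cutPot_bounds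
  obtain ⟨C2, hC2, hh⟩ := pot_hess
  refine ⟨√C2 + 16 * C1, by positivity, fun {u Γ c r N A κ Y n} hn h hκ hm hY h4 i j => ?_⟩
  have hr := h.hr
  have hA := h.hA
  have hN := h.hN
  have h16 : 16 * r ≤ 2 ^ n * r := by
    have : (2:ℝ) ^ 4 ≤ 2 ^ n := pow_le_pow_right₀ (by norm_num) hn
    nlinarith
  set L := 2 ^ n * r with hL
  have hL0 : 0 < L := h.hL
  set φ := fun y => cutoff c L y * pot κ L u Γ y with hφ
  have hφs : Smooth φ := (cutoff_smooth _ _).mul (h.pot_smooth hκ)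
  have hφt : tsupport φ ⊆ ball c L := tsupport_mul_subset_left.trans (tsupport_cutoff' hL0)
  set W : ℕ → ℝ≥0∞ := fun m => ENNReal.ofReal (C1 * A * N / (2 ^ m * r) ^ 4) with hW
  -- the near part will be estimated by `pot_hess`, the rest shell by shell with the `d⁻⁴` decay
  have hpt : ∀ x, ‖u x i * u x j * pd i (pd j φ) x‖ₑ ≤
      (ball c (4 * r)).indicator (fun x => ‖u x‖ₑ ^ 2 * ‖pd i (pd j (pot κ L u Γ)) x‖ₑ) x +
      ∑ m ∈ Finset.range n, (ball c (2 ^ (m + 1) * r)).indicator (fun x => W m * ‖u x‖ₑ ^ 2) x := by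
    intro x
    have hu : ‖u x i * u x j‖ₑ ≤ ‖u x‖ₑ ^ 2 := by
      rw [← ofReal_norm, ← ofReal_norm, ← ENNReal.ofReal_pow (norm_nonneg _)]
      exact ENNReal.ofReal_le_ofReal (abs_mul_coord_le _ _ _)
    rw [enorm_mul]
    by_cases hx4 : dist x c < 4 * r
    · rw [indicator_of_mem (mem_ball.2 hx4)]
      refine le_add_right ?_
      have : φ =ᶠ[𝓝 x] pot κ L u Γ := by
        filter_upwards [isOpen_ball.mem_nhds (mem_ball.2 hx4)] with y hy
        rw [hφ]; simp only
        rw [cutoff_one hL0 (by have := mem_ball.1 hy; linarith), one_mul]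
      rw [pd_congr (pd_eventuallyEq this j)]
      gcongr
    by_cases hxL : dist x c < L
    · push Not at hx4
      obtain ⟨m, h1, h2, h3, h5⟩ := exists_shell hr hx4 hxL
      refine le_add_left (le_trans ?_ (Finset.single_le_sum
        (f := fun m => (ball c (2 ^ (m + 1) * r)).indicator (fun x => W m * ‖u x‖ₑ ^ 2) x)
        (fun _ _ => zero_le) (Finset.mem_range.2 h1)))
      simp only
      rw [indicator_of_mem (mem_ball.2 h5), mul_comm (W m)]
      refine mul_le_mul' hu ?_
      rw [← ofReal_norm]
      refine ENNReal.ofReal_le_ofReal ((hb h hκ (by linarith) x hxL).1 _ ?_ h3 i j)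
      have : (2:ℝ) ^ 2 ≤ 2 ^ m := pow_le_pow_right₀ (by norm_num) h2
      nlinarith
    · have : pd i (pd j φ) x = 0 :=
        pd_eq_zero (fun hh => hxL (mem_ball.1 (hφt (tsupport_pd j φ hh)))) i
      rw [this]; simp
  have mu2 : Measurable fun x => ‖u x‖ₑ ^ 2 := h.meas.enorm.pow_const 2
  have mH : Measurable fun x => ‖pd i (pd j (pot κ L u Γ)) x‖ₑ :=
    (((h.pot_smooth hκ).pd j).pd i).cont.measurable.enorm
  have t1 : ∫⁻ x in ball c (4 * r), ‖u x‖ₑ ^ 2 * ‖pd i (pd j (pot κ L u Γ)) x‖ₑ ≤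
      ENNReal.ofReal (√C2 * A * (N * Y / r ^ 2)) := by
    rw [← ENNReal.pow_le_pow_left_iff two_ne_zero]
    refine (lintegral_mul_sq_le mu2.aemeasurable mH.aemeasurable).trans ?_
    have e : ∀ x, (‖u x‖ₑ ^ 2) ^ 2 = ‖u x‖ₑ ^ 4 := fun x => by rw [← pow_mul]
    simp only [e]
    refine (mul_le_mul' h4 (hh h hκ (by linarith) i j)).trans (le_of_eq ?_)
    rw [← ENNReal.ofReal_mul (by positivity), ← ENNReal.ofReal_pow (by positivity)]
    congr 1
    rw [mul_pow, mul_pow, Real.sq_sqrt hC2.le]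
    field_simp
  have t2 : ∀ m ∈ Finset.range n, ∫⁻ x in ball c (2 ^ (m + 1) * r), W m * ‖u x‖ₑ ^ 2 ≤
      ENNReal.ofReal (8 * C1 * A * N ^ 3 / r * (1 / 2) ^ m) := by
    intro m hmn
    have hmn' : m + 1 ≤ n := Finset.mem_range.1 hmn
    rw [lintegral_const_mul _ mu2]
    have e : ∫⁻ x in ball c (2 ^ (m + 1) * r), ‖u x‖ₑ ^ 2 =
        ENNReal.ofReal (∫ x in ball c (2 ^ (m + 1) * r), ‖u x‖ ^ 2) := by
      rw [ofReal_integral_eq_lintegral_ofReal (h.int.mono_set (ball_subset_ball ?_))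
        (Eventually.of_forall fun x => by positivity)]
      · congr 1; ext x
        rw [← ofReal_norm, ENNReal.ofReal_pow (norm_nonneg _)]
      · rw [hL]
        have : (2:ℝ) ^ (m + 1) ≤ 2 ^ n := pow_le_pow_right₀ (by norm_num) hmn'
        gcongr
    rw [e, ← ENNReal.ofReal_mul (by positivity)]
    refine ENNReal.ofReal_le_ofReal ((mul_le_mul_of_nonneg_left (hm _ hmn') (by positivity)).trans (le_of_eq ?_))
    have : (2:ℝ) ^ m * (1 / 2) ^ m = 1 := by rw [← mul_pow]; norm_num
    have h2m : (1 / 2 : ℝ) ^ m = 1 / 2 ^ m := by rw [one_div_pow]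
    rw [h2m, pow_succ]
    field_simp
    ring
  have key : ‖∫ x, u x i * u x j * pd i (pd j φ) x‖ₑ ≤
      ENNReal.ofReal (√C2 * A * (N * Y / r ^ 2) + 16 * C1 * A * N ^ 3 / r) := by
    refine (enorm_integral_le_lintegral_enorm _).trans ((lintegral_mono hpt).trans ?_)
    have mm : Measurable fun x => ‖u x‖ₑ ^ 2 * ‖pd i (pd j (pot κ L u Γ)) x‖ₑ := mu2.mul mH
    rw [lintegral_add_left (mm.indicator measurableSet_ball),
      lintegral_finsetSum _ fun m _ => (mu2.const_mul _).indicator measurableSet_ball,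
      lintegral_indicator measurableSet_ball, ENNReal.ofReal_add (by positivity) (by positivity)]
    refine add_le_add t1 ?_
    simp_rw [lintegral_indicator measurableSet_ball]
    refine (Finset.sum_le_sum t2).trans ?_
    rw [← ENNReal.ofReal_sum_of_nonneg fun m _ => by positivity, ← Finset.mul_sum]
    refine ENNReal.ofReal_le_ofReal ?_
    have hgeo : ∑ m ∈ Finset.range n, (1 / 2 : ℝ) ^ m ≤ 2 := by
      have := sum_geometric_two_le n
      simpa using this
    calc 8 * C1 * A * N ^ 3 / r * ∑ m ∈ Finset.range n, (1 / 2 : ℝ) ^ m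
        ≤ 8 * C1 * A * N ^ 3 / r * 2 := by gcongr
      _ = _ := by ring
  rw [← ofReal_norm] at key
  have key2 := (ENNReal.ofReal_le_ofReal_iff (by positivity)).1 key
  rw [Real.norm_eq_abs] at key2
  refine key2.trans ?_
  have hX : 0 ≤ A * (N * Y / r ^ 2) := by positivity
  have hZ : 0 ≤ A * (N ^ 3 / r) := by positivity
  have hs := Real.sqrt_nonneg C2
  have e1 : 16 * C1 * A * N ^ 3 / r = 16 * C1 * (A * (N ^ 3 / r)) := by ring
  rw [e1]
  nlinarith [mul_nonneg hs hZ, mul_nonneg hC1.le hX]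

/-! ### The pressure estimate on a time slice -/

lemma Slice.dens_l3 {u : E3 → E3} {Γ : E3 → ℝ} {c : E3} {r L N A : ℝ} (h : Slice u Γ c r L N A)
    (h4 : ∫⁻ x in ball c (4 * r), ‖u x‖ₑ ^ 4 < ⊤) : MemLp (dens u Γ) 3 := by
  have hr := h.hr
  have : IsFiniteMeasure ((volume : Measure E3).restrict (ball c r)) :=
    ⟨by rw [Measure.restrict_apply_univ]; exact measure_ball_lt_top⟩
  have hu4 : MemLp u 4 (volume.restrict (ball c r)) := by
    refine ⟨h.meas.aestronglyMeasurable, ?_⟩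
    rw [eLpNorm_lt_top_iff_lintegral_rpow_enorm_lt_top (by norm_num) (by norm_num)]
    refine lt_of_le_of_lt (lintegral_mono_set (ball_subset_ball (by linarith : r ≤ 4 * r))) ?_
    simpa using h4
  have hd : MemLp (dens u Γ) 3 (volume.restrict (ball c r)) :=
    ((hu4.mono_exponent (by norm_num : (3:ℝ≥0∞) ≤ 4))).of_le_mul h.dens_meas.aestronglyMeasurable
      (Eventually.of_forall h.dens_le)
  rw [← memLp_indicator_iff_restrict measurableSet_ball] at hd
  convert hd using 1
  ext x
  by_cases hx : x ∈ ball c r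
  · rw [indicator_of_mem hx]
  · rw [indicator_of_notMem hx, h.dens_supp hx]

/-- The pressure estimate on a time slice. The pressure, which solves `-Δp = ∂ᵢ∂ⱼ(uᵢuⱼ)`, is
tested with the truncated regularised Newtonian potential of `u·∇Γ`. -/
lemma pressure_slice : ∃ C : ℝ, 0 < C ∧ ∀ {u : E3 → E3} {p Γ : E3 → ℝ} {c : E3} {r N A Y : ℝ}
    {n : ℕ}, 4 ≤ n → Slice u Γ c r (2 ^ n * r) N A →
    (∀ m ≤ n, ∫ x in ball c (2 ^ m * r), ‖u x‖ ^ 2 ≤ N ^ 2 * (2 ^ m * r) ^ 3) →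
    0 ≤ Y → ∫⁻ x in ball c (4 * r), ‖u x‖ₑ ^ 4 ≤ ENNReal.ofReal (r * Y ^ 2) →
    Measurable p → MemLp p (3 / 2) (volume.restrict (ball c (2 ^ n * r))) →
    (∀ ψ : E3 → ℝ, Smooth ψ → HasCompactSupport ψ → tsupport ψ ⊆ ball c (2 ^ n * r) →
      ∫ x, p x * lapScalar ψ x = - ∑ i, ∑ j, ∫ x, u x i * u x j * pd i (pd j ψ) x) →
    |∫ x, p x * dens u Γ x| ≤ C * A * (N * Y / r ^ 2 + N ^ 3 / r +
      N / (2 ^ n * r) ^ 4 * ∫ x in ball c (2 ^ n * r), |p x|) := by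
  obtain ⟨C1, hC1, hb⟩ := cutPot_bounds
  obtain ⟨C2, hC2, hq⟩ := quad_bound
  have hm := newtMass_pos
  refine ⟨(C1 + 9 * C2) / newtMass, by positivity,
    fun {u p Γ c r N A Y n} hn h hmn hY h4 hpm hp hpe => ?_⟩
  have hr := h.hr
  have hA := h.hA
  have hN := h.hN
  have h16 : 16 * r ≤ 2 ^ n * r := by
    have : (2:ℝ) ^ 4 ≤ 2 ^ n := pow_le_pow_right₀ (by norm_num) hn
    nlinarith
  have hqq := fun κ (hκ : 0 < κ) i j => hq hn h hκ hmn hY h4 i j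
  set L := 2 ^ n * r with hL
  have hL0 : 0 < L := h.hL
  set χ := cutoff c L with hχ
  have hχs : Smooth χ := cutoff_smooth _ _
  have hχt : tsupport χ ⊆ ball c L := tsupport_cutoff' hL0
  have : IsFiniteMeasure ((volume : Measure E3).restrict (ball c L)) :=
    ⟨by rw [Measure.restrict_apply_univ]; exact measure_ball_lt_top⟩
  have h32 : (1:ℝ≥0∞) ≤ 3 / 2 := by
    rw [ENNReal.le_div_iff_mul_le (by norm_num) (by norm_num)]; norm_num
  have hpi : IntegrableOn p (ball c L) := hp.integrable h32
  set I := ∫ x in ball c L, |p x| with hI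
  have hI0 : 0 ≤ I := integral_nonneg fun x => abs_nonneg _
  set g := dens u Γ with hg
  set P : E3 → ℝ := fun x => p x * χ x with hP
  have hPm : Measurable P := hpm.mul hχs.cont.measurable
  have hP32 : MemLp P (3/2) := by
    have h1 : MemLp P (3/2) (volume.restrict (ball c L)) := by
      refine hp.of_le hPm.aestronglyMeasurable (Eventually.of_forall fun x => ?_)
      rw [norm_mul]
      refine mul_le_of_le_one_right (norm_nonneg _) ?_
      rw [Real.norm_of_nonneg (cutoff_nonneg _ _ _)]
      exact cutoff_le_one _ _ _
    rw [← memLp_indicator_iff_restrict measurableSet_ball] at h1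
    convert h1 using 1
    ext x
    by_cases hx : x ∈ ball c L
    · rw [indicator_of_mem hx]
    · rw [indicator_of_notMem hx, hP]
      simp only
      rw [image_eq_zero_of_notMem_tsupport (fun hh => hx (hχt hh)), mul_zero]
  have hPi : Integrable P := integrable_mul_test hpi hχs.cont (compact_cutoff hL0) hχt
  -- the estimate is uniform in the regularisation `κ`
  have hbound : ∀ κ, 0 < κ → |∫ x, P x * conv (newtRho κ) g x| ≤
      (C1 + 9 * C2) * A * (N * Y / r ^ 2 + N ^ 3 / r + N / L ^ 4 * I) := by
    intro κ hκ
    set φ := fun y => χ y * pot κ L u Γ y with hφ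
    have hφs : Smooth φ := hχs.mul (h.pot_smooth hκ)
    have hφc : HasCompactSupport φ := (compact_cutoff hL0).mul_right
    have hφt : tsupport φ ⊆ ball c L := tsupport_mul_subset_left.trans hχt
    have i1 : Integrable fun x => p x * lapScalar φ x :=
      integrable_mul_test hpi (smooth_lap hφs).cont (compact_lap hφc) ((tsupport_lap φ).trans hφt)
    have i2 : Integrable fun x => P x * conv (newtRho κ) g x := by
      have := integrable_mul_test (φ := fun x => χ x * conv (newtRho κ) g x) hpi
        (hχs.cont.mul (conv_rho_cont hκ h.dens_int)) (compact_cutoff hL0).mul_right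
        (tsupport_mul_subset_left.trans hχt)
      refine this.congr (Eventually.of_forall fun x => ?_)
      simp only [hP]; ring
    -- the pressure equation tested with `φ` trades `∫ p Δφ` for the quadratic term
    have e : ∫ x, P x * conv (newtRho κ) g x =
        (∫ x, (p x * lapScalar φ x + P x * conv (newtRho κ) g x)) +
          ∑ i, ∑ j, ∫ x, u x i * u x j * pd i (pd j φ) x := by
      rw [integral_add i1 i2, hpe φ hφs hφc hφt]; ring
    have s1 : |∫ x, (p x * lapScalar φ x + P x * conv (newtRho κ) g x)| ≤ C1 * A * N / L ^ 4 * I := by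
      have hle : ∀ x, ‖p x * lapScalar φ x + P x * conv (newtRho κ) g x‖ ≤
          (ball c L).indicator (fun x => C1 * A * N / L ^ 4 * |p x|) x := by
        intro x
        by_cases hx : x ∈ ball c L
        · rw [indicator_of_mem hx]
          have := (hb h hκ (by linarith) x (mem_ball.1 hx)).2
          have e2 : p x * lapScalar φ x + P x * conv (newtRho κ) g x =
              (lapScalar φ x + χ x * conv (newtRho κ) g x) * p x := by simp only [hP]; ring
          rw [e2, norm_mul]
          exact mul_le_mul_of_nonneg_right this (norm_nonneg _)
        · rw [indicator_of_notMem hx]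
          have h1 : χ x = 0 := image_eq_zero_of_notMem_tsupport fun hh => hx (hχt hh)
          have h2 : lapScalar φ x = 0 :=
            image_eq_zero_of_notMem_tsupport fun hh => hx (hφt (tsupport_lap φ hh))
          simp [hP, h1, h2]
      refine (norm_integral_le_of_norm_le ?_ (Eventually.of_forall hle)).trans (le_of_eq ?_)
      · exact (IntegrableOn.integrable_indicator (hpi.abs.const_mul _) measurableSet_ball)
      · rw [integral_indicator measurableSet_ball, integral_const_mul]
    have s2 : |∑ i, ∑ j, ∫ x, u x i * u x j * pd i (pd j φ) x| ≤
        ∑ _i : Fin 3, ∑ _j : Fin 3, C2 * A * (N * Y / r ^ 2 + N ^ 3 / r) :=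
      (Finset.abs_sum_le_sum_abs _ _).trans (Finset.sum_le_sum fun i _ =>
        (Finset.abs_sum_le_sum_abs _ _).trans (Finset.sum_le_sum fun j _ => hqq κ hκ i j))
    rw [e]
    refine (abs_add_le _ _).trans ((add_le_add s1 s2).trans ?_)
    simp only [Finset.sum_const, Finset.card_univ, Fintype.card_fin, nsmul_eq_mul]
    have a1 : 0 ≤ A * (N * Y / r ^ 2 + N ^ 3 / r) := by positivity
    have a2 : 0 ≤ A * (N / L ^ 4 * I) := by positivity
    have e3 : C1 * A * N / L ^ 4 * I = C1 * (A * (N / L ^ 4 * I)) := by ring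
    rw [e3]
    push_cast
    nlinarith [mul_nonneg hC1.le a1, mul_nonneg hC2.le a2]
  -- `κ → 0`: here `P ∈ L^{3/2}`, and `u·∇Γ ∈ L³` because `u ∈ L⁴` near the support of `Γ`
  have hlim := conv_rho_limit hPm h.dens_meas hP32 hPi (h.dens_l3 (h4.trans_lt ENNReal.ofReal_lt_top))
    h.dens_int (κ := fun n => 1 / ((n : ℝ) + 1)) (fun n => by positivity)
    tendsto_one_div_add_atTop_nhds_zero_nat
  have hfin := le_of_tendsto hlim.abs (Eventually.of_forall fun n => hbound _ (by positivity))
  have e4 : ∫ x, P x * dens u Γ x = ∫ x, p x * dens u Γ x := by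
    congr 1; ext x
    by_cases hx : x ∈ ball c r
    · have : χ x = 1 := cutoff_one hL0 (by have := mem_ball.1 hx; linarith)
      simp only [hP, this, mul_one]
    · rw [h.dens_supp hx, mul_zero, mul_zero]
  rw [e4, abs_mul, abs_of_pos hm] at hfin
  have : (C1 + 9 * C2) / newtMass * A * (N * Y / r ^ 2 + N ^ 3 / r + N / L ^ 4 * I) =
    ((C1 + 9 * C2) * A * (N * Y / r ^ 2 + N ^ 3 / r + N / L ^ 4 * I)) / newtMass := by ring
  rw [this, le_div_iff₀ hm, mul_comm]
  exact hfin

/-! ### Integrability of suitable weak solutions -/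

/-- The time interval of the cylinder. -/
def tI (t₀ r : ℝ) : Set ℝ := Ioo (t₀ - r ^ 2) t₀

lemma vol_cyl (x₀ : E3) (t₀ r : ℝ) : (volume : Measure (E3 × ℝ)).restrict (pCyl x₀ t₀ r) =
    ((volume : Measure E3).restrict (ball x₀ r)).prod ((volume : Measure ℝ).restrict (tI t₀ r)) := by
  rw [pCyl, Measure.volume_eq_prod, Measure.prod_restrict, tI]

lemma meas_pCyl (x₀ : E3) (t₀ r : ℝ) : MeasurableSet (pCyl x₀ t₀ r) :=
  measurableSet_ball.prod measurableSet_Ioo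

lemma isOpen_pCyl (x₀ : E3) (t₀ r : ℝ) : IsOpen (pCyl x₀ t₀ r) := isOpen_ball.prod isOpen_Ioo

lemma lintegral_cyl {x₀ : E3} {t₀ r : ℝ} {F : E3 × ℝ → ℝ≥0∞} (hF : Measurable F) :
    ∫⁻ z in pCyl x₀ t₀ r, F z = ∫⁻ t in tI t₀ r, ∫⁻ x in ball x₀ r, F (x, t) := by
  rw [vol_cyl, lintegral_prod_symm' _ hF]

lemma slice_integrable {x₀ : E3} {t₀ r : ℝ} {F : E3 × ℝ → ℝ} (hF : IntegrableOn F (pCyl x₀ t₀ r)) :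
    ∀ᵐ t ∂(volume.restrict (tI t₀ r)), IntegrableOn (fun x => F (x, t)) (ball x₀ r) := by
  rw [IntegrableOn, vol_cyl] at hF
  exact hF.prod_left_ae

/-- Fubini for an integrable function supported in the cylinder. -/
lemma integral_cyl {x₀ : E3} {t₀ r : ℝ} {F : E3 × ℝ → ℝ} (hF : Integrable F)
    (h0 : ∀ z, z ∉ pCyl x₀ t₀ r → F z = 0) :
    ∫ t in tI t₀ r, ∫ x, F (x, t) = ∫ z, F z := by
  rw [Measure.volume_eq_prod, integral_prod_symm _ (by rwa [← Measure.volume_eq_prod])]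
  refine setIntegral_eq_integral_of_forall_compl_eq_zero fun t ht => ?_
  have : ∀ x, F (x, t) = 0 := fun x => h0 _ fun hh => ht hh.2
  simp [this]

lemma finite_cyl (x₀ : E3) (t₀ r : ℝ) :
    IsFiniteMeasure ((volume : Measure (E3 × ℝ)).restrict (pCyl x₀ t₀ r)) := by
  rw [vol_cyl]
  have : IsFiniteMeasure ((volume : Measure E3).restrict (ball x₀ r)) :=
    ⟨by rw [Measure.restrict_apply_univ]; exact measure_ball_lt_top⟩
  have : IsFiniteMeasure ((volume : Measure ℝ).restrict (tI t₀ r)) :=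
    ⟨by rw [Measure.restrict_apply_univ]; exact measure_Ioo_lt_top⟩
  infer_instance

lemma gradSq_nonneg (dv : E3 → ℝ → Fin 3 → E3) (x : E3) (t : ℝ) : 0 ≤ gradSq dv x t :=
  Finset.sum_nonneg fun _ _ => sq_nonneg _

namespace IsSuitableWeakSolution
variable {v : E3 → ℝ → E3} {q : E3 → ℝ → ℝ} {dv : E3 → ℝ → Fin 3 → E3} {x₀ : E3} {t₀ r : ℝ}

lemma mv (h : IsSuitableWeakSolution v q dv x₀ t₀ r) : Measurable fun z : E3 × ℝ => v z.1 z.2 := h.meas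
lemma mq (h : IsSuitableWeakSolution v q dv x₀ t₀ r) : Measurable fun z : E3 × ℝ => q z.1 z.2 := h.meas_q
lemma mdv (h : IsSuitableWeakSolution v q dv x₀ t₀ r) (j : Fin 3) :
    Measurable fun z : E3 × ℝ => dv z.1 z.2 j := (measurable_pi_apply j).comp h.meas_dv
lemma mvi (h : IsSuitableWeakSolution v q dv x₀ t₀ r) (i : Fin 3) :
    Measurable fun z : E3 × ℝ => v z.1 z.2 i :=
  (EuclideanSpace.proj i : E3 →L[ℝ] ℝ).continuous.measurable.comp h.mv
lemma mdvi (h : IsSuitableWeakSolution v q dv x₀ t₀ r) (j i : Fin 3) :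
    Measurable fun z : E3 × ℝ => dv z.1 z.2 j i :=
  (EuclideanSpace.proj i : E3 →L[ℝ] ℝ).continuous.measurable.comp (h.mdv j)
lemma mgrad (h : IsSuitableWeakSolution v q dv x₀ t₀ r) :
    Measurable fun z : E3 × ℝ => gradSq dv z.1 z.2 :=
  Finset.measurable_sum _ fun j _ => (h.mdv j).norm.pow_const 2

lemma slice_v (h : IsSuitableWeakSolution v q dv x₀ t₀ r) (t : ℝ) : Measurable fun x => v x t :=
  h.mv.comp (measurable_id.prodMk measurable_const)
lemma slice_q (h : IsSuitableWeakSolution v q dv x₀ t₀ r) (t : ℝ) : Measurable fun x => q x t :=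
  h.mq.comp (measurable_id.prodMk measurable_const)
lemma svi (h : IsSuitableWeakSolution v q dv x₀ t₀ r) (t : ℝ) (i : Fin 3) :
    Measurable fun x => v x t i :=
  (h.mvi i).comp (measurable_id.prodMk measurable_const)
lemma sdvi (h : IsSuitableWeakSolution v q dv x₀ t₀ r) (t : ℝ) (j i : Fin 3) :
    Measurable fun x => dv x t j i :=
  (h.mdvi j i).comp (measurable_id.prodMk measurable_const)
lemma sgrad (h : IsSuitableWeakSolution v q dv x₀ t₀ r) (t : ℝ) : Measurable fun x => gradSq dv x t := by
  have : Measurable ((fun z : E3 × ℝ => gradSq dv z.1 z.2) ∘ fun x => (x, t)) :=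
    h.mgrad.comp (by fun_prop)
  exact this

lemma int_v2 (h : IsSuitableWeakSolution v q dv x₀ t₀ r) :
    IntegrableOn (fun z : E3 × ℝ => ‖v z.1 z.2‖ ^ 2) (pCyl x₀ t₀ r) := by
  refine ⟨(h.mv.norm.pow_const 2).aestronglyMeasurable, ?_⟩
  rw [hasFiniteIntegral_iff_enorm, lintegral_cyl (h.mv.norm.pow_const 2).enorm]
  obtain ⟨C, hC, hb⟩ := h.linf_l2
  calc ∫⁻ t in tI t₀ r, ∫⁻ x in ball x₀ r, ‖‖v x t‖ ^ 2‖ₑ ≤ ∫⁻ _t in tI t₀ r, C := by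
        refine lintegral_mono_ae (hb.mono fun t ht => le_trans (le_of_eq ?_) ht)
        refine lintegral_congr fun x => ?_
        rw [enorm_pow, enorm_norm]; rfl
    _ < ⊤ := by
        rw [setLIntegral_const]
        exact ENNReal.mul_lt_top hC measure_Ioo_lt_top

lemma int_grad (h : IsSuitableWeakSolution v q dv x₀ t₀ r) :
    IntegrableOn (fun z : E3 × ℝ => gradSq dv z.1 z.2) (pCyl x₀ t₀ r) := by
  refine ⟨h.mgrad.aestronglyMeasurable, ?_⟩
  rw [hasFiniteIntegral_iff_ofReal (Eventually.of_forall fun z => gradSq_nonneg _ _ _),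
    lintegral_cyl h.mgrad.ennreal_ofReal]
  exact h.grad_l2

lemma int_v1 (h : IsSuitableWeakSolution v q dv x₀ t₀ r) :
    IntegrableOn (fun z : E3 × ℝ => ‖v z.1 z.2‖) (pCyl x₀ t₀ r) := by
  have := finite_cyl x₀ t₀ r
  have hf : IntegrableOn (fun z : E3 × ℝ => 1 + ‖v z.1 z.2‖ ^ 2) (pCyl x₀ t₀ r) :=
    (integrable_const _).add h.int_v2
  refine hf.mono' h.mv.norm.aestronglyMeasurable (Eventually.of_forall fun z => ?_)
  rw [norm_norm]; nlinarith [sq_nonneg (‖v z.1 z.2‖ - 1)]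

lemma int_vi (h : IsSuitableWeakSolution v q dv x₀ t₀ r) (i : Fin 3) :
    IntegrableOn (fun z : E3 × ℝ => v z.1 z.2 i) (pCyl x₀ t₀ r) :=
  h.int_v1.mono' (h.mvi i).aestronglyMeasurable (Eventually.of_forall fun z => abs_coord_le _ i)

lemma int_vij (h : IsSuitableWeakSolution v q dv x₀ t₀ r) (i j : Fin 3) :
    IntegrableOn (fun z : E3 × ℝ => v z.1 z.2 i * v z.1 z.2 j) (pCyl x₀ t₀ r) :=
  h.int_v2.mono' ((h.mvi i).mul (h.mvi j)).aestronglyMeasurable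
    (Eventually.of_forall fun z => abs_mul_coord_le _ i j)

lemma int_dvi (h : IsSuitableWeakSolution v q dv x₀ t₀ r) (j i : Fin 3) :
    IntegrableOn (fun z : E3 × ℝ => dv z.1 z.2 j i) (pCyl x₀ t₀ r) := by
  have := finite_cyl x₀ t₀ r
  have hf : IntegrableOn (fun z : E3 × ℝ => 1 + gradSq dv z.1 z.2) (pCyl x₀ t₀ r) :=
    (integrable_const _).add h.int_grad
  refine hf.mono' (h.mdvi j i).aestronglyMeasurable (Eventually.of_forall fun z => ?_)
  have h1 : ‖dv z.1 z.2 j‖ ^ 2 ≤ gradSq dv z.1 z.2 :=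
    Finset.single_le_sum (f := fun j => ‖dv z.1 z.2 j‖ ^ 2) (fun _ _ => sq_nonneg _) (Finset.mem_univ j)
  have h2 := abs_coord_le (dv z.1 z.2 j) i
  rw [Real.norm_eq_abs]
  nlinarith [sq_nonneg (‖dv z.1 z.2 j‖ - 1)]

lemma abs_le_one_add_rpow (y : ℝ) : |y| ≤ 1 + |y| ^ ((3:ℝ)/2) := by
  rcases le_total |y| 1 with h | h
  · have : 0 ≤ |y| ^ ((3:ℝ)/2) := by positivity
    linarith
  · have : |y| ^ (1:ℝ) ≤ |y| ^ ((3:ℝ)/2) := Real.rpow_le_rpow_of_exponent_le h (by norm_num)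
    rw [Real.rpow_one] at this
    linarith

lemma int_q32 (h : IsSuitableWeakSolution v q dv x₀ t₀ r) :
    IntegrableOn (fun z : E3 × ℝ => |q z.1 z.2| ^ ((3:ℝ)/2)) (pCyl x₀ t₀ r) := by
  refine ⟨(h.mq.abs.pow_const _).aestronglyMeasurable, ?_⟩
  rw [hasFiniteIntegral_iff_ofReal (Eventually.of_forall fun _ => by positivity)]
  exact h.q_l32

lemma int_q (h : IsSuitableWeakSolution v q dv x₀ t₀ r) :
    IntegrableOn (fun z : E3 × ℝ => q z.1 z.2) (pCyl x₀ t₀ r) := by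
  have := finite_cyl x₀ t₀ r
  have hf : IntegrableOn (fun z : E3 × ℝ => 1 + |q z.1 z.2| ^ ((3:ℝ)/2)) (pCyl x₀ t₀ r) :=
    (integrable_const _).add h.int_q32
  exact hf.mono' h.mq.aestronglyMeasurable (Eventually.of_forall fun _ => abs_le_one_add_rpow _)

/-- Smooth product test functions `η(t)ψ(x)`. -/
lemma prod_smooth {ψ : E3 → ℝ} {η : ℝ → ℝ} (hψ : Smooth ψ) (hη : ContDiff ℝ (⊤ : ℕ∞) η) :
    ContDiff ℝ (⊤ : ℕ∞) (fun p : E3 × ℝ => η p.2 * ψ p.1) :=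
  (hη.comp contDiff_snd).mul (ContDiff.comp (g := ψ) hψ contDiff_fst)

lemma prod_tsupport {ψ : E3 → ℝ} {η : ℝ → ℝ} :
    tsupport (fun p : E3 × ℝ => η p.2 * ψ p.1) ⊆ tsupport ψ ×ˢ tsupport η := by
  refine closure_minimal ?_ ((isClosed_tsupport _).prod (isClosed_tsupport _))
  intro p hp
  have := mul_ne_zero_iff.1 hp
  exact ⟨subset_tsupport _ this.2, subset_tsupport _ this.1⟩

/-- The distributional divergence equation holds pointwise for the weak gradient. -/
lemma trace_zero (h : IsSuitableWeakSolution v q dv x₀ t₀ r) :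
    ∀ᵐ z ∂(volume : Measure (E3 × ℝ)), z ∈ pCyl x₀ t₀ r → ∑ i, dv z.1 z.2 i i = 0 := by
  have hint : IntegrableOn (fun z : E3 × ℝ => ∑ i, dv z.1 z.2 i i) (pCyl x₀ t₀ r) :=
    integrable_finsetSum _ fun i _ => h.int_dvi i i
  refine IsOpen.ae_eq_zero_of_integral_contDiff_smul_eq_zero (isOpen_pCyl _ _ _)
    (hint.locallyIntegrableOn) fun g hg hgc hgs => ?_
  have hd := h.div_free (fun x t => g (x, t)) hg hgc hgs
  simp only [smul_eq_mul]
  have i1 : Integrable fun z : E3 × ℝ => g z * ∑ i, dv z.1 z.2 i i := by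
    have := integrable_mul_test hint hg.continuous hgc hgs
    exact this.congr (Eventually.of_forall fun z => mul_comm _ _)
  rw [← integral_cyl i1 fun z hz => by
    rw [image_eq_zero_of_notMem_tsupport fun hh => hz (hgs hh), zero_mul]]
  rw [← neg_eq_zero, ← integral_neg, ← hd]
  refine integral_congr_ae ?_
  have hs : ∀ t, Smooth fun y => g (y, t) := fun t =>
    ContDiff.comp (g := g) hg (contDiff_id.prodMk contDiff_const)
  have hcl : ∀ t, tsupport (fun y => g (y, t)) ⊆ (fun y => (y, t)) ⁻¹' tsupport g := fun t =>
    closure_minimal (fun y hy => subset_tsupport _ hy)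
      ((isClosed_tsupport g).preimage (by fun_prop))
  have hc : ∀ t, HasCompactSupport fun y => g (y, t) := by
    intro t
    refine HasCompactSupport.intro (hgc.isCompact.image continuous_fst) fun y hy => ?_
    by_contra hh
    exact hy ⟨(y, t), subset_tsupport _ hh, rfl⟩
  have hv : ∀ i, ∀ᵐ t ∂(volume.restrict (tI t₀ r)), IntegrableOn (fun x => v x t i) (ball x₀ r) :=
    fun i => slice_integrable (h.int_vi i)
  have hdv : ∀ i, ∀ᵐ t ∂(volume.restrict (tI t₀ r)), IntegrableOn (fun x => dv x t i i) (ball x₀ r) :=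
    fun i => slice_integrable (h.int_dvi i i)
  filter_upwards [h.weak_grad, ae_all_iff.2 hv, ae_all_iff.2 hdv] with t ht hvt hdvt
  have hsub : tsupport (fun y => g (y, t)) ⊆ ball x₀ r := fun y hy => (hgs (hcl t hy)).1
  have j1 : ∀ i ∈ Finset.univ, Integrable fun x => v x t i * pd i (fun y => g (y, t)) x := fun i _ =>
    integrable_mul_test (hvt i) ((hs t).pd i).cont (compact_pd (hc t) i) ((tsupport_pd i _).trans hsub)
  have j2 : ∀ i ∈ Finset.univ, Integrable fun x => dv x t i i * g (x, t) := fun i _ =>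
    integrable_mul_test (hdvt i) (hs t).cont (hc t) hsub
  have e1 := integral_finsetSum Finset.univ j1
  have e2 := integral_finsetSum Finset.univ j2
  simp only [pd] at e1
  rw [e1]
  have e3 : ∫ x, g (x, t) * ∑ i, dv x t i i = ∑ i, ∫ x, dv x t i i * g (x, t) := by
    rw [← e2]; congr 1; ext x; rw [mul_comm, Finset.sum_mul]
  rw [e3, ← Finset.sum_neg_distrib]
  refine Finset.sum_congr rfl fun i _ => ?_
  exact (ht _ (hs t) (hc t) hsub i i).symm

end IsSuitableWeakSolution

/-! ### Divergence and pressure equations on slices, one test at a time -/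

lemma ae_slice {x₀ : E3} {t₀ r : ℝ} {p : E3 × ℝ → Prop}
    (h : ∀ᵐ z ∂(volume : Measure (E3 × ℝ)), z ∈ pCyl x₀ t₀ r → p z) :
    ∀ᵐ t ∂(volume.restrict (tI t₀ r)), ∀ᵐ x ∂(volume : Measure E3), x ∈ ball x₀ r → p (x, t) := by
  have h1 : ∀ᵐ w ∂((volume : Measure ℝ).prod (volume : Measure E3)), w.swap ∈ pCyl x₀ t₀ r → p w.swap :=
    (Measure.measurePreserving_swap (μ := (volume : Measure ℝ))
      (ν := (volume : Measure E3))).quasiMeasurePreserving.ae h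
  have h2 := Measure.ae_ae_of_ae_prod h1
  rw [tI, ae_restrict_iff' measurableSet_Ioo]
  filter_upwards [h2] with t ht htI
  filter_upwards [ht] with x hx hxb
  exact hx ⟨hxb, htI⟩

/-- The pressure functional `∑ ∫ vᵢvⱼ ∂ᵢ∂ⱼψ + ∫ q Δψ` at time `t`. -/
def presF (v : E3 → ℝ → E3) (q : E3 → ℝ → ℝ) (t : ℝ) (ψ : E3 → ℝ) : ℝ :=
  (∑ i, ∑ j, ∫ x, v x t i * v x t j * pd i (pd j ψ) x) + ∫ x, q x t * lapScalar ψ x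

lemma pd_scalar {f : E3 → ℝ} (c : ℝ) (hf : Smooth f) (i : Fin 3) :
    pd i (fun x => c * f x) = fun x => c * pd i f x :=
  funext fun x => pd_const_mul (hf.diff x) c i

namespace IsSuitableWeakSolution
variable {v : E3 → ℝ → E3} {q : E3 → ℝ → ℝ} {dv : E3 → ℝ → Fin 3 → E3} {x₀ : E3} {t₀ r : ℝ}

/-- Almost every time slice is weakly divergence free. -/
lemma slice_div (h : IsSuitableWeakSolution v q dv x₀ t₀ r) :
    ∀ᵐ t ∂(volume.restrict (tI t₀ r)), ∀ ψ : E3 → ℝ, Smooth ψ → HasCompactSupport ψ →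
      tsupport ψ ⊆ ball x₀ r → ∫ x, ∑ i, v x t i * pd i ψ x = 0 := by
  have hv : ∀ i, ∀ᵐ t ∂(volume.restrict (tI t₀ r)), IntegrableOn (fun x => v x t i) (ball x₀ r) :=
    fun i => slice_integrable (h.int_vi i)
  have hdv : ∀ i, ∀ᵐ t ∂(volume.restrict (tI t₀ r)), IntegrableOn (fun x => dv x t i i) (ball x₀ r) :=
    fun i => slice_integrable (h.int_dvi i i)
  filter_upwards [h.weak_grad, ae_all_iff.2 hv, ae_all_iff.2 hdv, ae_slice h.trace_zero]
    with t ht hvt hdvt htr ψ hψ hc hs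
  have j1 : ∀ i ∈ Finset.univ, Integrable fun x => v x t i * pd i ψ x := fun i _ =>
    integrable_mul_test (hvt i) (hψ.pd i).cont (compact_pd hc i) ((tsupport_pd i _).trans hs)
  have j2 : ∀ i ∈ Finset.univ, Integrable fun x => dv x t i i * ψ x := fun i _ =>
    integrable_mul_test (hdvt i) hψ.cont hc hs
  rw [integral_finsetSum _ j1]
  have : ∀ i, ∫ x, v x t i * pd i ψ x = - ∫ x, dv x t i i * ψ x := fun i => ht ψ hψ hc hs i i
  simp_rw [this]
  rw [Finset.sum_neg_distrib, ← integral_finsetSum _ j2, neg_eq_zero]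
  refine integral_eq_zero_of_ae ?_
  filter_upwards [htr] with x hx
  rw [← Finset.sum_mul]
  by_cases hxb : x ∈ ball x₀ r
  · rw [hx hxb, zero_mul]; rfl
  · rw [image_eq_zero_of_notMem_tsupport (fun hh => hxb (hs hh)), mul_zero]; rfl

/-- The pressure equation for one test function, for almost every time. -/
lemma slice_pres_one (h : IsSuitableWeakSolution v q dv x₀ t₀ r) {ψ : E3 → ℝ} (hψ : Smooth ψ)
    (hc : HasCompactSupport ψ) (hs : tsupport ψ ⊆ ball x₀ r) :
    ∀ᵐ t ∂(volume.restrict (tI t₀ r)), presF v q t ψ = 0 := by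
  have hv : ∀ i, ∀ᵐ t ∂(volume.restrict (tI t₀ r)), IntegrableOn (fun x => v x t i) (ball x₀ r) :=
    fun i => slice_integrable (h.int_vi i)
  have hvv : ∀ i j, ∀ᵐ t ∂(volume.restrict (tI t₀ r)),
      IntegrableOn (fun x => v x t i * v x t j) (ball x₀ r) :=
    fun i j => slice_integrable (h.int_vij i j)
  have hdv : ∀ i j, ∀ᵐ t ∂(volume.restrict (tI t₀ r)), IntegrableOn (fun x => dv x t j i) (ball x₀ r) :=
    fun i j => slice_integrable (h.int_dvi j i)
  have hq : ∀ᵐ t ∂(volume.restrict (tI t₀ r)), IntegrableOn (fun x => q x t) (ball x₀ r) :=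
    slice_integrable h.int_q
  -- the spacetime density of the functional
  set F : E3 × ℝ → ℝ := fun z => (∑ i, ∑ j, v z.1 z.2 i * v z.1 z.2 j * pd i (pd j ψ) z.1) +
    q z.1 z.2 * lapScalar ψ z.1 with hF
  have hbdd : ∀ {f : E3 × ℝ → ℝ} {w : E3 → ℝ}, IntegrableOn f (pCyl x₀ t₀ r) → Continuous w →
      HasCompactSupport w → IntegrableOn (fun z => f z * w z.1) (pCyl x₀ t₀ r) := by
    intro f w hf hw hwc
    obtain ⟨C, -, hC⟩ := exists_bound hw hwc
    exact hf.mul_bdd (hw.comp continuous_fst).aestronglyMeasurable (Eventually.of_forall fun z => hC z.1)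
  have hFi : IntegrableOn F (pCyl x₀ t₀ r) := by
    refine Integrable.add (integrable_finsetSum _ fun i _ => integrable_finsetSum _ fun j _ => ?_) ?_
    · exact hbdd (h.int_vij i j) ((hψ.pd j).pd i).cont (compact_pd (compact_pd hc j) i)
    · exact hbdd h.int_q (smooth_lap hψ).cont (compact_lap hc)
  have hF0 : ∀ z : E3 × ℝ, z.1 ∉ ball x₀ r → F z = 0 := by
    intro z hz
    have h1 : ∀ i j, pd i (pd j ψ) z.1 = 0 := fun i j =>
      pd_eq_zero (fun hh => hz (hs (tsupport_pd j ψ hh))) i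
    have h2 : lapScalar ψ z.1 = 0 :=
      image_eq_zero_of_notMem_tsupport fun hh => hz (hs (tsupport_lap ψ hh))
    simp [hF, h1, h2]
  have hslice : ∀ᵐ t ∂(volume.restrict (tI t₀ r)), ∫ x, F (x, t) = presF v q t ψ := by
    filter_upwards [ae_all_iff.2 fun i => ae_all_iff.2 (hvv i), hq] with t hvt hqt
    have j1 : ∀ i j, Integrable fun x => v x t i * v x t j * pd i (pd j ψ) x := fun i j =>
      integrable_mul_test (hvt i j) ((hψ.pd j).pd i).cont (compact_pd (compact_pd hc j) i)
        ((tsupport_pd i _).trans ((tsupport_pd j _).trans hs))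
    have j2 : Integrable fun x => q x t * lapScalar ψ x :=
      integrable_mul_test hqt (smooth_lap hψ).cont (compact_lap hc) ((tsupport_lap _).trans hs)
    rw [presF, hF]
    simp only
    rw [integral_add (integrable_finsetSum _ fun i _ => integrable_finsetSum _ fun j _ => j1 i j) j2,
      integral_finsetSum _ fun i _ => integrable_finsetSum _ fun j _ => j1 i j]
    congr 1
    exact Finset.sum_congr rfl fun i _ => integral_finsetSum _ fun j _ => j1 i j
  have hpi : IntegrableOn (fun t => presF v q t ψ) (tI t₀ r) := by
    have h1 : Integrable (fun t => ∫ x in ball x₀ r, F (x, t)) (volume.restrict (tI t₀ r)) := by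
      rw [IntegrableOn, vol_cyl] at hFi
      exact hFi.integral_prod_right
    refine h1.congr ?_
    filter_upwards [hslice] with t ht
    rw [← ht]
    exact setIntegral_eq_integral_of_forall_compl_eq_zero fun x hx => hF0 (x, t) hx
  have key : ∀ᵐ t ∂(volume : Measure ℝ), t ∈ tI t₀ r → presF v q t ψ = 0 := by
    refine IsOpen.ae_eq_zero_of_integral_contDiff_smul_eq_zero isOpen_Ioo
      hpi.locallyIntegrableOn fun η hη hηc hηs => ?_
    simp only [smul_eq_mul]
    -- tested with the gradient field `η∇ψ`: the time derivative and the viscous term drop out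
    -- because `v` is divergence free
    have hφ := h.weak_solution (fun x t => WithLp.toLp 2 fun i => η t * pd i ψ x) ?_ ?_ ?_
    · simp only at hφ
      have e0 : ∫ t, η t * presF v q t ψ = ∫ t in tI t₀ r, η t * presF v q t ψ :=
        (setIntegral_eq_integral_of_forall_compl_eq_zero fun t ht => by
          rw [image_eq_zero_of_notMem_tsupport fun hh => ht (hηs hh), zero_mul]).symm
      rw [e0, ← hφ]
      refine integral_congr_ae ?_
      filter_upwards [h.slice_div, hslice, h.weak_grad, ae_all_iff.2 hv, ae_all_iff.2 fun i => ae_all_iff.2 (hvv i),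
        ae_all_iff.2 fun i => ae_all_iff.2 (hdv i), hq] with t hdiv hsl hwg hvt hvvt hdvt hqt
      have c1 : ∀ j i, ∀ x, fderiv ℝ (fun y => η t * pd i ψ y) x (EuclideanSpace.single j 1) =
          η t * pd j (pd i ψ) x := fun j i x => pd_const_mul ((hψ.pd i).diff x) (η t) j
      have c2 : ∀ i x, deriv (fun s => η s * pd i ψ x) t = deriv η t * pd i ψ x := fun i x =>
        deriv_mul_const ((hη.differentiable (by simp)) t) _
      simp only [c1, c2]
      have hsub2 : ∀ i j, tsupport (pd j (pd i ψ)) ⊆ ball x₀ r := fun i j =>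
        (tsupport_pd j _).trans ((tsupport_pd i _).trans hs)
      have k1 : ∀ i, Integrable fun x => v x t i * pd i ψ x := fun i =>
        integrable_mul_test (hvt i) (hψ.pd i).cont (compact_pd hc i) ((tsupport_pd i _).trans hs)
      have k3 : ∀ i j, Integrable fun x => dv x t j i * pd j (pd i ψ) x := fun i j =>
        integrable_mul_test (hdvt i j) ((hψ.pd i).pd j).cont (compact_pd (compact_pd hc i) j) (hsub2 i j)
      have kF : Integrable fun x => F (x, t) := by
        refine Integrable.add (integrable_finsetSum _ fun i _ => integrable_finsetSum _ fun j _ => ?_) ?_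
        · exact integrable_mul_test (hvvt i j) ((hψ.pd j).pd i).cont (compact_pd (compact_pd hc j) i)
            (hsub2 j i)
        · exact integrable_mul_test hqt (smooth_lap hψ).cont (compact_lap hc) ((tsupport_lap _).trans hs)
      have hvisc : ∫ x, ∑ i, ∑ j, dv x t j i * pd j (pd i ψ) x = 0 := by
        rw [integral_finsetSum _ fun i _ => integrable_finsetSum _ fun j _ => k3 i j]
        have e1 : ∀ i, ∫ x, ∑ j, dv x t j i * pd j (pd i ψ) x = - ∫ x, v x t i * pd i (lapScalar ψ) x := by
          intro i
          have k4 : ∀ j, Integrable fun x => v x t i * pd j (pd j (pd i ψ)) x := fun j =>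
            integrable_mul_test (hvt i) (((hψ.pd i).pd j).pd j).cont
              (compact_pd (compact_pd (compact_pd hc i) j) j) ((tsupport_pd j _).trans (hsub2 i j))
          rw [integral_finsetSum _ fun j _ => k3 i j]
          have e2 : ∀ j, ∫ x, dv x t j i * pd j (pd i ψ) x = - ∫ x, v x t i * pd j (pd j (pd i ψ)) x := by
            intro j
            have := hwg _ ((hψ.pd i).pd j) (compact_pd (compact_pd hc i) j) (hsub2 i j) i j
            rw [eq_neg_iff_add_eq_zero, add_comm]
            rw [eq_neg_iff_add_eq_zero] at this
            exact this
          simp_rw [e2]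
          rw [Finset.sum_neg_distrib, ← integral_finsetSum _ fun j _ => k4 j]
          congr 2; ext x
          rw [← Finset.mul_sum]
          congr 1
          have e3 : pd i (lapScalar ψ) x = ∑ j, pd i (pd j (pd j ψ)) x := by
            have : lapScalar ψ = fun x => ∑ j, pd j (pd j ψ) x := funext fun x => lap_eq ψ x
            rw [this, pd, fderiv_fun_sum fun j _ => ((hψ.pd j).pd j).diff x]
            simp [pd]
          rw [e3]
          refine Finset.sum_congr rfl fun j _ => ?_
          have a1 : pd i (pd j (pd j ψ)) x = pd j (pd i (pd j ψ)) x := pd_comm (hψ.pd j) _ _ _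
          have a2 : pd i (pd j ψ) = pd j (pd i ψ) := funext fun y => pd_comm hψ _ _ _
          rw [a1, a2]
        simp_rw [e1]
        rw [Finset.sum_neg_distrib, neg_eq_zero]
        have := hdiv (lapScalar ψ) (smooth_lap hψ) (compact_lap hc) ((tsupport_lap _).trans hs)
        rwa [integral_finsetSum _ fun i _ => integrable_mul_test (hvt i) ((smooth_lap hψ).pd i).cont
          (compact_pd (compact_lap hc) i) ((tsupport_pd i _).trans ((tsupport_lap _).trans hs))] at this
      have hd0 := hdiv ψ hψ hc hs
      rw [← hsl]
      have e5 : ∀ x, ((∑ i, v x t i * (deriv η t * pd i ψ x)) +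
          (∑ i, ∑ j, v x t i * v x t j * (η t * pd j (pd i ψ) x)) -
          (∑ i, ∑ j, dv x t j i * (η t * pd j (pd i ψ) x)) + q x t * ∑ i, η t * pd i (pd i ψ) x) =
          deriv η t * (∑ i, v x t i * pd i ψ x) + η t * F (x, t) -
            η t * ∑ i, ∑ j, dv x t j i * pd j (pd i ψ) x := by
        intro x
        have sym : ∀ i j, pd j (pd i ψ) x = pd i (pd j ψ) x := fun i j => pd_comm hψ _ _ _
        simp only [hF, lap_eq, Finset.mul_sum, mul_add]
        have b1 : ∑ i, v x t i * (deriv η t * pd i ψ x) = ∑ i, deriv η t * (v x t i * pd i ψ x) :=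
          Finset.sum_congr rfl fun i _ => by ring
        have b2 : ∑ i, ∑ j, v x t i * v x t j * (η t * pd j (pd i ψ) x) =
            ∑ i, ∑ j, η t * (v x t i * v x t j * pd i (pd j ψ) x) :=
          Finset.sum_congr rfl fun i _ => Finset.sum_congr rfl fun j _ => by rw [sym]; ring
        have b3 : ∑ i, ∑ j, dv x t j i * (η t * pd j (pd i ψ) x) =
            ∑ i, ∑ j, η t * (dv x t j i * pd j (pd i ψ) x) :=
          Finset.sum_congr rfl fun i _ => Finset.sum_congr rfl fun j _ => by ring
        have b4 : ∑ i, q x t * (η t * pd i (pd i ψ) x) = ∑ i, η t * (q x t * pd i (pd i ψ) x) :=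
          Finset.sum_congr rfl fun i _ => by ring
        rw [b1, b2, b3, b4]; ring
      simp_rw [e5]
      have l1 : Integrable fun x => deriv η t * (∑ i, v x t i * pd i ψ x) :=
        (integrable_finsetSum _ fun i _ => k1 i).const_mul _
      have l2 : Integrable fun x => η t * F (x, t) := kF.const_mul _
      have l3 : Integrable fun x => η t * ∑ i, ∑ j, dv x t j i * pd j (pd i ψ) x :=
        (integrable_finsetSum _ fun i _ => integrable_finsetSum _ fun j _ => k3 i j).const_mul _
      have l12 : Integrable fun x => deriv η t * (∑ i, v x t i * pd i ψ x) + η t * F (x, t) := l1.add l2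
      rw [integral_sub l12 l3, integral_add l1 l2, integral_const_mul, integral_const_mul,
        integral_const_mul, hvisc, hd0]
      ring
    · exact (PiLp.contDiff_toLp (p := 2)).comp (contDiff_pi.2 fun i => prod_smooth (hψ.pd i) hη)
    · refine HasCompactSupport.intro (hc.isCompact.prod hηc.isCompact) fun p hp => ?_
      ext i
      simp only [PiLp.zero_apply]
      by_cases hp1 : p.1 ∈ tsupport ψ
      · have : p.2 ∉ tsupport η := fun hh => hp ⟨hp1, hh⟩
        rw [image_eq_zero_of_notMem_tsupport this, zero_mul]
      · rw [pd_eq_zero hp1, mul_zero]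
    · refine (closure_minimal ?_ ((isClosed_tsupport ψ).prod (isClosed_tsupport η))).trans
        (prod_mono hs hηs)
      intro p hp
      by_contra hh
      refine hp ?_
      ext i
      simp only [PiLp.zero_apply]
      by_cases hp1 : p.1 ∈ tsupport ψ
      · have : p.2 ∉ tsupport η := fun h2 => hh ⟨hp1, h2⟩
        rw [image_eq_zero_of_notMem_tsupport this, zero_mul]
      · rw [pd_eq_zero hp1, mul_zero]
  exact (ae_restrict_iff' measurableSet_Ioo).2 key

end IsSuitableWeakSolution

/-! ### The pressure equation for all tests -/

/-- Test functions supported in a fixed compact set are separable for the supremum of second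
derivatives. -/
lemma countable_tests {K : Set E3} (hK : IsCompact K) : ∃ S : Set (E3 → ℝ), S.Countable ∧
    (∀ ψ ∈ S, Smooth ψ ∧ tsupport ψ ⊆ K) ∧
    ∀ ψ, Smooth ψ → tsupport ψ ⊆ K → ∀ ε > 0, ∃ ψ' ∈ S, ∀ i j x,
      |pd i (pd j ψ) x - pd i (pd j ψ') x| ≤ ε := by
  have : CompactSpace K := isCompact_iff_compactSpace.1 hK
  let T := {ψ : E3 → ℝ // Smooth ψ ∧ tsupport ψ ⊆ K}
  let Φ : T → (Fin 3 → Fin 3 → C(K, ℝ)) := fun ψ i j =>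
    ⟨fun x => pd i (pd j ψ.1) x, ((ψ.2.1.pd j).pd i).cont.comp continuous_subtype_val⟩
  obtain ⟨D, hDc, hD⟩ := TopologicalSpace.exists_countable_dense (range Φ)
  have hch : ∀ y : range Φ, ∃ ψ : T, Φ ψ = y := fun y => y.2
  choose g hg using hch
  refine ⟨(fun y => (g y).1) '' D, hDc.image _, ?_, ?_⟩
  · rintro _ ⟨y, -, rfl⟩
    exact (g y).2
  · intro ψ hψ hs ε hε
    obtain ⟨y, hyD, hy⟩ := hD.exists_dist_lt ⟨Φ ⟨ψ, hψ, hs⟩, mem_range_self _⟩ hε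
    refine ⟨_, ⟨y, hyD, rfl⟩, fun i j x => ?_⟩
    by_cases hx : x ∈ K
    · have h1 : dist (Φ ⟨ψ, hψ, hs⟩) (Φ (g y)) < ε := by rw [hg]; exact hy
      have h2 := ((dist_le_pi_dist (Φ ⟨ψ, hψ, hs⟩ i) (Φ (g y) i) j).trans (dist_le_pi_dist _ _ i)).trans h1.le
      have h3 := (ContinuousMap.dist_apply_le_dist (⟨x, hx⟩ : K)).trans h2
      exact h3
    · rw [pd_eq_zero (fun hh => hx (hs (tsupport_pd j _ hh))),
        pd_eq_zero (fun hh => hx ((g y).2.2 (tsupport_pd j _ hh)))]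
      simpa using hε.le

lemma exists_closedBall {x₀ : E3} {r : ℝ} {K : Set E3} (hK : IsCompact K) (hs : K ⊆ ball x₀ r) :
    ∃ m : ℕ, K ⊆ closedBall x₀ (r - r / (m + 2)) := by
  obtain ⟨s, hs0, hs1⟩ := exists_lt_subset_ball hK.isClosed hs
  obtain ⟨m, hm⟩ := exists_nat_gt (r / (r - s))
  refine ⟨m, hs1.trans (ball_subset_closedBall.trans (closedBall_subset_closedBall ?_))⟩
  have h1 : 0 < r - s := by linarith
  have : r / ((m : ℝ) + 2) ≤ r - s := by
    rw [div_lt_iff₀ h1] at hm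
    rw [div_le_iff₀ (by positivity)]
    nlinarith
  linarith

namespace IsSuitableWeakSolution
variable {v : E3 → ℝ → E3} {q : E3 → ℝ → ℝ} {dv : E3 → ℝ → Fin 3 → E3} {x₀ : E3} {t₀ r : ℝ}

/-- The pressure equation `-Δq = ∑ ∂ᵢ∂ⱼ(vᵢvⱼ)` holds on almost every time slice. -/
lemma slice_pres (h : IsSuitableWeakSolution v q dv x₀ t₀ r) (hr : 0 < r) :
    ∀ᵐ t ∂(volume.restrict (tI t₀ r)), ∀ ψ : E3 → ℝ, Smooth ψ → HasCompactSupport ψ →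
      tsupport ψ ⊆ ball x₀ r → presF v q t ψ = 0 := by
  have hcb : ∀ m : ℕ, closedBall x₀ (r - r / (m + 2)) ⊆ ball x₀ r := fun m =>
    closedBall_subset_ball (by have : 0 < r / ((m : ℝ) + 2) := by positivity
                               linarith)
  choose S hSc hSt hSd using fun m : ℕ =>
    countable_tests (isCompact_closedBall x₀ (r - r / ((m : ℝ) + 2)))
  -- exhaustion of the ball by closed balls, with countably many tests on each
  have hall : ∀ᵐ t ∂(volume.restrict (tI t₀ r)), ∀ m, ∀ ψ ∈ S m, presF v q t ψ = 0 := by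
    refine ae_all_iff.2 fun m => (ae_ball_iff (hSc m)).2 fun ψ hψ => ?_
    obtain ⟨h1, h2⟩ := hSt m ψ hψ
    exact h.slice_pres_one h1 ((isCompact_closedBall _ _).of_isClosed_subset (isClosed_tsupport _) h2)
      (h2.trans (hcb m))
  have hvv : ∀ i j, ∀ᵐ t ∂(volume.restrict (tI t₀ r)),
      IntegrableOn (fun x => v x t i * v x t j) (ball x₀ r) :=
    fun i j => slice_integrable (h.int_vij i j)
  have hq : ∀ᵐ t ∂(volume.restrict (tI t₀ r)), IntegrableOn (fun x => q x t) (ball x₀ r) :=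
    slice_integrable h.int_q
  filter_upwards [hall, ae_all_iff.2 fun i => ae_all_iff.2 (hvv i), hq] with t ht hvt hqt ψ hψ hc hs
  obtain ⟨m, hm⟩ := exists_closedBall hc.isCompact hs
  -- the functional is controlled by second derivatives
  have one : ∀ {f : E3 → ℝ} {w w' : E3 → ℝ} {ε : ℝ}, IntegrableOn f (ball x₀ r) → Continuous w →
      HasCompactSupport w → tsupport w ⊆ ball x₀ r → Continuous w' → HasCompactSupport w' →
      tsupport w' ⊆ ball x₀ r → (∀ x, |w x - w' x| ≤ ε) →
      |(∫ x, f x * w x) - ∫ x, f x * w' x| ≤ ε * ∫ x in ball x₀ r, |f x| := by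
    intro f w w' ε hf hw hwc hws hw' hwc' hws' hd
    have i1 := integrable_mul_test hf hw hwc hws
    have i2 := integrable_mul_test hf hw' hwc' hws'
    have e1 : ∫ x, f x * w x - f x * w' x = ∫ x in ball x₀ r, (f x * w x - f x * w' x) := by
      refine (setIntegral_eq_integral_of_forall_compl_eq_zero fun x hx => ?_).symm
      rw [image_eq_zero_of_notMem_tsupport fun hh => hx (hws hh),
        image_eq_zero_of_notMem_tsupport fun hh => hx (hws' hh)]
      ring
    rw [← integral_sub i1 i2, e1, ← integral_const_mul, ← Real.norm_eq_abs]
    refine norm_integral_le_of_norm_le (hf.abs.const_mul ε) (Eventually.of_forall fun x => ?_)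
    rw [Real.norm_eq_abs, ← mul_sub, abs_mul, mul_comm]
    exact mul_le_mul_of_nonneg_right (hd x) (abs_nonneg _)
  set M : ℝ := (∑ i, ∑ j, ∫ x in ball x₀ r, |v x t i * v x t j|) + 3 * ∫ x in ball x₀ r, |q x t| with hM
  have hM0 : 0 ≤ M := add_nonneg (Finset.sum_nonneg fun i _ => Finset.sum_nonneg fun j _ =>
    integral_nonneg fun x => abs_nonneg _) (mul_nonneg (by norm_num) (integral_nonneg fun x => abs_nonneg _))
  have key : ∀ ε > 0, |presF v q t ψ| ≤ ε * M := by
    intro ε hε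
    obtain ⟨ψ', hψ'S, hd⟩ := hSd m ψ hψ hm ε hε
    obtain ⟨k1, k2⟩ := hSt m ψ' hψ'S
    have kc : HasCompactSupport ψ' :=
      (isCompact_closedBall _ _).of_isClosed_subset (isClosed_tsupport _) k2
    have ks := k2.trans (hcb m)
    have h0 : presF v q t ψ = presF v q t ψ - presF v q t ψ' := by rw [ht m ψ' hψ'S, sub_zero]
    have hl : ∀ x, |lapScalar ψ x - lapScalar ψ' x| ≤ 3 * ε := by
      intro x
      rw [lap_eq, lap_eq, ← Finset.sum_sub_distrib]
      refine (Finset.abs_sum_le_sum_abs _ _).trans ((Finset.sum_le_sum fun i _ => hd i i x).trans ?_)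
      simp
    have b1 : ∀ i j, |(∫ x, v x t i * v x t j * pd i (pd j ψ) x) - ∫ x, v x t i * v x t j * pd i (pd j ψ') x|
        ≤ ε * ∫ x in ball x₀ r, |v x t i * v x t j| := fun i j =>
      one (hvt i j) ((hψ.pd j).pd i).cont (compact_pd (compact_pd hc j) i)
        ((tsupport_pd i _).trans ((tsupport_pd j _).trans hs)) ((k1.pd j).pd i).cont
        (compact_pd (compact_pd kc j) i) ((tsupport_pd i _).trans ((tsupport_pd j _).trans ks)) (hd i j)
    have b2 := one hqt (smooth_lap hψ).cont (compact_lap hc) ((tsupport_lap _).trans hs)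
      (smooth_lap k1).cont (compact_lap kc) ((tsupport_lap _).trans ks) hl
    rw [h0, presF, presF, add_sub_add_comm, ← Finset.sum_sub_distrib, hM, mul_add, Finset.mul_sum]
    refine (abs_add_le _ _).trans (add_le_add ((Finset.abs_sum_le_sum_abs _ _).trans
      (Finset.sum_le_sum fun i _ => ?_)) (b2.trans (le_of_eq (by ring))))
    rw [← Finset.sum_sub_distrib, Finset.mul_sum]
    exact (Finset.abs_sum_le_sum_abs _ _).trans (Finset.sum_le_sum fun j _ => b1 i j)
  refine abs_nonpos_iff.1 (le_of_forall_pos_le_add fun δ hδ => ?_)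
  refine (key (δ / (M + 1)) (by positivity)).trans ?_
  rw [zero_add, div_mul_eq_mul_div, div_le_iff₀ (by positivity)]
  nlinarith

end IsSuitableWeakSolution

/-! ### The heat kernel -/

/-- The heat kernel at time `θ` centred at `c`, without its normalising constant. -/
def heatK (c : E3) (θ : ℝ) (x : E3) : ℝ := (√θ ^ 3)⁻¹ * Real.exp (-‖x - c‖ ^ 2 / (4 * θ))

lemma heatK_smooth (c : E3) (θ : ℝ) : Smooth (heatK c θ) := by
  refine contDiff_const.mul (Real.contDiff_exp.comp ?_)
  exact ((contDiff_id.sub contDiff_const).norm_sq ℝ).neg.div_const _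

lemma heatK_nonneg (c : E3) (θ : ℝ) (x : E3) : 0 ≤ heatK c θ x := by
  unfold heatK; positivity

lemma pd_normSq (c x : E3) (i : Fin 3) : HasFDerivAt (fun y : E3 => ‖y - c‖ ^ 2)
    (2 • (innerSL ℝ (x - c))) x ∧ (innerSL ℝ (x - c)) (EuclideanSpace.single i 1) = (x - c) i := by
  constructor
  · have := ((hasFDerivAt_id x).sub_const c).norm_sq
    simpa using this
  · simp [EuclideanSpace.inner_single_right]

lemma pd_heatK (c : E3) {θ : ℝ} (i : Fin 3) (x : E3) :
    pd i (heatK c θ) x = -((x - c) i / (2 * θ)) * heatK c θ x := by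
  obtain ⟨h1, h2⟩ := pd_normSq c x i
  have h3 : HasFDerivAt (fun y : E3 => -‖y - c‖ ^ 2 / (4 * θ))
      ((4 * θ)⁻¹ • (-(2 • innerSL ℝ (x - c)) : E3 →L[ℝ] ℝ)) x := by
    have : HasFDerivAt (fun y : E3 => (4 * θ)⁻¹ * -‖y - c‖ ^ 2)
      ((4 * θ)⁻¹ • (-(2 • innerSL ℝ (x - c)) : E3 →L[ℝ] ℝ)) x := h1.neg.const_mul ((4 * θ)⁻¹)
    have e : (fun y : E3 => -‖y - c‖ ^ 2 / (4 * θ)) = fun y : E3 => (4 * θ)⁻¹ * -‖y - c‖ ^ 2 :=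
      funext fun y => by rw [div_eq_inv_mul]
    rwa [e]
  have h4 := (h3.exp).const_mul (√θ ^ 3)⁻¹
  have h5 : fderiv ℝ (heatK c θ) x = _ := h4.fderiv
  rw [pd, h5, heatK]
  simp only [_root_.smul_apply, _root_.neg_apply, h2, smul_eq_mul]
  rcases eq_or_ne θ 0 with rfl | hθ
  · simp
  · field_simp
    ring

lemma lap_heatK (c : E3) {θ : ℝ} (hθ : 0 < θ) (x : E3) :
    lapScalar (heatK c θ) x = (‖x - c‖ ^ 2 / (4 * θ ^ 2) - 3 / (2 * θ)) * heatK c θ x := by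
  rw [lap_eq]
  have h1 : ∀ i, pd i (pd i (heatK c θ)) x =
      ((x - c) i ^ 2 / (4 * θ ^ 2) - 1 / (2 * θ)) * heatK c θ x := by
    intro i
    have e : pd i (heatK c θ) = fun y => (-(2 * θ)⁻¹ * (y - c) i) * heatK c θ y :=
      funext fun y => by rw [pd_heatK]; ring
    have hl : Smooth fun y : E3 => -(2 * θ)⁻¹ * (y - c) i := by
      unfold Smooth; fun_prop
    have hd : pd i (fun y : E3 => -(2 * θ)⁻¹ * (y - c) i) x = -(2 * θ)⁻¹ := by
      have : HasFDerivAt (fun y : E3 => -(2 * θ)⁻¹ * (y - c) i)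
          ((-(2 * θ)⁻¹) • (EuclideanSpace.proj i : E3 →L[ℝ] ℝ)) x := by
        have := (((EuclideanSpace.proj i : E3 →L[ℝ] ℝ).hasFDerivAt (x := x)).sub_const
          (c i)).const_mul (-(2 * θ)⁻¹)
        simpa using this
      rw [pd, this.fderiv]
      simp
    rw [e, pd_mul (hl.diff x) ((heatK_smooth c θ).diff x), hd, pd_heatK]
    field_simp
    ring
  simp_rw [h1]
  rw [← Finset.sum_mul, EuclideanSpace.norm_sq_eq]
  congr 1
  simp only [Fin.sum_univ_three, Real.norm_eq_abs, sq_abs]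
  ring

lemma heatK_deriv (c x : E3) {θ : ℝ} (hθ : 0 < θ) : HasDerivAt (fun θ => heatK c θ x)
    ((‖x - c‖ ^ 2 / (4 * θ ^ 2) - 3 / (2 * θ)) * heatK c θ x) θ := by
  have hs : √θ ≠ 0 := (Real.sqrt_pos.2 hθ).ne'
  have h1 : HasDerivAt (fun θ => (√θ ^ 3)⁻¹) (-(3 / (2 * θ)) * (√θ ^ 3)⁻¹) θ := by
    have := (((hasDerivAt_id θ).sqrt hθ.ne').pow 3).inv (pow_ne_zero 3 hs)
    refine HasDerivAt.congr_deriv (f := fun θ => (√θ ^ 3)⁻¹) this ?_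
    have e : θ = √θ ^ 2 := (Real.sq_sqrt hθ.le).symm
    simp only [id, Nat.cast_ofNat, Pi.pow_apply]
    obtain ⟨w, hw⟩ : ∃ w, w = √θ := ⟨_, rfl⟩
    rw [← hw] at e hs ⊢
    rw [e]
    norm_num
    field_simp
  have h2 : HasDerivAt (fun θ => -‖x - c‖ ^ 2 / (4 * θ)) (‖x - c‖ ^ 2 / (4 * θ ^ 2)) θ := by
    have := (((hasDerivAt_id θ).const_mul 4).inv (by simpa using hθ.ne')).const_mul (-‖x - c‖ ^ 2)
    have h3 : HasDerivAt (fun θ => -‖x - c‖ ^ 2 / (4 * θ)) _ θ := this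
    refine h3.congr_deriv ?_
    simp only [id]
    field_simp
  refine HasDerivAt.congr_deriv (f := fun θ => heatK c θ x) (h1.mul h2.exp) ?_
  simp only [heatK]; ring

lemma heatK_joint (c : E3) (T : ℝ) {p : E3 × ℝ} (hp : p.2 < T) :
    ContDiffAt ℝ (⊤ : ℕ∞) (fun p : E3 × ℝ => heatK c (T - p.2) p.1) p := by
  have h0 : 0 < T - p.2 := by linarith
  have h1 : ContDiffAt ℝ (⊤ : ℕ∞) (fun p : E3 × ℝ => T - p.2) p := by fun_prop
  have h2 : ContDiffAt ℝ (⊤ : ℕ∞) (fun p : E3 × ℝ => ‖p.1 - c‖ ^ 2) p := by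
    exact ((contDiff_fst.sub contDiff_const).norm_sq ℝ).contDiffAt
  refine ContDiffAt.mul (((h1.sqrt h0.ne').pow 3).inv ?_) (ContDiffAt.exp ?_)
  · exact pow_ne_zero 3 (Real.sqrt_pos.2 h0).ne'
  · exact h2.neg.div (contDiffAt_const.mul h1) (by positivity)

lemma gauss_bound {u : ℝ} (hu : 0 ≤ u) {k : ℕ} (hk : k ≤ 6) :
    u ^ k * Real.exp (-(u ^ 2 / 4)) ≤ 400 := by
  have h1 : u ^ k ≤ 1 + u ^ 6 := by
    rcases le_total u 1 with h | h
    · have := pow_le_one₀ (n := k) hu h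
      have : 0 ≤ u ^ 6 := by positivity
      linarith
    · have := pow_le_pow_right₀ h hk
      linarith
  have h2 := Real.pow_div_factorial_le_exp (u ^ 2 / 4) (by positivity) 3
  have h3 := Real.one_le_exp (show 0 ≤ u ^ 2 / 4 by positivity)
  have h4 : (u ^ 2 / 4) ^ 3 / (Nat.factorial 3 : ℝ) = u ^ 6 / 384 := by
    norm_num [Nat.factorial]; ring
  rw [h4] at h2
  rw [Real.exp_neg, ← div_eq_mul_inv, div_le_iff₀ (Real.exp_pos _)]
  linarith

/-- Away from the pole at parabolic scale `ℓ`, the heat kernel is of size `ℓ⁻³` and its gradient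
of size `ℓ⁻⁴`. -/
lemma heatK_bounds (c x : E3) {θ l : ℝ} (hθ : 0 < θ) (hl : 0 < l) (h : l ^ 2 ≤ θ ∨ l ≤ ‖x - c‖) :
    heatK c θ x ≤ 400 / l ^ 3 ∧ ∀ i, |pd i (heatK c θ) x| ≤ 400 / l ^ 4 := by
  have hs : 0 < √θ := Real.sqrt_pos.2 hθ
  obtain ⟨w, hw⟩ : ∃ w, w = √θ := ⟨_, rfl⟩
  have hw0 : 0 < w := hw ▸ hs
  have e : θ = w ^ 2 := by rw [hw, Real.sq_sqrt hθ.le]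
  set ρ := ‖x - c‖ with hρ
  have hρ0 : 0 ≤ ρ := norm_nonneg _
  have hK : heatK c θ x = (w ^ 3)⁻¹ * Real.exp (-((ρ / w) ^ 2 / 4)) := by
    rw [heatK, ← hw, e]; congr 2; field_simp; rw [hρ]
  have hG : ∀ i, |pd i (heatK c θ) x| ≤ (ρ / w) * ((w ^ 4)⁻¹ * Real.exp (-((ρ / w) ^ 2 / 4))) := by
    intro i
    rw [pd_heatK, abs_mul, abs_of_nonneg (heatK_nonneg c θ x), hK, abs_neg, abs_div, e,
      abs_of_pos (show 0 < 2 * w ^ 2 by positivity)]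
    have h1 : |(x - c) i| ≤ ρ := abs_coord_le _ _
    have h2 : (ρ / w) * ((w ^ 4)⁻¹ * Real.exp (-((ρ / w) ^ 2 / 4))) =
        (ρ / w ^ 2) * ((w ^ 3)⁻¹ * Real.exp (-((ρ / w) ^ 2 / 4))) := by field_simp
    rw [h2]
    refine mul_le_mul_of_nonneg_right ?_ (by positivity)
    exact div_le_div₀ hρ0 h1 (by positivity) (by nlinarith [sq_nonneg w])
  have hu : 0 ≤ ρ / w := by positivity
  rcases h with h | h
  · have hlw : l ≤ w := by rw [e] at h; exact le_of_sq_le_sq h hw0.le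
    refine ⟨?_, fun i => (hG i).trans ?_⟩
    · rw [hK]
      have := gauss_bound hu (k := 0) (by norm_num)
      rw [pow_zero, one_mul] at this
      rw [inv_mul_eq_div]
      exact div_le_div₀ (by norm_num) this (by positivity) (by gcongr)
    · have := gauss_bound hu (k := 1) (by norm_num)
      rw [pow_one] at this
      rw [mul_left_comm, inv_mul_eq_div]
      exact div_le_div₀ (by norm_num) this (by positivity) (by gcongr)
  · have hρp : 0 < ρ := hl.trans_le h
    refine ⟨?_, fun i => (hG i).trans ?_⟩
    · rw [hK]
      have := gauss_bound hu (k := 3) (by norm_num)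
      have e2 : (w ^ 3)⁻¹ * Real.exp (-((ρ / w) ^ 2 / 4)) =
        ((ρ / w) ^ 3 * Real.exp (-((ρ / w) ^ 2 / 4))) / ρ ^ 3 := by field_simp
      rw [e2]
      exact div_le_div₀ (by norm_num) this (by positivity) (by gcongr)
    · have := gauss_bound hu (k := 5) (by norm_num)
      have e2 : ρ / w * ((w ^ 4)⁻¹ * Real.exp (-((ρ / w) ^ 2 / 4))) =
        ((ρ / w) ^ 5 * Real.exp (-((ρ / w) ^ 2 / 4))) / ρ ^ 4 := by field_simp
      rw [e2]
      exact div_le_div₀ (by norm_num) this (by positivity) (by gcongr)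

lemma heatK_lower (c x : E3) {θ l : ℝ} (hl : 0 < l) (h1 : l ^ 2 ≤ θ) (h2 : θ ≤ 2 * l ^ 2)
    (hx : ‖x - c‖ ≤ l) : 1 / (8 * l ^ 3) ≤ heatK c θ x := by
  have hθ : 0 < θ := by nlinarith [sq_nonneg l, pow_pos hl 2]
  have hs : √θ ≤ 3 / 2 * l := by
    rw [Real.sqrt_le_left (by positivity)]; nlinarith [pow_pos hl 2]
  have hs0 : 0 < √θ := Real.sqrt_pos.2 hθ
  have e1 : 3 / 4 ≤ Real.exp (-‖x - c‖ ^ 2 / (4 * θ)) := by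
    have := Real.add_one_le_exp (-‖x - c‖ ^ 2 / (4 * θ))
    have h3 : ‖x - c‖ ^ 2 / (4 * θ) ≤ 1 / 4 := by
      rw [div_le_iff₀ (by positivity)]
      have := pow_le_pow_left₀ (norm_nonneg _) hx 2
      linarith
    rw [neg_div] at this ⊢
    linarith
  have e2 : (27 / 8 * l ^ 3)⁻¹ ≤ (√θ ^ 3)⁻¹ := by
    refine inv_anti₀ (by positivity) ?_
    calc √θ ^ 3 ≤ (3 / 2 * l) ^ 3 := by gcongr
      _ = _ := by ring
  calc 1 / (8 * l ^ 3) ≤ (27 / 8 * l ^ 3)⁻¹ * (3 / 4) := by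
        rw [div_le_iff₀ (by positivity)]; field_simp; norm_num
    _ ≤ _ := mul_le_mul e2 e1 (by norm_num) (by positivity)

/-! ### Dyadic shells of the localised heat kernel -/

/-- Smooth cutoff in time, equal to `1` for `T - s ≤ ρ²/4` and to `0` for `T - s ≥ ρ²/2`. -/
def tcut (T ρ s : ℝ) : ℝ := Real.smoothTransition (2 - 4 * (T - s) / ρ ^ 2)

lemma tcut_nonneg (T ρ s : ℝ) : 0 ≤ tcut T ρ s := Real.smoothTransition.nonneg _
lemma tcut_le_one (T ρ s : ℝ) : tcut T ρ s ≤ 1 := Real.smoothTransition.le_one _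

lemma tcut_one {T ρ s : ℝ} (hρ : 0 < ρ) (h : T - s ≤ ρ ^ 2 / 4) : tcut T ρ s = 1 := by
  refine Real.smoothTransition.one_of_one_le ?_
  have : 4 * (T - s) / ρ ^ 2 ≤ 1 := by rw [div_le_one (by positivity)]; linarith
  linarith

lemma tcut_zero {T ρ s : ℝ} (hρ : 0 < ρ) (h : ρ ^ 2 / 2 ≤ T - s) : tcut T ρ s = 0 := by
  refine Real.smoothTransition.zero_of_nonpos ?_
  have : 2 ≤ 4 * (T - s) / ρ ^ 2 := by rw [le_div_iff₀ (by positivity)]; linarith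
  linarith

lemma tcut_smooth (T ρ : ℝ) : ContDiff ℝ (⊤ : ℕ∞) (tcut T ρ) :=
  Real.smoothTransition.contDiff.comp (by fun_prop)

lemma tcut_deriv : ∃ D : ℝ, 0 < D ∧ ∀ T ρ s : ℝ, 0 < ρ → |deriv (tcut T ρ) s| ≤ D / ρ ^ 2 ∧
    (T - s < ρ ^ 2 / 4 → deriv (tcut T ρ) s = 0) := by
  have hsm : ContDiff ℝ (⊤ : ℕ∞) Real.smoothTransition := Real.smoothTransition.contDiff
  have hcont : Continuous (deriv Real.smoothTransition) := hsm.continuous_deriv (by simp)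
  obtain ⟨C, hC⟩ := isCompact_Icc.exists_bound_of_continuousOn (s := Icc (-1 : ℝ) 2) hcont.continuousOn
  have hC0 : 0 ≤ C := (norm_nonneg _).trans (hC 0 (by norm_num))
  have hall : ∀ y, |deriv Real.smoothTransition y| ≤ C := by
    intro y
    by_cases hy : y ∈ Icc (-1 : ℝ) 2
    · exact hC y hy
    · have : deriv Real.smoothTransition y = 0 := by
        rw [mem_Icc, not_and_or, not_le, not_le] at hy
        rcases hy with hy | hy
        · have : Real.smoothTransition =ᶠ[𝓝 y] fun _ => (0 : ℝ) := by
            filter_upwards [Iio_mem_nhds hy] with z hz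
            exact Real.smoothTransition.zero_of_nonpos (by linarith [mem_Iio.1 hz])
          rw [this.deriv_eq, deriv_const]
        · have : Real.smoothTransition =ᶠ[𝓝 y] fun _ => (1 : ℝ) := by
            filter_upwards [Ioi_mem_nhds hy] with z hz
            exact Real.smoothTransition.one_of_one_le (by linarith [mem_Ioi.1 hz])
          rw [this.deriv_eq, deriv_const]
      rw [this, abs_zero]; exact hC0
  refine ⟨4 * C + 1, by linarith, fun T ρ s hρ => ⟨?_, fun h => ?_⟩⟩
  · have h1 : HasDerivAt (fun s => 2 - 4 * (T - s) / ρ ^ 2) (4 / ρ ^ 2) s := by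
      have := ((((hasDerivAt_id s).const_sub T).const_mul 4).div_const (ρ ^ 2)).const_sub 2
      refine this.congr_deriv ?_
      ring
    have h2 : HasDerivAt Real.smoothTransition _ (2 - 4 * (T - s) / ρ ^ 2) :=
      (hsm.differentiable (by simp) _).hasDerivAt
    have h3 : deriv (tcut T ρ) s = _ := (h2.comp s h1).deriv
    rw [h3, abs_mul, abs_of_pos (show 0 < 4 / ρ ^ 2 by positivity), mul_div_assoc']
    refine div_le_div_of_nonneg_right ?_ (by positivity)
    have := hall (2 - 4 * (T - s) / ρ ^ 2)
    linarith
  · have : tcut T ρ =ᶠ[𝓝 s] fun _ => (1 : ℝ) := by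
      have : Ioi (T - ρ ^ 2 / 4) ∈ 𝓝 s := Ioi_mem_nhds (by linarith)
      filter_upwards [this] with z hz
      exact tcut_one hρ (by linarith [mem_Ioi.1 hz])
    rw [this.deriv_eq, deriv_const]

/-- A spatial cutoff at scale `ρ` times a heat kernel whose pole stays at parabolic distance `ρ`. -/
lemma cut_heat (D : ℝ) (hD : 0 < D) : ∃ A : ℝ, 0 < A ∧ ∀ {c : E3} {θ ρ : ℝ} {b : E3 → ℝ}, 0 < ρ → 0 < θ →
    Smooth b → (∀ x, |b x| ≤ 1) → (∀ i x, |pd i b x| ≤ D / ρ) →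
    (ρ ^ 2 / 16 ≤ θ ∨ ∀ x ∈ ball c (ρ / 4), b x = 0) →
    (∀ x, |b x * heatK c θ x| ≤ A / ρ ^ 3) ∧
      ∀ i x, |pd i (fun y => b y * heatK c θ y) x| ≤ A / ρ ^ 4 := by
  refine ⟨25600 * D + 102400, by positivity, fun {c θ ρ b} hρ hθ hb hb1 hbD hcase => ?_⟩
  have main : ∀ x, ((b x = 0 ∧ ∀ i, pd i b x = 0)) ∨
      (heatK c θ x ≤ 25600 / ρ ^ 3 ∧ ∀ i, |pd i (heatK c θ) x| ≤ 102400 / ρ ^ 4) := by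
    intro x
    have hkb : ((ρ / 4) ^ 2 ≤ θ ∨ ρ / 4 ≤ ‖x - c‖) →
        (heatK c θ x ≤ 25600 / ρ ^ 3 ∧ ∀ i, |pd i (heatK c θ) x| ≤ 102400 / ρ ^ 4) := by
      intro hh
      obtain ⟨h1, h2⟩ := heatK_bounds c x hθ (by positivity) hh
      refine ⟨h1.trans (le_of_eq ?_), fun i => (h2 i).trans (le_of_eq ?_)⟩
      · field_simp; norm_num
      · field_simp; norm_num
    rcases hcase with h | h
    · exact Or.inr (hkb (Or.inl (by linarith)))
    · by_cases hx : x ∈ ball c (ρ / 4)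
      · refine Or.inl ⟨h x hx, fun i => ?_⟩
        have : b =ᶠ[𝓝 x] fun _ => (0 : ℝ) := by
          filter_upwards [isOpen_ball.mem_nhds hx] with y hy using h y hy
        rw [pd_congr this]; simp [pd]
      · refine Or.inr (hkb (Or.inr ?_))
        rw [mem_ball, not_lt, dist_eq_norm] at hx
        exact hx
  have hg := heatK_smooth c θ
  constructor
  · intro x
    rcases main x with ⟨h, -⟩ | ⟨h, -⟩
    · rw [h, zero_mul, abs_zero]; positivity
    · rw [abs_mul, abs_of_nonneg (heatK_nonneg c θ x)]
      calc |b x| * heatK c θ x ≤ 1 * (25600 / ρ ^ 3) :=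
            mul_le_mul (hb1 x) h (heatK_nonneg c θ x) (by norm_num)
        _ ≤ _ := by rw [one_mul]; gcongr; linarith
  · intro i x
    rw [pd_mul (hb.diff x) (hg.diff x)]
    rcases main x with ⟨h, h'⟩ | ⟨h, h'⟩
    · rw [h, h', zero_mul, zero_mul, add_zero, abs_zero]; positivity
    · refine (abs_add_le _ _).trans ?_
      rw [abs_mul, abs_mul, abs_of_nonneg (heatK_nonneg c θ x)]
      calc |pd i b x| * heatK c θ x + |b x| * |pd i (heatK c θ) x|
          ≤ (D / ρ) * (25600 / ρ ^ 3) + 1 * (102400 / ρ ^ 4) :=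
            add_le_add (mul_le_mul (hbD i x) h (heatK_nonneg c θ x) (by positivity))
              (mul_le_mul (hb1 x) (h' i) (abs_nonneg _) (by norm_num))
        _ = _ := by field_simp

/-- Spacetime cutoff at parabolic scale `ρ`. -/
def stcut (c : E3) (T ρ s : ℝ) (x : E3) : ℝ := tcut T ρ s * cutoff c ρ x

/-- Difference of the spacetime cutoffs at scales `R/2ʲ` and `R/2ʲ⁺¹`; the last one is undivided. -/
def shellCut (c : E3) (T R : ℝ) (k j : ℕ) (s : ℝ) (x : E3) : ℝ :=
  stcut c T (R / 2 ^ j) s x - if j < k then stcut c T (R / 2 ^ (j + 1)) s x else 0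

/-- Dyadic piece of the localised backward heat kernel. -/
def shell (c : E3) (T R : ℝ) (k j : ℕ) (s : ℝ) (x : E3) : ℝ :=
  shellCut c T R k j s x * heatK c ((R / 2 ^ (k + 1)) ^ 2 + (T - s)) x

lemma stcut_smooth (c : E3) (T ρ s : ℝ) : Smooth (stcut c T ρ s) :=
  contDiff_const.mul (cutoff_smooth c ρ)

lemma stcut_mem (c : E3) (T ρ s : ℝ) (x : E3) : 0 ≤ stcut c T ρ s x ∧ stcut c T ρ s x ≤ 1 :=
  ⟨mul_nonneg (tcut_nonneg _ _ _) (cutoff_nonneg _ _ _),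
    mul_le_one₀ (tcut_le_one _ _ _) (cutoff_nonneg _ _ _) (cutoff_le_one _ _ _)⟩

lemma tsupport_stcut (c : E3) (T s : ℝ) {ρ : ℝ} (hρ : 0 < ρ) : tsupport (stcut c T ρ s) ⊆ ball c ρ :=
  (closure_mono (Function.support_mul_subset_right _ _)).trans (tsupport_cutoff' hρ)

lemma shellCut_smooth (c : E3) (T R : ℝ) (k j : ℕ) (s : ℝ) : Smooth (shellCut c T R k j s) := by
  unfold shellCut
  split_ifs
  · exact (stcut_smooth _ _ _ _).sub (stcut_smooth _ _ _ _)
  · exact (stcut_smooth _ _ _ _).sub contDiff_const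

lemma shell_smooth (c : E3) (T R : ℝ) (k j : ℕ) (s : ℝ) : Smooth (shell c T R k j s) :=
  (shellCut_smooth c T R k j s).mul (heatK_smooth _ _)

lemma tsupport_shell (c : E3) (T : ℝ) {R : ℝ} (hR : 0 < R) (k j : ℕ) (s : ℝ) :
    tsupport (shell c T R k j s) ⊆ closedBall c (3 / 4 * (R / 2 ^ j)) := by
  refine closure_minimal (fun x hx => ?_) isClosed_closedBall
  by_contra hh
  rw [mem_closedBall, not_le] at hh
  have h1 : cutoff c (R / 2 ^ j) x = 0 := cutoff_zero (by positivity) hh.le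
  have h2 : cutoff c (R / 2 ^ (j + 1)) x = 0 := cutoff_zero (by positivity) (by
    have : R / 2 ^ (j + 1) = (R / 2 ^ j) / 2 := by rw [pow_succ]; field_simp
    have : 0 < R / 2 ^ j := by positivity
    linarith)
  exact hx (by simp [shell, shellCut, stcut, h1, h2])

lemma sum_shell (c : E3) (T R : ℝ) (k : ℕ) (s : ℝ) (x : E3) :
    ∑ j ∈ Finset.range (k + 1), shell c T R k j s x =
      stcut c T R s x * heatK c ((R / 2 ^ (k + 1)) ^ 2 + (T - s)) x := by
  simp only [shell]
  rw [← Finset.sum_mul]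
  congr 1
  rw [Finset.sum_range_succ]
  have : ∀ j ∈ Finset.range k, shellCut c T R k j s x =
      stcut c T (R / 2 ^ j) s x - stcut c T (R / 2 ^ (j + 1)) s x := by
    intro j hj
    rw [shellCut, if_pos (Finset.mem_range.1 hj)]
  rw [Finset.sum_congr rfl this, Finset.sum_range_sub', shellCut, if_neg (lt_irrefl k)]
  simp

/-- Bounds for the dyadic pieces, uniform in the centre, the scale and the number of pieces. -/
lemma shell_bounds : ∃ A : ℝ, 0 < A ∧ ∀ (c : E3) (T R : ℝ) (k j : ℕ) (s : ℝ), 0 < R → j ≤ k → s < T →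
    (∀ x, |shell c T R k j s x| ≤ A / (R / 2 ^ j) ^ 3) ∧
    (∀ i x, |pd i (shell c T R k j s) x| ≤ A / (R / 2 ^ j) ^ 4) ∧
    ((R / 2 ^ j) ^ 2 / 2 ≤ T - s → ∀ x, shell c T R k j s x = 0) := by
  obtain ⟨D, hD, hcb⟩ := cutoff_bounds
  obtain ⟨A, hA, hch⟩ := cut_heat (3 * D) (by positivity)
  refine ⟨A, hA, fun c T R k j s hR hjk hs => ?_⟩
  have hρ : 0 < R / 2 ^ j := by positivity
  have hρ' : R / 2 ^ (j + 1) = (R / 2 ^ j) / 2 := by rw [pow_succ]; field_simp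
  have hθ : 0 < (R / 2 ^ (k + 1)) ^ 2 + (T - s) := by
    have : 0 < (R / 2 ^ (k + 1)) ^ 2 := by positivity
    linarith
  have hpd : ∀ ρ, 0 < ρ → ∀ i x, |pd i (stcut c T ρ s) x| ≤ D / ρ := by
    intro ρ hρ i x
    unfold stcut
    rw [pd_const_mul ((cutoff_smooth c ρ).diff x), abs_mul, abs_of_nonneg (tcut_nonneg _ _ _)]
    calc tcut T ρ s * |pd i (cutoff c ρ) x| ≤ 1 * (D / ρ) :=
          mul_le_mul (tcut_le_one _ _ _) ((hcb c ρ hρ x).1 i) (abs_nonneg _) (by norm_num)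
      _ = _ := one_mul _
  have b1 : ∀ x, |shellCut c T R k j s x| ≤ 1 := by
    intro x
    have h1 := stcut_mem c T (R / 2 ^ j) s x
    have h2 := stcut_mem c T (R / 2 ^ (j + 1)) s x
    unfold shellCut
    split_ifs <;> rw [abs_le] <;> constructor <;> linarith
  have b2 : ∀ i x, |pd i (shellCut c T R k j s) x| ≤ 3 * D / (R / 2 ^ j) := by
    intro i x
    have h1 := hpd _ hρ i x
    have h2 := hpd (R / 2 ^ (j + 1)) (by positivity) i x
    have e2 : D / (R / 2 ^ (j + 1)) = 2 * (D / (R / 2 ^ j)) := by rw [hρ']; field_simp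
    have e3 : 3 * D / (R / 2 ^ j) = D / (R / 2 ^ j) + 2 * (D / (R / 2 ^ j)) := by ring
    rw [e2] at h2
    rw [e3]
    have h0 : 0 < D / (R / 2 ^ j) := by positivity
    by_cases hj : j < k
    · have e : shellCut c T R k j s =
          fun x => stcut c T (R / 2 ^ j) s x + (-1) * stcut c T (R / 2 ^ (j + 1)) s x :=
        funext fun x => by rw [shellCut, if_pos hj]; ring
      have sm := stcut_smooth c T (R / 2 ^ (j + 1)) s
      have sm2 : Smooth fun x => (-1 : ℝ) * stcut c T (R / 2 ^ (j + 1)) s x := contDiff_const.mul sm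
      rw [e, pd_add ((stcut_smooth _ _ _ _).diff x) (sm2.diff x),
        pd_const_mul (sm.diff x)]
      refine (abs_add_le _ _).trans (add_le_add h1 ?_)
      rw [abs_mul, abs_neg, abs_one, one_mul]; exact h2
    · have e : shellCut c T R k j s = stcut c T (R / 2 ^ j) s :=
        funext fun x => by rw [shellCut, if_neg hj]; ring
      rw [e]; linarith
  -- either the time is at parabolic distance from the pole, or both cutoffs equal `1` near it
  have b3 : (R / 2 ^ j) ^ 2 / 16 ≤ (R / 2 ^ (k + 1)) ^ 2 + (T - s) ∨
      ∀ x ∈ ball c (R / 2 ^ j / 4), shellCut c T R k j s x = 0 := by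
    by_cases hj : j < k
    · by_cases h : (R / 2 ^ j) ^ 2 / 16 ≤ (R / 2 ^ (k + 1)) ^ 2 + (T - s)
      · exact Or.inl h
      · right
        intro x hx
        rw [not_le] at h
        have h0 : 0 < (R / 2 ^ (k + 1)) ^ 2 := by positivity
        rw [mem_ball] at hx
        have e1 : stcut c T (R / 2 ^ j) s x = 1 := by
          rw [stcut, tcut_one hρ (by linarith [sq_nonneg (R / 2 ^ j)]), cutoff_one hρ (by linarith), one_mul]
        have e2 : stcut c T (R / 2 ^ (j + 1)) s x = 1 := by
          rw [hρ', stcut, tcut_one (by positivity) (by nlinarith), cutoff_one (by positivity) (by linarith),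
            one_mul]
        rw [shellCut, if_pos hj, e1, e2, sub_self]
    · left
      have : j = k := le_antisymm hjk (not_lt.1 hj)
      subst this
      rw [hρ']
      nlinarith [sq_nonneg (R / 2 ^ j)]
  obtain ⟨r1, r2⟩ := hch hρ hθ (shellCut_smooth c T R k j s) b1 b2 b3
  refine ⟨r1, r2, fun h x => ?_⟩
  have e1 : tcut T (R / 2 ^ j) s = 0 := tcut_zero hρ h
  have e2 : tcut T (R / 2 ^ (j + 1)) s = 0 := tcut_zero (by positivity) (by
    rw [hρ']; nlinarith [sq_nonneg (R / 2 ^ j)])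
  simp [shell, shellCut, stcut, e1, e2]

/-! ### The test function of the energy inequality -/

/-- The localised backward heat kernel. -/
def phiK (c : E3) (T R κ : ℝ) (x : E3) (s : ℝ) : ℝ :=
  stcut c T R s x * heatK c (κ ^ 2 + (T - s)) x

/-- The error `∂ₛφ + Δφ` of the localised backward heat kernel. -/
def heatErr (c : E3) (T R κ s : ℝ) (x : E3) : ℝ :=
  deriv (tcut T R) s * (cutoff c R x * heatK c (κ ^ 2 + (T - s)) x) +
  tcut T R s * (2 * (∑ i, pd i (cutoff c R) x * pd i (heatK c (κ ^ 2 + (T - s))) x) +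
    heatK c (κ ^ 2 + (T - s)) x * lapScalar (cutoff c R) x)

lemma phiK_smooth (c : E3) (T R κ s : ℝ) : Smooth (fun x => phiK c T R κ x s) :=
  (stcut_smooth c T R s).mul (heatK_smooth _ _)

/-- The heat kernel solves the backward heat equation, so only derivatives of the cutoff remain. -/
lemma phiK_heat (c : E3) {T R κ s : ℝ} (hκ : 0 < κ) (hs : s < T) (x : E3) :
    deriv (fun τ => phiK c T R κ x τ) s + lapScalar (fun y => phiK c T R κ y s) x =
      heatErr c T R κ s x := by
  have hθ : 0 < κ ^ 2 + (T - s) := by nlinarith [pow_pos hκ 2]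
  have h1 : HasDerivAt (fun s => κ ^ 2 + (T - s)) (-1) s :=
    ((hasDerivAt_id s).const_sub T).const_add _
  have h2 := (heatK_deriv c x hθ).scomp s h1
  have h3 : HasDerivAt (tcut T R) (deriv (tcut T R) s) s :=
    ((tcut_smooth T R).differentiable (by simp) s).hasDerivAt
  have h4 : deriv (fun τ => phiK c T R κ x τ) s = _ := ((h3.mul_const (cutoff c R x)).mul h2).deriv
  have e : (fun y => phiK c T R κ y s) =
      fun y => tcut T R s * (cutoff c R y * heatK c (κ ^ 2 + (T - s)) y) :=
    funext fun y => by rw [phiK, stcut, mul_assoc]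
  have hsm := (cutoff_smooth c R).mul (heatK_smooth c (κ ^ 2 + (T - s)))
  have e5 : lapScalar (fun y => tcut T R s * (cutoff c R y * heatK c (κ ^ 2 + (T - s)) y)) x =
      tcut T R s * lapScalar (fun y => cutoff c R y * heatK c (κ ^ 2 + (T - s)) y) x := by
    rw [lap_eq, lap_eq, Finset.mul_sum]
    refine Finset.sum_congr rfl fun i _ => ?_
    rw [pd_scalar _ hsm, pd_scalar _ (hsm.pd i)]
  rw [h4, e, e5, lap_mul (cutoff_smooth c R) (heatK_smooth _ _), lap_heatK c hθ, heatErr]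
  simp only [smul_eq_mul, Function.comp]
  ring

lemma heatErr_cont (c : E3) (T R κ s : ℝ) : Continuous (heatErr c T R κ s) := by
  have h1 := (heatK_smooth c (κ ^ 2 + (T - s)))
  have h2 := cutoff_smooth c R
  refine (continuous_const.mul (h2.cont.mul h1.cont)).add (continuous_const.mul
    ((continuous_const.mul (continuous_finsetSum _ fun i _ => (h2.pd i).cont.mul (h1.pd i).cont)).add
      (h1.cont.mul (smooth_lap h2).cont)))

lemma heatErr_zero (c : E3) (T κ s : ℝ) {R : ℝ} {x : E3} (hx : x ∉ tsupport (cutoff c R)) :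
    heatErr c T R κ s x = 0 := by
  have h1 : cutoff c R x = 0 := image_eq_zero_of_notMem_tsupport hx
  have h2 : ∀ i, pd i (cutoff c R) x = 0 := fun i => pd_eq_zero hx i
  have h3 : lapScalar (cutoff c R) x = 0 :=
    image_eq_zero_of_notMem_tsupport fun hh => hx (tsupport_lap _ hh)
  simp [heatErr, h1, h2, h3]

lemma tsupport_heatErr (c : E3) (T R κ s : ℝ) :
    tsupport (heatErr c T R κ s) ⊆ tsupport (cutoff c R) := by
  refine closure_minimal (fun x hx => ?_) (isClosed_tsupport _)
  by_contra hh
  exact hx (heatErr_zero c T κ s hh)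

/-- The derivatives of the cutoff live at parabolic distance `R` from the pole, where the heat kernel
is of size `R⁻³`. -/
lemma heatErr_bound : ∃ C : ℝ, 0 < C ∧ ∀ (c : E3) (T R κ s : ℝ) (x : E3), 0 < R → 0 < κ → s < T →
    |heatErr c T R κ s x| ≤ C / R ^ 5 := by
  obtain ⟨D, hD, hcb⟩ := cutoff_bounds
  obtain ⟨E, hE, htd⟩ := tcut_deriv
  refine ⟨3200 * E + 48000 * D, by positivity, fun c T R κ s x hR hκ hs => ?_⟩
  have hθ : 0 < κ ^ 2 + (T - s) := by nlinarith [pow_pos hκ 2]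
  set θ := κ ^ 2 + (T - s) with hθd
  have hkb : ((R / 2) ^ 2 ≤ θ ∨ R / 2 ≤ ‖x - c‖) →
      (heatK c θ x ≤ 3200 / R ^ 3 ∧ ∀ i, |pd i (heatK c θ) x| ≤ 6400 / R ^ 4) := by
    intro hh
    obtain ⟨h1, h2⟩ := heatK_bounds c x hθ (by positivity) hh
    refine ⟨h1.trans (le_of_eq ?_), fun i => (h2 i).trans (le_of_eq ?_)⟩
    · field_simp; norm_num
    · field_simp; norm_num
  have g0 := heatK_nonneg c θ x
  have p1 : |deriv (tcut T R) s * (cutoff c R x * heatK c θ x)| ≤ (E / R ^ 2) * (3200 / R ^ 3) := by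
    obtain ⟨d1, d2⟩ := htd T R s hR
    by_cases h : T - s < R ^ 2 / 4
    · rw [d2 h, zero_mul, abs_zero]; positivity
    · have hk := (hkb (Or.inl (by nlinarith [pow_pos hκ 2]))).1
      rw [abs_mul, abs_of_nonneg (mul_nonneg (cutoff_nonneg c R x) g0)]
      refine mul_le_mul d1 ?_ (mul_nonneg (cutoff_nonneg c R x) g0) (by positivity)
      exact (mul_le_of_le_one_left g0 (cutoff_le_one c R x)).trans hk
  have p2 : |tcut T R s * (2 * (∑ i, pd i (cutoff c R) x * pd i (heatK c θ) x) +
      heatK c θ x * lapScalar (cutoff c R) x)| ≤ 2 * (3 * ((D / R) * (6400 / R ^ 4))) +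
        (3200 / R ^ 3) * (3 * (D / R ^ 2)) := by
    rw [abs_mul, abs_of_nonneg (tcut_nonneg _ _ _)]
    refine (mul_le_of_le_one_left (abs_nonneg _) (tcut_le_one _ _ _)).trans ?_
    by_cases h : R / 2 ≤ ‖x - c‖
    · obtain ⟨k1, k2⟩ := hkb (Or.inr h)
      obtain ⟨c1, c2⟩ := hcb c R hR x
      refine (abs_add_le _ _).trans (add_le_add ?_ ?_)
      · rw [abs_mul, abs_two]
        refine mul_le_mul_of_nonneg_left ((Finset.abs_sum_le_sum_abs _ _).trans ?_) (by norm_num)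
        refine (Finset.sum_le_sum fun i _ => ?_).trans (le_of_eq (b := 3 * ((D / R) * (6400 / R ^ 4)))
          (a := ∑ i : Fin 3, (D / R) * (6400 / R ^ 4)) (by simp))
        rw [abs_mul]
        exact mul_le_mul (c1 i) (k2 i) (abs_nonneg _) (by positivity)
      · rw [abs_mul, abs_of_nonneg g0]
        refine mul_le_mul k1 ?_ (abs_nonneg _) (by positivity)
        rw [lap_eq]
        refine (Finset.abs_sum_le_sum_abs _ _).trans ((Finset.sum_le_sum fun i _ => c2 i i).trans ?_)
        simp
    · have hev : cutoff c R =ᶠ[𝓝 x] fun _ => (1 : ℝ) := by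
        have : x ∈ ball c (R / 2) := by rw [mem_ball, dist_eq_norm]; linarith
        filter_upwards [isOpen_ball.mem_nhds this] with y hy
        exact cutoff_one hR (mem_ball.1 hy).le
      have e1 : ∀ i, pd i (cutoff c R) x = 0 := fun i => by rw [pd_congr hev]; simp [pd]
      have e2 : lapScalar (cutoff c R) x = 0 := by
        rw [lap_eq]
        refine Finset.sum_eq_zero fun i _ => ?_
        rw [pd_congr (pd_eventuallyEq hev i)]
        have : pd i (fun _ : E3 => (1 : ℝ)) = fun _ => 0 := funext fun y => by simp [pd]
        rw [this]; simp [pd]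
      simp only [e1, e2, zero_mul, Finset.sum_const_zero, mul_zero, add_zero, abs_zero]
      positivity
  refine (abs_add_le _ _).trans ((add_le_add p1 p2).trans (le_of_eq ?_))
  field_simp
  ring

/-- Time cutoff equal to `1` up to a time slightly after `t` and to `0` near `T`. -/
def endCut (T t s : ℝ) : ℝ := Real.smoothTransition (((t + 2 * T) / 3 - s) / ((T - t) / 3))

lemma endCut_smooth (T t : ℝ) : ContDiff ℝ (⊤ : ℕ∞) (endCut T t) :=
  Real.smoothTransition.contDiff.comp (by fun_prop)

lemma endCut_one {T t s : ℝ} (ht : t < T) (hs : s ≤ (2 * t + T) / 3) : endCut T t s = 1 := by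
  refine Real.smoothTransition.one_of_one_le ?_
  rw [le_div_iff₀ (by linarith)]; linarith

lemma endCut_zero {T t s : ℝ} (ht : t < T) (hs : (t + 2 * T) / 3 ≤ s) : endCut T t s = 0 := by
  refine Real.smoothTransition.zero_of_nonpos ?_
  exact div_nonpos_of_nonpos_of_nonneg (by linarith) (by linarith)

/-- The test function used in the local energy inequality. -/
def testK (c : E3) (T R κ t : ℝ) (x : E3) (s : ℝ) : ℝ := endCut T t s * phiK c T R κ x s

lemma testK_nonneg (c : E3) (T R κ t : ℝ) (x : E3) (s : ℝ) : 0 ≤ testK c T R κ t x s :=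
  mul_nonneg (Real.smoothTransition.nonneg _)
    (mul_nonneg (stcut_mem _ _ _ _ _).1 (heatK_nonneg _ _ _))

lemma testK_smooth (c : E3) {T R κ t : ℝ} (ht : t < T) (hκ : 0 < κ) :
    ContDiff ℝ (⊤ : ℕ∞) (fun p : E3 × ℝ => testK c T R κ t p.1 p.2) := by
  rw [contDiff_iff_contDiffAt]
  intro p
  by_cases hp : p.2 < T
  · have h1 : ContDiffAt ℝ (⊤ : ℕ∞) (fun p : E3 × ℝ => heatK c ((κ ^ 2 + T) - p.2) p.1) p :=
      heatK_joint c _ (by nlinarith [pow_pos hκ 2])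
    have e : (fun p : E3 × ℝ => testK c T R κ t p.1 p.2) = fun p : E3 × ℝ =>
        endCut T t p.2 * ((tcut T R p.2 * cutoff c R p.1) * heatK c ((κ ^ 2 + T) - p.2) p.1) :=
      funext fun p => by rw [testK, phiK, stcut, add_sub_assoc]
    rw [e]
    refine ((endCut_smooth T t).comp contDiff_snd).contDiffAt.mul (ContDiffAt.mul ?_ h1)
    exact (((tcut_smooth T R).comp contDiff_snd).mul
      (ContDiff.comp (cutoff_smooth c R) contDiff_fst)).contDiffAt
  · have : (fun p : E3 × ℝ => testK c T R κ t p.1 p.2) =ᶠ[𝓝 p] fun _ => 0 := by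
      have ho : IsOpen {p : E3 × ℝ | (t + 2 * T) / 3 < p.2} := isOpen_lt continuous_const continuous_snd
      filter_upwards [ho.mem_nhds (show (t + 2 * T) / 3 < p.2 by linarith)] with y hy
      rw [testK, endCut_zero ht (le_of_lt hy), zero_mul]
    exact contDiffAt_const.congr_of_eventuallyEq this

lemma testK_tsupport (c : E3) {T R κ t : ℝ} (ht : t < T) (hR : 0 < R) :
    tsupport (fun p : E3 × ℝ => testK c T R κ t p.1 p.2) ⊆
      closedBall c (3 / 4 * R) ×ˢ Icc (T - R ^ 2 / 2) ((t + 2 * T) / 3) := by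
  refine closure_minimal (fun p hp => ?_) (isClosed_closedBall.prod isClosed_Icc)
  rw [Function.mem_support] at hp
  refine ⟨?_, ?_, ?_⟩
  · by_contra hh
    rw [mem_closedBall, not_le] at hh
    exact hp (by simp [testK, phiK, stcut, cutoff_zero hR hh.le])
  · by_contra hh
    rw [not_le] at hh
    exact hp (by simp [testK, phiK, stcut, tcut_zero hR (show R ^ 2 / 2 ≤ T - p.2 by linarith)])
  · by_contra hh
    rw [not_le] at hh
    exact hp (by simp [testK, endCut_zero ht hh.le])

lemma testK_compact (c : E3) {T R κ t : ℝ} (ht : t < T) (hR : 0 < R) :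
    HasCompactSupport (fun p : E3 × ℝ => testK c T R κ t p.1 p.2) :=
  ((isCompact_closedBall c _).prod isCompact_Icc).of_isClosed_subset (isClosed_tsupport _)
    (testK_tsupport c ht hR)

lemma testK_eq (c : E3) {T R κ t : ℝ} (ht : t < T) (x : E3) {s : ℝ} (hs : s ≤ t) :
    testK c T R κ t x s = phiK c T R κ x s := by
  rw [testK, endCut_one ht (by linarith), one_mul]

lemma testK_deriv (c : E3) {T R κ t : ℝ} (ht : t < T) (x : E3) {s : ℝ} (hs : s ≤ t) :
    deriv (fun τ => testK c T R κ t x τ) s = deriv (fun τ => phiK c T R κ x τ) s := by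
  refine Filter.EventuallyEq.deriv_eq ?_
  filter_upwards [Iio_mem_nhds (show s < (2 * t + T) / 3 by linarith)] with τ hτ
  rw [testK, endCut_one ht (le_of_lt hτ), one_mul]

lemma phiK_lower (c : E3) {T R κ : ℝ} (hκ : 0 < κ) (hκR : κ ≤ R / 2) {x : E3} (hx : x ∈ ball c κ)
    {s : ℝ} (hs : s ∈ Ioo (T - κ ^ 2) T) : 1 / (8 * κ ^ 3) ≤ phiK c T R κ x s := by
  have hR : 0 < R := by linarith
  rw [mem_ball] at hx
  have e1 : stcut c T R s x = 1 := by
    rw [stcut, tcut_one hR (by nlinarith [hs.1]), cutoff_one hR (by linarith), one_mul]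
  rw [phiK, e1, one_mul]
  rw [dist_eq_norm] at hx
  exact heatK_lower c x hκ (by linarith [hs.2]) (by linarith [hs.1]) hx.le

/-! ### The localised energy inequality -/

/-- The density `|v|³ + |q|^{3/2}`, whose integral measures smallness. -/
def w3 (v : E3 → ℝ → E3) (q : E3 → ℝ → ℝ) (x : E3) (s : ℝ) : ℝ :=
  ‖v x s‖ ^ 3 + |q x s| ^ ((3:ℝ)/2)

/-- The energy flux through the `j`-th dyadic shell at time `s`. -/
def fluxJ (v : E3 → ℝ → E3) (q : E3 → ℝ → ℝ) (c : E3) (T R : ℝ) (k j : ℕ) (s : ℝ) : ℝ :=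
  ∫ x, (‖v x s‖ ^ 2 + 2 * q x s) * dens (fun x => v x s) (shell c T R k j s) x

lemma w3_nonneg (v : E3 → ℝ → E3) (q : E3 → ℝ → ℝ) (x : E3) (s : ℝ) : 0 ≤ w3 v q x s := by
  unfold w3; positivity

lemma rpow_three_half {y : ℝ} (hy : 0 ≤ y) : y ^ ((3:ℝ)/2) = y * √y := by
  rw [show (3:ℝ)/2 = 1 + 1/2 by norm_num, Real.rpow_add' hy (by norm_num), Real.rpow_one,
    Real.sqrt_eq_rpow]

lemma young32 {a : ℝ} (ha : 0 ≤ a) (y : ℝ) : |y| * a ≤ a ^ 3 + |y| ^ ((3:ℝ)/2) := by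
  rw [rpow_three_half (abs_nonneg y)]
  have h0 := abs_nonneg y
  have h1 := Real.sqrt_nonneg |y|
  rcases le_total a (√|y|) with h | h
  · have : |y| * a ≤ |y| * √|y| := by gcongr
    have : 0 ≤ a ^ 3 := by positivity
    linarith
  · have h2 : |y| ≤ a ^ 2 := by
      rw [← Real.sq_sqrt h0]; gcongr
    have : |y| * a ≤ a ^ 2 * a := by gcongr
    have : 0 ≤ |y| * √|y| := by positivity
    nlinarith

lemma dens_abs (u : E3 → E3) (Γ : E3 → ℝ) {x : E3} {G : ℝ} (hG : ∀ i, |pd i Γ x| ≤ G) :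
    |dens u Γ x| ≤ 3 * G * ‖u x‖ := by
  unfold dens
  refine (Finset.abs_sum_le_sum_abs _ _).trans ?_
  have : ∀ i ∈ Finset.univ, |u x i * pd i Γ x| ≤ G * ‖u x‖ := fun i _ => by
    rw [abs_mul, mul_comm]
    exact mul_le_mul (hG i) (abs_coord_le _ i) (abs_nonneg _) ((abs_nonneg _).trans (hG i))
  refine (Finset.sum_le_sum this).trans ?_
  simp; linarith

lemma flux_pt (v : E3 → ℝ → E3) (q : E3 → ℝ → ℝ) (Γ : E3 → ℝ) {x : E3} {s G : ℝ}
    (hG : ∀ i, |pd i Γ x| ≤ G) :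
    |(‖v x s‖ ^ 2 + 2 * q x s) * dens (fun x => v x s) Γ x| ≤ 9 * G * w3 v q x s := by
  have h1 := dens_abs (fun x => v x s) Γ hG
  have hG0 : 0 ≤ G := (abs_nonneg _).trans (hG 0)
  have h2 := young32 (norm_nonneg (v x s)) (q x s)
  have h3 : |‖v x s‖ ^ 2 + 2 * q x s| ≤ ‖v x s‖ ^ 2 + 2 * |q x s| := by
    refine (abs_add_le _ _).trans ?_
    rw [abs_mul, abs_of_nonneg (sq_nonneg _)]; norm_num
  rw [abs_mul]
  calc _ ≤ (‖v x s‖ ^ 2 + 2 * |q x s|) * (3 * G * ‖v x s‖) := by gcongr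
    _ = 3 * G * (‖v x s‖ ^ 3 + 2 * (|q x s| * ‖v x s‖)) := by ring
    _ ≤ 3 * G * (‖v x s‖ ^ 3 + 2 * (‖v x s‖ ^ 3 + |q x s| ^ ((3:ℝ)/2))) := by gcongr
    _ ≤ 3 * G * (3 * w3 v q x s) := by
        have : 0 ≤ |q x s| ^ ((3:ℝ)/2) := by positivity
        refine mul_le_mul_of_nonneg_left ?_ (by positivity)
        unfold w3; linarith
    _ = _ := by ring

lemma dens_zero (u : E3 → E3) {Γ : E3 → ℝ} {x : E3} (hx : x ∉ tsupport Γ) : dens u Γ x = 0 :=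
  Finset.sum_eq_zero fun i _ => by rw [pd_eq_zero hx i, mul_zero]

lemma dens_measurable {u : E3 → E3} (hu : Measurable u) {Γ : E3 → ℝ} (hΓ : Smooth Γ) :
    Measurable (dens u Γ) :=
  Finset.measurable_sum _ fun i _ =>
    ((EuclideanSpace.proj i : E3 →L[ℝ] ℝ).continuous.measurable.comp hu).mul (hΓ.pd i).cont.measurable

lemma tsupport_shell_ball (c : E3) (T : ℝ) {R : ℝ} (hR : 0 < R) (k j : ℕ) (s : ℝ) :
    tsupport (shell c T R k j s) ⊆ ball c R := by
  refine (tsupport_shell c T hR k j s).trans (closedBall_subset_ball ?_)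
  have : R / 2 ^ j ≤ R := div_le_self hR.le (one_le_pow₀ (by norm_num))
  linarith

section
variable {v : E3 → ℝ → E3} {q : E3 → ℝ → ℝ} {dv : E3 → ℝ → Fin 3 → E3} {x₀ : E3} {t₀ r : ℝ}

/-- The flux integrand is dominated by `9 G w₃` on the ball. -/
lemma flux_integrable (h : IsSuitableWeakSolution v q dv x₀ t₀ r) {c : E3} {R s G : ℝ}
    {Γ : E3 → ℝ} (hΓ : Smooth Γ) (hs : tsupport Γ ⊆ ball c R) (hG : ∀ i x, |pd i Γ x| ≤ G)
    (hw : IntegrableOn (fun x => w3 v q x s) (ball c R)) :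
    Integrable (fun x => (‖v x s‖ ^ 2 + 2 * q x s) * dens (fun x => v x s) Γ x) ∧
    |∫ x, (‖v x s‖ ^ 2 + 2 * q x s) * dens (fun x => v x s) Γ x| ≤
      9 * G * ∫ x in ball c R, w3 v q x s := by
  have hm : Measurable fun x => (‖v x s‖ ^ 2 + 2 * q x s) * dens (fun x => v x s) Γ x :=
    (((h.slice_v s).norm.pow_const 2).add ((h.slice_q s).const_mul 2)).mul
      (dens_measurable (h.slice_v s) hΓ)
  have h0 : ∀ x, x ∉ ball c R → (‖v x s‖ ^ 2 + 2 * q x s) * dens (fun x => v x s) Γ x = 0 :=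
    fun x hx => by rw [dens_zero _ fun hh => hx (hs hh), mul_zero]
  have hi : IntegrableOn (fun x => (‖v x s‖ ^ 2 + 2 * q x s) * dens (fun x => v x s) Γ x)
      (ball c R) :=
    (hw.const_mul (9 * G)).mono' hm.aestronglyMeasurable
      (Eventually.of_forall fun x => flux_pt v q Γ fun i => hG i x)
  refine ⟨(integrableOn_iff_integrable_of_support_subset
    (Function.support_subset_iff'.2 h0)).1 hi, ?_⟩
  rw [← setIntegral_eq_integral_of_forall_compl_eq_zero h0, ← integral_const_mul,
    ← Real.norm_eq_abs]
  exact norm_integral_le_of_norm_le (hw.const_mul (9 * G))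
    (Eventually.of_forall fun x => flux_pt v q Γ fun i => hG i x)

/-- At a fixed time `s ≤ t < T`, the right-hand integrand of the energy inequality is bounded by the
error of the cutoff, `C/R⁵ ∫ |v|²`, and the fluxes through the dyadic shells. -/
lemma energy_right : ∃ C : ℝ, 0 < C ∧ ∀ {v : E3 → ℝ → E3} {q : E3 → ℝ → ℝ}
    {dv : E3 → ℝ → Fin 3 → E3} {x₀ : E3} {t₀ r : ℝ}, IsSuitableWeakSolution v q dv x₀ t₀ r →
    ∀ {c : E3} {T R t s : ℝ} {k : ℕ}, 0 < R → t < T → s ≤ t →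
    IntegrableOn (fun x => w3 v q x s) (ball c R) →
    IntegrableOn (fun x => ‖v x s‖ ^ 2) (ball c R) →
    |∫ x, (‖v x s‖ ^ 2 * (deriv (fun τ => testK c T R (R / 2 ^ (k + 1)) t x τ) s +
          lapScalar (fun y => testK c T R (R / 2 ^ (k + 1)) t y s) x)
        + (‖v x s‖ ^ 2 + 2 * q x s) * (∑ i : Fin 3, v x s i *
          fderiv ℝ (fun y => testK c T R (R / 2 ^ (k + 1)) t y s) x (EuclideanSpace.single i 1)))| ≤
      C / R ^ 5 * (∫ x in ball c R, ‖v x s‖ ^ 2) +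
        ∑ j ∈ Finset.range (k + 1), |fluxJ v q c T R k j s| := by
  obtain ⟨C, hC, hE⟩ := heatErr_bound
  obtain ⟨A, hA, hS⟩ := shell_bounds
  refine ⟨C, hC, ?_⟩
  intro v q dv x₀ t₀ r h c T R t s k hR ht hst hw hv
  set κ := R / 2 ^ (k + 1) with hκd
  have hκ : 0 < κ := by positivity
  have hsT : s < T := hst.trans_lt ht
  have e1 : (fun y => testK c T R κ t y s) = fun y => phiK c T R κ y s :=
    funext fun y => testK_eq c ht y hst
  have e2 : (fun y => phiK c T R κ y s) = fun y => ∑ j ∈ Finset.range (k + 1), shell c T R k j s y :=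
    funext fun y => (sum_shell c T R k s y).symm
  have e3 : ∀ x, (‖v x s‖ ^ 2 * (deriv (fun τ => testK c T R κ t x τ) s +
          lapScalar (fun y => testK c T R κ t y s) x)
        + (‖v x s‖ ^ 2 + 2 * q x s) * (∑ i : Fin 3, v x s i *
          fderiv ℝ (fun y => testK c T R κ t y s) x (EuclideanSpace.single i 1))) =
      ‖v x s‖ ^ 2 * heatErr c T R κ s x + ∑ j ∈ Finset.range (k + 1),
        (‖v x s‖ ^ 2 + 2 * q x s) * dens (fun x => v x s) (shell c T R k j s) x := by
    intro x
    rw [testK_deriv c ht x hst, e1, phiK_heat c hκ hsT, e2, ← Finset.mul_sum]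
    congr 2
    unfold dens
    rw [Finset.sum_comm]
    refine Finset.sum_congr rfl fun i _ => ?_
    rw [← Finset.mul_sum]
    congr 1
    rw [fderiv_fun_sum fun j _ => (shell_smooth c T R k j s).diff x, _root_.sum_apply]
    rfl
  simp_rw [e3]
  have hm1 : Measurable fun x => ‖v x s‖ ^ 2 * heatErr c T R κ s x :=
    ((h.slice_v s).norm.pow_const 2).mul (heatErr_cont c T R κ s).measurable
  have hb1 : ∀ x, ‖‖v x s‖ ^ 2 * heatErr c T R κ s x‖ ≤ C / R ^ 5 * ‖v x s‖ ^ 2 := fun x => by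
    rw [Real.norm_eq_abs, abs_mul, abs_of_nonneg (sq_nonneg _), mul_comm]
    exact mul_le_mul_of_nonneg_right (hE c T R κ s x hR hκ hsT) (sq_nonneg _)
  have h01 : ∀ x, x ∉ ball c R → ‖v x s‖ ^ 2 * heatErr c T R κ s x = 0 := fun x hx => by
    rw [heatErr_zero c T κ s fun hh => hx (tsupport_cutoff' hR hh), mul_zero]
  have hi1 : IntegrableOn (fun x => ‖v x s‖ ^ 2 * heatErr c T R κ s x) (ball c R) :=
    (hv.const_mul (C / R ^ 5)).mono' hm1.aestronglyMeasurable (Eventually.of_forall hb1)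
  have hi1' := (integrableOn_iff_integrable_of_support_subset
    (Function.support_subset_iff'.2 h01)).1 hi1
  have hsh : ∀ j ∈ Finset.range (k + 1), Integrable fun x =>
      (‖v x s‖ ^ 2 + 2 * q x s) * dens (fun x => v x s) (shell c T R k j s) x := fun j hj =>
    (flux_integrable h (shell_smooth c T R k j s) (tsupport_shell_ball c T hR k j s)
      (hS c T R k j s hR (Nat.lt_succ_iff.1 (Finset.mem_range.1 hj)) hsT).2.1 hw).1
  rw [integral_add hi1' (integrable_finsetSum _ hsh), integral_finsetSum _ hsh]
  refine (abs_add_le _ _).trans (add_le_add ?_ (Finset.abs_sum_le_sum_abs _ _))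
  rw [← setIntegral_eq_integral_of_forall_compl_eq_zero h01, ← integral_const_mul,
    ← Real.norm_eq_abs]
  exact norm_integral_le_of_norm_le (hv.const_mul _) (Eventually.of_forall hb1)

/-- Before the initial time of the cylinder the test function vanishes. -/
lemma energy_right_zero {c : E3} {T R κ t s : ℝ} (v : E3 → ℝ → E3) (q : E3 → ℝ → ℝ)
    (hR : 0 < R) (hκ : 0 < κ) (ht : t < T) (hst : s ≤ t) (hs : s ≤ T - R ^ 2) :
    ∫ x, (‖v x s‖ ^ 2 * (deriv (fun τ => testK c T R κ t x τ) s +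
          lapScalar (fun y => testK c T R κ t y s) x)
        + (‖v x s‖ ^ 2 + 2 * q x s) * (∑ i : Fin 3, v x s i *
          fderiv ℝ (fun y => testK c T R κ t y s) x (EuclideanSpace.single i 1))) = 0 := by
  have hsT : s < T := hst.trans_lt ht
  have hR2 : 0 < R ^ 2 := by positivity
  have h0 : tcut T R s = 0 := tcut_zero hR (by linarith)
  have h1 : deriv (tcut T R) s = 0 := by
    have : tcut T R =ᶠ[𝓝 s] fun _ => 0 := by
      filter_upwards [Iio_mem_nhds (show s < T - R ^ 2 / 2 by linarith)] with y hy
      exact tcut_zero hR (by simp only [mem_Iio] at hy; linarith)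
    rw [this.deriv_eq, deriv_const]
  have e1 : (fun y => testK c T R κ t y s) = fun y => phiK c T R κ y s :=
    funext fun y => testK_eq c ht y hst
  have e2 : (fun y => phiK c T R κ y s) = fun _ => 0 :=
    funext fun y => by rw [phiK, stcut, h0]; simp
  have e3 : ∀ x, deriv (fun τ => testK c T R κ t x τ) s +
      lapScalar (fun y => testK c T R κ t y s) x = 0 := fun x => by
    rw [testK_deriv c ht x hst, e1, phiK_heat c hκ hsT, heatErr, h0, h1]; ring
  simp_rw [e3, e1, e2]
  simp

/-- The left-hand side of the energy inequality controls the small cylinder. -/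
lemma energy_left (h : IsSuitableWeakSolution v q dv x₀ t₀ r) {c : E3} {T R κ t : ℝ}
    (hR : 0 < R) (hc : ball c R ⊆ ball x₀ r) (hT0 : t₀ - r ^ 2 ≤ T - R ^ 2) (hT : T ≤ t₀)
    (hκ : 0 < κ) (hκR : κ ≤ R / 2) (ht : t ∈ tI T κ)
    (hv : IntegrableOn (fun x => ‖v x t‖ ^ 2) (ball x₀ r)) :
    1 / (8 * κ ^ 3) * ((∫ x in ball c κ, ‖v x t‖ ^ 2) +
      2 * ∫ s in Ioo (T - κ ^ 2) t, ∫ x in ball c κ, gradSq dv x s) ≤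
    (∫ x, testK c T R κ t x t * ‖v x t‖ ^ 2) +
      2 * ∫ s in Ioc (t₀ - r ^ 2) t, ∫ x, testK c T R κ t x s * gradSq dv x s := by
  have htT : t < T := ht.2
  have hsub : ball c κ ⊆ ball x₀ r := (ball_subset_ball (by linarith)).trans hc
  have hκ2 : κ ^ 2 ≤ R ^ 2 := by gcongr; linarith
  have hsm := testK_smooth c (R := R) htT hκ
  have hcont : Continuous fun p : E3 × ℝ => testK c T R κ t p.1 p.2 := hsm.continuous
  obtain ⟨B, hB⟩ := hcont.bounded_above_of_compact_support (testK_compact c htT hR)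
  have hslice : ∀ s, Continuous fun x => testK c T R κ t x s := fun s =>
    hcont.comp (by fun_prop : Continuous fun x : E3 => (x, s))
  have hz : ∀ s x, x ∉ ball x₀ r → testK c T R κ t x s = 0 := fun s x hx => by
    refine image_eq_zero_of_notMem_tsupport (f := fun p : E3 × ℝ => testK c T R κ t p.1 p.2)
      (x := (x, s)) fun hh => hx (hc ?_)
    exact closedBall_subset_ball (by linarith) (testK_tsupport c htT hR hh).1
  have hlow : ∀ s ∈ Ioc (T - κ ^ 2) t, ∀ x ∈ ball c κ, 1 / (8 * κ ^ 3) ≤ testK c T R κ t x s := by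
    intro s hs x hx
    rw [testK_eq c htT x hs.2]
    exact phiK_lower c hκ hκR hx ⟨hs.1, hs.2.trans_lt htT⟩
  -- a weighted lower bound on one time slice
  have key : ∀ s ∈ Ioc (T - κ ^ 2) t, ∀ f : E3 → ℝ, (∀ x, 0 ≤ f x) → IntegrableOn f (ball x₀ r) →
      1 / (8 * κ ^ 3) * ∫ x in ball c κ, f x ≤ ∫ x, testK c T R κ t x s * f x := by
    intro s hs f hf hfi
    have hi : IntegrableOn (fun x => testK c T R κ t x s * f x) (ball x₀ r) :=
      hfi.bdd_mul (c := B) (hslice s).aestronglyMeasurable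
        (Eventually.of_forall fun x => hB (x, s))
    have e : ∫ x in ball x₀ r, testK c T R κ t x s * f x = ∫ x, testK c T R κ t x s * f x :=
      setIntegral_eq_integral_of_forall_compl_eq_zero fun x hx => by rw [hz s x hx, zero_mul]
    rw [← integral_const_mul, ← e]
    refine le_trans ?_ (setIntegral_mono_set hi (Eventually.of_forall fun x =>
      mul_nonneg (testK_nonneg _ _ _ _ _ _ _) (hf x)) hsub.eventuallyLE)
    exact setIntegral_mono_on ((hfi.mono_set hsub).const_mul _) (hi.mono_set hsub)
      measurableSet_ball fun x hx => mul_le_mul_of_nonneg_right (hlow s hs x hx) (hf x)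
  have h1 := key t ⟨ht.1, le_rfl⟩ (fun x => ‖v x t‖ ^ 2) (fun _ => sq_nonneg _) hv
  have hgi : IntegrableOn (fun z : E3 × ℝ => testK c T R κ t z.1 z.2 * gradSq dv z.1 z.2)
      (pCyl x₀ t₀ r) :=
    h.int_grad.bdd_mul (c := B) hcont.aestronglyMeasurable (Eventually.of_forall fun z => hB z)
  have hgt : IntegrableOn (fun s => ∫ x, testK c T R κ t x s * gradSq dv x s) (tI t₀ r) := by
    have := hgi
    rw [IntegrableOn, vol_cyl] at this
    refine this.integral_prod_right.congr (Eventually.of_forall fun s => ?_)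
    exact setIntegral_eq_integral_of_forall_compl_eq_zero fun x hx => by rw [hz s x hx, zero_mul]
  have hgt2 : IntegrableOn (fun s => ∫ x in ball c κ, gradSq dv x s) (tI t₀ r) := by
    have h2 : IntegrableOn (fun z : E3 × ℝ => gradSq dv z.1 z.2) (ball c κ ×ˢ tI t₀ r) :=
      h.int_grad.mono_set (prod_mono hsub le_rfl)
    rw [IntegrableOn, Measure.volume_eq_prod, ← Measure.prod_restrict] at h2
    exact h2.integral_prod_right
  have hs1 : Ioo (T - κ ^ 2) t ⊆ Ioc (t₀ - r ^ 2) t := fun s hs =>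
    ⟨by linarith [hs.1], hs.2.le⟩
  have hs2 : Ioc (t₀ - r ^ 2) t ⊆ tI t₀ r := fun s hs => ⟨hs.1, by linarith [hs.2]⟩
  have hgae : ∀ᵐ s ∂(volume.restrict (Ioo (T - κ ^ 2) t)),
      IntegrableOn (fun x => gradSq dv x s) (ball x₀ r) :=
    ae_restrict_of_ae_restrict_of_subset (hs1.trans hs2) (slice_integrable h.int_grad)
  have h2 : 1 / (8 * κ ^ 3) * ∫ s in Ioo (T - κ ^ 2) t, ∫ x in ball c κ, gradSq dv x s ≤
      ∫ s in Ioc (t₀ - r ^ 2) t, ∫ x, testK c T R κ t x s * gradSq dv x s := by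
    rw [← integral_const_mul]
    refine le_trans ?_ (setIntegral_mono_set (hgt.mono_set hs2) (Eventually.of_forall fun s =>
      integral_nonneg fun x => mul_nonneg (testK_nonneg _ _ _ _ _ _ _) (gradSq_nonneg _ _ _))
      hs1.eventuallyLE)
    refine setIntegral_mono_ae_restrict ((hgt2.mono_set (hs1.trans hs2)).const_mul _)
      (hgt.mono_set (hs1.trans hs2)) ?_
    filter_upwards [hgae, ae_restrict_mem measurableSet_Ioo] with s hs hs'
    exact key s ⟨hs'.1, hs'.2.le⟩ _ (fun x => gradSq_nonneg _ _ _) hs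
  linarith

lemma int_sub {F : E3 × ℝ → ℝ} {c : E3} {T R : ℝ} (hF : IntegrableOn F (pCyl x₀ t₀ r))
    (hc : ball c R ⊆ ball x₀ r) (hT0 : t₀ - r ^ 2 ≤ T - R ^ 2) (hT : T ≤ t₀) :
    IntegrableOn F (pCyl c T R) :=
  hF.mono_set (prod_mono hc (Ioo_subset_Ioo hT0 hT))

/-- Fubini on a cylinder. -/
lemma int_cyl_slices {F : E3 × ℝ → ℝ} {c : E3} {T R : ℝ} (hF : IntegrableOn F (pCyl c T R)) :
    IntegrableOn (fun s => ∫ x in ball c R, F (x, s)) (tI T R) ∧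
    ∫ s in tI T R, ∫ x in ball c R, F (x, s) = ∫ z in pCyl c T R, F z := by
  rw [IntegrableOn, vol_cyl] at hF
  refine ⟨hF.integral_prod_right, ?_⟩
  rw [vol_cyl, integral_prod_symm _ hF]

/-- One step of the energy estimate: the energy in the cylinder of radius `κ = R/2^{k+1}` is
controlled by the `L²` norm and the fluxes through the dyadic shells. -/
lemma energy_step : ∃ C : ℝ, 0 < C ∧ ∀ {v : E3 → ℝ → E3} {q : E3 → ℝ → ℝ}
    {dv : E3 → ℝ → Fin 3 → E3} {x₀ : E3} {t₀ r : ℝ}, IsSuitableWeakSolution v q dv x₀ t₀ r →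
    ∀ {c : E3} {T R : ℝ} {k : ℕ} {Fb : ℝ → ℝ}, 0 < R → ball c R ⊆ ball x₀ r →
    t₀ - r ^ 2 ≤ T - R ^ 2 → T ≤ t₀ →
    IntegrableOn (fun z : E3 × ℝ => w3 v q z.1 z.2) (pCyl c T R) →
    IntegrableOn Fb (tI T R) →
    (∀ᵐ s ∂(volume.restrict (tI T R)), ∑ j ∈ Finset.range (k + 1), |fluxJ v q c T R k j s| ≤ Fb s) →
    ∀ᵐ t ∂(volume.restrict (tI T (R / 2 ^ (k + 1)))),
      (∫ x in ball c (R / 2 ^ (k + 1)), ‖v x t‖ ^ 2) + 2 * (∫ s in Ioo (T - (R / 2 ^ (k + 1)) ^ 2) t,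
        ∫ x in ball c (R / 2 ^ (k + 1)), gradSq dv x s) ≤
      8 * (R / 2 ^ (k + 1)) ^ 3 * (C / R ^ 5 * (∫ z in pCyl c T R, ‖v z.1 z.2‖ ^ 2) +
        ∫ s in tI T R, Fb s) := by
  obtain ⟨C, hC, hE⟩ := energy_right
  refine ⟨C, hC, ?_⟩
  intro v q dv x₀ t₀ r h c T R k Fb hR hc hT0 hT hw hF hflux
  set κ := R / 2 ^ (k + 1) with hκd
  have hκ : 0 < κ := by positivity
  have hκR : κ ≤ R / 2 := by
    rw [hκd]
    refine div_le_div_of_nonneg_left hR.le (by norm_num) ?_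
    rw [pow_succ]; have : (1:ℝ) ≤ 2 ^ k := one_le_pow₀ (by norm_num)
    linarith
  have hκ2 : κ ^ 2 ≤ R ^ 2 := by gcongr; linarith
  have hv2 := int_sub h.int_v2 hc hT0 hT
  obtain ⟨hvi, hve⟩ := int_cyl_slices hv2
  have hbig : IntegrableOn (fun s => C / R ^ 5 * (∫ x in ball c R, ‖v x s‖ ^ 2) + Fb s) (tI T R) :=
    (hvi.const_mul _).add hF
  have hbe : ∫ s in tI T R, (C / R ^ 5 * (∫ x in ball c R, ‖v x s‖ ^ 2) + Fb s) =
      C / R ^ 5 * (∫ z in pCyl c T R, ‖v z.1 z.2‖ ^ 2) + ∫ s in tI T R, Fb s := by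
    rw [integral_add (hvi.const_mul _) hF, integral_const_mul, hve]
  rw [← hbe]
  have hsubκ : tI T κ ⊆ tI t₀ r := Ioo_subset_Ioo (by linarith) hT
  have hsubR : tI T R ⊆ tI t₀ r := Ioo_subset_Ioo (by linarith) hT
  have hmem := ae_restrict_mem (μ := (volume : Measure ℝ)) (show MeasurableSet (tI T κ) from measurableSet_Ioo)
  -- the bound on the right-hand side holds at almost every time of the small cylinder
  have hR1 : ∀ᵐ s ∂(volume : Measure ℝ), s ∈ tI T R →
      IntegrableOn (fun x => w3 v q x s) (ball c R) ∧ IntegrableOn (fun x => ‖v x s‖ ^ 2) (ball c R) ∧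
      ∑ j ∈ Finset.range (k + 1), |fluxJ v q c T R k j s| ≤ Fb s := by
    rw [← ae_restrict_iff' (show MeasurableSet (tI T R) from measurableSet_Ioo)]
    filter_upwards [slice_integrable hw, slice_integrable hv2, hflux] with s h1 h2 h3
    exact ⟨h1, h2, h3⟩
  filter_upwards [hmem, ae_restrict_of_ae_restrict_of_subset hsubκ (slice_integrable h.int_v2),
    ae_restrict_of_ae_restrict_of_subset hsubκ h.local_energy] with t ht hvt hen
  have htT : t < T := ht.2
  have hleft := energy_left h hR hc hT0 hT hκ hκR ht hvt
  have hts : tsupport (fun p : E3 × ℝ => testK c T R κ t p.1 p.2) ⊆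
      ball x₀ r ×ˢ Ioc (t₀ - r ^ 2) t₀ := by
    refine (testK_tsupport c htT hR).trans (prod_mono
      ((closedBall_subset_ball (by linarith)).trans hc) fun s hs => ?_)
    have hR2 : 0 < R ^ 2 := by positivity
    exact ⟨by linarith [hs.1], by linarith [hs.2]⟩
  have hen' := hen (testK c T R κ t) (testK_smooth c htT hκ) (testK_compact c htT hR) hts
    (testK_nonneg c T R κ t)
  have hb : IntegrableOn ((tI T R).indicator
      fun s => C / R ^ 5 * (∫ x in ball c R, ‖v x s‖ ^ 2) + Fb s) (Ioc (t₀ - r ^ 2) t) :=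
    (hbig.integrable_indicator measurableSet_Ioo).integrableOn
  have hFb : ∀ᵐ s ∂(volume : Measure ℝ), 0 ≤ (tI T R).indicator
      (fun s => C / R ^ 5 * (∫ x in ball c R, ‖v x s‖ ^ 2) + Fb s) s := by
    filter_upwards [hR1] with s hs
    refine indicator_apply_nonneg fun hm => ?_
    have h3 := (hs hm).2.2
    have h4 : 0 ≤ ∑ j ∈ Finset.range (k + 1), |fluxJ v q c T R k j s| :=
      Finset.sum_nonneg fun _ _ => abs_nonneg _
    have h5 : 0 ≤ C / R ^ 5 * (∫ x in ball c R, ‖v x s‖ ^ 2) := mul_nonneg (by positivity) (integral_nonneg fun _ => sq_nonneg _)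
    linarith
  have hright := norm_integral_le_of_norm_le (f := fun s => ∫ x,
            (‖v x s‖ ^ 2 * (deriv (fun τ => testK c T R κ t x τ) s + lapScalar (fun y => testK c T R κ t y s) x)
              + (‖v x s‖ ^ 2 + 2 * q x s) *
                  (∑ i : Fin 3,
                    v x s i * fderiv ℝ (fun y => testK c T R κ t y s) x (EuclideanSpace.single i 1)))) hb (by
    rw [ae_restrict_iff' measurableSet_Ioc]
    filter_upwards [hR1] with s hs hst
    rcases le_or_gt s (T - R ^ 2) with hl | hl
    · rw [energy_right_zero v q hR hκ htT hst.2 hl, indicator_of_notMem (fun hh => hl.not_gt hh.1),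
        norm_zero]
    · have hm : s ∈ tI T R := ⟨hl, hst.2.trans_lt htT⟩
      obtain ⟨h1, h2, h3⟩ := hs hm
      rw [indicator_of_mem hm]
      exact (hE h hR htT hst.2 h1 h2).trans (by linarith))
  have hlast : ∫ s in Ioc (t₀ - r ^ 2) t, (tI T R).indicator
      (fun s => C / R ^ 5 * (∫ x in ball c R, ‖v x s‖ ^ 2) + Fb s) s ≤
      ∫ s in tI T R, (C / R ^ 5 * (∫ x in ball c R, ‖v x s‖ ^ 2) + Fb s) := by
    rw [← integral_indicator (show MeasurableSet (tI T R) from measurableSet_Ioo)]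
    exact setIntegral_le_integral (hbig.integrable_indicator measurableSet_Ioo) hFb
  have hall := (hleft.trans hen').trans (((le_abs_self _).trans hright).trans hlast)
  rw [one_div, inv_mul_le_iff₀ (by positivity)] at hall
  exact hall

end

/-! ### Interior L⁴ bound and good times -/

lemma norm_four_le (u : E3) : ‖u‖ ^ 4 ≤ 3 * ∑ i, |u i| ^ 4 := by
  have h : ‖u‖ ^ 4 = (u 0 ^ 2 + u 1 ^ 2 + u 2 ^ 2) ^ 2 := by
    rw [show ‖u‖ ^ 4 = (‖u‖ ^ 2) ^ 2 by ring, EuclideanSpace.real_norm_sq_eq, Fin.sum_univ_three]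
  have e : ∀ i, |u i| ^ 4 = u i ^ 4 := fun i => by
    rw [show 4 = 2 * 2 by norm_num, pow_mul, sq_abs, ← pow_mul]
  simp only [e, Fin.sum_univ_three, h]
  nlinarith [sq_nonneg (u 0 ^ 2 - u 1 ^ 2), sq_nonneg (u 0 ^ 2 - u 2 ^ 2),
    sq_nonneg (u 1 ^ 2 - u 2 ^ 2)]

lemma lint_sq {f : E3 → E3} (s : Set E3) (hi : IntegrableOn (fun x => ‖f x‖ ^ 2) s) :
    ∫⁻ x in s, ‖f x‖ₑ ^ 2 = ENNReal.ofReal (∫ x in s, ‖f x‖ ^ 2) := by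
  rw [ofReal_integral_eq_lintegral_ofReal hi (Eventually.of_forall fun _ => sq_nonneg _)]
  refine lintegral_congr fun x => ?_
  rw [ENNReal.ofReal_pow (norm_nonneg _), ofReal_norm]

lemma enorm_coord_le (x : E3) (i : Fin 3) : ‖x i‖ₑ ≤ ‖x‖ₑ := by
  rw [← ofReal_norm, ← ofReal_norm]
  exact ENNReal.ofReal_le_ofReal (abs_coord_le x i)

/-- The interior `L⁴` bound for a vector field, from the scalar one applied to each component. -/
lemma slice_l4 : ∃ K : ℝ, 0 < K ∧ ∀ {u : E3 → E3} {g : Fin 3 → E3 → E3} {c : E3} {r : ℝ}, 0 < r →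
    Measurable u → (∀ j, Measurable (g j)) →
    (∀ ψ : E3 → ℝ, Smooth ψ → HasCompactSupport ψ → tsupport ψ ⊆ ball c r → ∀ i j,
      ∫ x, u x i * pd j ψ x = - ∫ x, g j x i * ψ x) →
    IntegrableOn (fun x => ‖u x‖ ^ 2) (ball c r) →
    IntegrableOn (fun x => ∑ j, ‖g j x‖ ^ 2) (ball c r) →
    ∫⁻ x in ball c (r / 2), ‖u x‖ₑ ^ 4 ≤ ENNReal.ofReal (r * (K *
      ((∫ x in ball c r, ∑ j, ‖g j x‖ ^ 2) + 1 / r ^ 2 * ∫ x in ball c r, ‖u x‖ ^ 2)) ^ 2) := by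
  obtain ⟨C, hC⟩ := ball_l4
  refine ⟨√(9 * C + 1), by positivity, ?_⟩
  intro u g c r hr hu hg hw hu2 hg2
  set E := ∫ x in ball c r, ∑ j, ‖g j x‖ ^ 2 with hE
  set U := ∫ x in ball c r, ‖u x‖ ^ 2 with hU
  have hE0 : 0 ≤ E := integral_nonneg fun x => Finset.sum_nonneg fun _ _ => sq_nonneg _
  have hU0 : 0 ≤ U := integral_nonneg fun x => sq_nonneg _
  have mc : ∀ {f : E3 → E3} (i : Fin 3), Measurable f → Measurable fun x => f x i := fun i hf =>
    (EuclideanSpace.proj i : E3 →L[ℝ] ℝ).continuous.measurable.comp hf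
  have hgj : ∀ j, IntegrableOn (fun x => ‖g j x‖ ^ 2) (ball c r) := fun j =>
    hg2.mono' ((hg j).norm.pow_const 2).aestronglyMeasurable (Eventually.of_forall fun x => by
      rw [Real.norm_of_nonneg (sq_nonneg _)]
      exact Finset.single_le_sum (f := fun j => ‖g j x‖ ^ 2) (fun _ _ => sq_nonneg _)
        (Finset.mem_univ j))
  have hEs : ∑ j, ∫⁻ x in ball c r, ‖g j x‖ₑ ^ 2 = ENNReal.ofReal E := by
    rw [hE, integral_finsetSum _ fun j _ => hgj j,
      ENNReal.ofReal_sum_of_nonneg fun j _ => integral_nonneg fun x => sq_nonneg _]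
    exact Finset.sum_congr rfl fun j _ => lint_sq _ (hgj j)
  have hone : ∀ i : Fin 3, ∫⁻ x in ball c (r / 2), ‖u x i‖ₑ ^ 4 ≤
      C * ENNReal.ofReal r * (ENNReal.ofReal (E + 1 / r ^ 2 * U)) ^ 2 := by
    intro i
    refine (hC c r hr (fun x => u x i) (fun j x => g j x i) (mc i hu) (fun j => mc i (hg j))
      fun ψ h1 h2 h3 j => hw ψ h1 h2 h3 i j).trans ?_
    gcongr
    rw [ENNReal.ofReal_add hE0 (by positivity), ENNReal.ofReal_mul (by positivity), ← hEs, hU,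
      ← lint_sq _ hu2]
    gcongr with j _ x x
    · exact enorm_coord_le _ i
    · exact enorm_coord_le _ i
  calc ∫⁻ x in ball c (r / 2), ‖u x‖ₑ ^ 4 ≤
        ∫⁻ x in ball c (r / 2), 3 * ∑ i : Fin 3, ‖u x i‖ₑ ^ 4 := by
        refine lintegral_mono fun x => ?_
        have := ENNReal.ofReal_le_ofReal (norm_four_le (u x))
        rw [ENNReal.ofReal_mul (by norm_num), ENNReal.ofReal_sum_of_nonneg (fun _ _ => by positivity),
          ENNReal.ofReal_pow (norm_nonneg _), ofReal_norm] at this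
        refine this.trans (le_of_eq ?_)
        congr 1
        · simp
        · refine Finset.sum_congr rfl fun i _ => ?_
          rw [ENNReal.ofReal_pow (abs_nonneg _), ← Real.norm_eq_abs, ofReal_norm]
    _ = 3 * ∑ i : Fin 3, ∫⁻ x in ball c (r / 2), ‖u x i‖ₑ ^ 4 := by
        rw [lintegral_const_mul' _ _ (by simp), lintegral_finsetSum _ fun i _ =>
          ((mc i hu).enorm.pow_const 4)]
    _ ≤ 3 * ∑ _i : Fin 3, C * ENNReal.ofReal r * (ENNReal.ofReal (E + 1 / r ^ 2 * U)) ^ 2 := by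
        gcongr with i _; exact hone i
    _ = ENNReal.ofReal (r * (9 * C) * (E + 1 / r ^ 2 * U) ^ 2) := by
        rw [ENNReal.ofReal_mul (by positivity), ENNReal.ofReal_mul hr.le,
          ENNReal.ofReal_pow (by positivity), ENNReal.ofReal_mul (by norm_num),
          ENNReal.ofReal_coe_nnreal]
        simp
        ring
    _ ≤ _ := by
        refine ENNReal.ofReal_le_ofReal ?_
        rw [mul_pow, Real.sq_sqrt (by positivity)]
        have : 0 ≤ r * (E + 1 / r ^ 2 * U) ^ 2 := by positivity
        nlinarith

section
variable {v : E3 → ℝ → E3} {q : E3 → ℝ → ℝ} {dv : E3 → ℝ → Fin 3 → E3} {x₀ : E3} {t₀ r : ℝ}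

/-- Everything that holds at almost every time for a suitable weak solution. -/
structure GoodTime (v : E3 → ℝ → E3) (q : E3 → ℝ → ℝ) (dv : E3 → ℝ → Fin 3 → E3) (x₀ : E3)
    (r s : ℝ) : Prop where
  v2 : IntegrableOn (fun x => ‖v x s‖ ^ 2) (ball x₀ r)
  grad : IntegrableOn (fun x => gradSq dv x s) (ball x₀ r)
  q32 : IntegrableOn (fun x => |q x s| ^ ((3:ℝ)/2)) (ball x₀ r)
  q1 : IntegrableOn (fun x => q x s) (ball x₀ r)
  weak : ∀ ψ : E3 → ℝ, Smooth ψ → HasCompactSupport ψ → tsupport ψ ⊆ ball x₀ r → ∀ i j,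
    ∫ x, v x s i * pd j ψ x = - ∫ x, dv x s j i * ψ x
  div : ∀ ψ : E3 → ℝ, Smooth ψ → HasCompactSupport ψ → tsupport ψ ⊆ ball x₀ r →
    ∫ x, ∑ i, v x s i * pd i ψ x = 0
  pres : ∀ ψ : E3 → ℝ, Smooth ψ → HasCompactSupport ψ → tsupport ψ ⊆ ball x₀ r →
    presF v q s ψ = 0

lemma good_time (h : IsSuitableWeakSolution v q dv x₀ t₀ r) (hr : 0 < r) :
    ∀ᵐ s ∂(volume.restrict (tI t₀ r)), GoodTime v q dv x₀ r s := by
  filter_upwards [slice_integrable h.int_v2, slice_integrable h.int_grad,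
    slice_integrable h.int_q32, slice_integrable h.int_q, h.weak_grad, h.slice_div,
    h.slice_pres hr] with s h1 h2 h3 h4 h5 h6 h7
  exact ⟨h1, h2, h3, h4, h5, h6, h7⟩

end

/-- Cauchy–Schwarz for the cubic term, in the form used for the fluxes. -/
lemma cubic_bound {u : E3 → E3} {c : E3} {ρ N Y : ℝ} (hu : Measurable u) (hρ : 0 < ρ) (hN : 0 < N)
    (hY : 0 < Y) (h2i : IntegrableOn (fun x => ‖u x‖ ^ 2) (ball c ρ))
    (h2 : ∫ x in ball c ρ, ‖u x‖ ^ 2 ≤ N ^ 2 * ρ ^ 3)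
    (h4 : ∫⁻ x in ball c ρ, ‖u x‖ₑ ^ 4 ≤ ENNReal.ofReal (ρ * Y ^ 2)) :
    IntegrableOn (fun x => ‖u x‖ ^ 3) (ball c ρ) ∧
      ∫ x in ball c ρ, ‖u x‖ ^ 3 ≤ N * Y * ρ ^ 2 := by
  have e4 : ∀ x, ENNReal.ofReal (‖u x‖ ^ 4) = ‖u x‖ₑ ^ 4 := fun x => by
    rw [ENNReal.ofReal_pow (norm_nonneg _), ofReal_norm]
  have h4i : IntegrableOn (fun x => ‖u x‖ ^ 4) (ball c ρ) := by
    refine ⟨(hu.norm.pow_const 4).aestronglyMeasurable, ?_⟩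
    rw [hasFiniteIntegral_iff_ofReal (Eventually.of_forall fun _ => by positivity)]
    simp_rw [e4]
    exact h4.trans_lt ENNReal.ofReal_lt_top
  have h4' : ∫ x in ball c ρ, ‖u x‖ ^ 4 ≤ ρ * Y ^ 2 := by
    rw [← ENNReal.ofReal_le_ofReal_iff (by positivity),
      ofReal_integral_eq_lintegral_ofReal h4i (Eventually.of_forall fun _ => by positivity)]
    simp_rw [e4]
    exact h4
  set l := Y / (N * ρ) with hl
  have hl0 : 0 < l := by positivity
  have hpt : ∀ a : ℝ, 0 ≤ a → a ^ 3 ≤ l / 2 * a ^ 2 + 1 / (2 * l) * a ^ 4 := fun a ha => by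
    have : l / 2 * a ^ 2 + 1 / (2 * l) * a ^ 4 - a ^ 3 = a ^ 2 / (2 * l) * (l - a) ^ 2 := by
      field_simp; ring
    have : 0 ≤ a ^ 2 / (2 * l) * (l - a) ^ 2 := by positivity
    linarith
  have hsum : IntegrableOn (fun x => l / 2 * ‖u x‖ ^ 2 + 1 / (2 * l) * ‖u x‖ ^ 4) (ball c ρ) :=
    (h2i.const_mul _).add (h4i.const_mul _)
  have h3i : IntegrableOn (fun x => ‖u x‖ ^ 3) (ball c ρ) :=
    hsum.mono' (hu.norm.pow_const 3).aestronglyMeasurable (Eventually.of_forall fun x => by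
      rw [Real.norm_of_nonneg (by positivity)]; exact hpt _ (norm_nonneg _))
  refine ⟨h3i, ?_⟩
  calc ∫ x in ball c ρ, ‖u x‖ ^ 3 ≤ ∫ x in ball c ρ, (l / 2 * ‖u x‖ ^ 2 + 1 / (2 * l) * ‖u x‖ ^ 4) :=
        integral_mono h3i hsum fun x => hpt _ (norm_nonneg _)
    _ = l / 2 * (∫ x in ball c ρ, ‖u x‖ ^ 2) + 1 / (2 * l) * ∫ x in ball c ρ, ‖u x‖ ^ 4 := by
        rw [integral_add (h2i.const_mul _) (h4i.const_mul _), integral_const_mul, integral_const_mul]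
    _ ≤ l / 2 * (N ^ 2 * ρ ^ 3) + 1 / (2 * l) * (ρ * Y ^ 2) := by gcongr
    _ = N * Y * ρ ^ 2 := by rw [hl]; field_simp; ring

/-! ### Flux through an inner shell -/

lemma memLp_q {q : E3 → ℝ → ℝ} {s : ℝ} {S : Set E3} (hm : Measurable fun x => q x s)
    (hq : IntegrableOn (fun x => |q x s| ^ ((3:ℝ)/2)) S) :
    MemLp (fun x => q x s) (3 / 2) (volume.restrict S) := by
  rw [← integrable_norm_rpow_iff hm.aestronglyMeasurable (by norm_num) (by
    exact ENNReal.div_ne_top (by norm_num) (by norm_num))]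
  have : ((3:ℝ≥0∞) / 2).toReal = 3 / 2 := by simp
  rw [this]
  exact hq

set_option maxHeartbeats 800000 in
/-- The flux through an inner shell, at a time where the inductive `L²` bounds are available. -/
lemma flux_small : ∃ C : ℝ, 0 < C ∧ ∀ {v : E3 → ℝ → E3} {q : E3 → ℝ → ℝ}
    {dv : E3 → ℝ → Fin 3 → E3} {x₀ : E3} {t₀ r : ℝ}, IsSuitableWeakSolution v q dv x₀ t₀ r →
    ∀ {c : E3} {T R s N : ℝ} {k j : ℕ}, GoodTime v q dv x₀ r s → 0 < R → ball c R ⊆ ball x₀ r →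
    s < T → 0 < N → 5 ≤ j → j ≤ k →
    IntegrableOn (fun x => w3 v q x s) (ball c R) →
    (∀ i, 1 ≤ i → i ≤ j → ∫ x in ball c (R / 2 ^ i), ‖v x s‖ ^ 2 ≤ N ^ 2 * (R / 2 ^ i) ^ 3) →
    |fluxJ v q c T R k j s| ≤ C * (N / (R / 2 ^ j) ^ 2 * (∫ x in ball c (R / 2 ^ (j - 3)), gradSq dv x s) +
      N ^ 3 / (R / 2 ^ j) + N / R ^ 4 * ∫ x in ball c R, |q x s|) := by
  obtain ⟨A, hA, hS⟩ := shell_bounds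
  obtain ⟨K, hK, hl4⟩ := slice_l4
  obtain ⟨P, hP, hpr⟩ := pressure_slice
  refine ⟨(3 * A + 2 * (P * A)) * (24 * K + 17), by positivity, ?_⟩
  intro v q dv x₀ t₀ r h c T R s N k j hg hR hc hsT hN hj hjk hw hind
  set ρ := R / 2 ^ j with hρd
  have hρ : 0 < ρ := by positivity
  have hrad : ∀ m ≤ j, R / 2 ^ (j - m) = 2 ^ m * ρ := fun m hm => by
    rw [hρd, ← Nat.sub_add_cancel hm, pow_add, Nat.sub_add_cancel hm]; field_simp
  obtain ⟨hb0, hb1, -⟩ := hS c T R k j s hR hjk hsT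
  have hρR : ∀ m ≤ j, 2 ^ m * ρ ≤ R := fun m hm => by
    rw [← hrad m hm]; exact div_le_self hR.le (one_le_pow₀ (by norm_num))
  have hsub : ∀ m ≤ j, ball c (2 ^ m * ρ) ⊆ ball x₀ r := fun m hm =>
    (ball_subset_ball (hρR m hm)).trans hc
  have hmass : ∀ m, m + 1 ≤ j → ∫ x in ball c (2 ^ m * ρ), ‖v x s‖ ^ 2 ≤ N ^ 2 * (2 ^ m * ρ) ^ 3 :=
    fun m hm => by
      have := hind (j - m) (by omega) (by omega)
      rwa [hrad m (by omega)] at this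
  have e8 : R / 2 ^ (j - 3) = 8 * ρ := by rw [hrad 3 (by omega)]; norm_num
  have h8 : ball c (8 * ρ) ⊆ ball x₀ r := by have := hsub 3 (by omega); norm_num at this; exact this
  have hm8 : ∫ x in ball c (8 * ρ), ‖v x s‖ ^ 2 ≤ N ^ 2 * (8 * ρ) ^ 3 := by
    have := hmass 3 (by omega); norm_num at this; exact this
  set E := ∫ x in ball c (R / 2 ^ (j - 3)), gradSq dv x s with hE
  have hE0 : 0 ≤ E := integral_nonneg fun x => gradSq_nonneg _ _ _
  set Y := 3 * (K * (E + 8 * N ^ 2 * ρ)) with hYd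
  have hY : 0 < Y := by positivity
  have hL4 : ∫⁻ x in ball c (4 * ρ), ‖v x s‖ₑ ^ 4 ≤ ENNReal.ofReal (ρ * Y ^ 2) := by
    have := hl4 (u := fun x => v x s) (g := fun j x => dv x s j) (c := c) (r := 8 * ρ) (by positivity)
      (h.slice_v s) (fun j => (h.mdv j).comp (measurable_id.prodMk measurable_const))
      (fun ψ h1 h2 h3 => hg.weak ψ h1 h2 (h3.trans h8)) (hg.v2.mono_set h8) (hg.grad.mono_set h8)
    rw [show 8 * ρ / 2 = 4 * ρ by ring] at this
    refine this.trans (ENNReal.ofReal_le_ofReal ?_)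
    have e : ∫ x in ball c (8 * ρ), ∑ j, ‖dv x s j‖ ^ 2 = E := by rw [hE, e8]; rfl
    rw [e]
    have : 1 / (8 * ρ) ^ 2 * ∫ x in ball c (8 * ρ), ‖v x s‖ ^ 2 ≤ 8 * N ^ 2 * ρ := by
      calc _ ≤ 1 / (8 * ρ) ^ 2 * (N ^ 2 * (8 * ρ) ^ 3) := by gcongr
        _ = _ := by field_simp
    have h0 : 0 ≤ 1 / (8 * ρ) ^ 2 * ∫ x in ball c (8 * ρ), ‖v x s‖ ^ 2 :=
      mul_nonneg (by positivity) (integral_nonneg fun _ => sq_nonneg _)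
    calc _ ≤ 8 * ρ * (K * (E + 8 * N ^ 2 * ρ)) ^ 2 := by gcongr
      _ ≤ 9 * ρ * (K * (E + 8 * N ^ 2 * ρ)) ^ 2 := by gcongr; norm_num
      _ = _ := by rw [hYd]; ring
  have hball1 : ball c ρ ⊆ ball x₀ r := by simpa using hsub 0 (by omega)
  have hm0 : ∫ x in ball c ρ, ‖v x s‖ ^ 2 ≤ N ^ 2 * ρ ^ 3 := by simpa using hmass 0 (by omega)
  obtain ⟨hc3i, hc3⟩ := cubic_bound (h.slice_v s) hρ hN hY (hg.v2.mono_set hball1) hm0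
    ((lintegral_mono_set (ball_subset_ball (by linarith))).trans hL4)
  have hn : R / 2 = 2 ^ (j - 1) * ρ := by
    rw [← hrad (j - 1) (by omega), show j - (j - 1) = 1 by omega, pow_one]
  have hsupp : tsupport (shell c T R k j s) ⊆ ball c ρ :=
    (tsupport_shell c T hR k j s).trans (closedBall_subset_ball (by linarith))
  have hslice : Slice (fun x => v x s) (shell c T R k j s) c ρ (2 ^ (j - 1) * ρ) N A :=
    { hr := hρ
      hrL := le_mul_of_one_le_left hρ.le (one_le_pow₀ (by norm_num))
      hN := hN
      hA := hA.le
      meas := h.slice_v s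
      int := hg.v2.mono_set (hsub _ (by omega))
      bd := hm0
      smooth := shell_smooth c T R k j s
      supp := hsupp
      cpt := HasCompactSupport.of_support_subset_isCompact (isCompact_closedBall c (3 / 4 * (R / 2 ^ j)))
        ((subset_tsupport _).trans (tsupport_shell c T hR k j s))
      g0 := hb0
      g1 := hb1
      div := fun ψ h1 h2 h3 => hg.div ψ h1 h2 (h3.trans (hsub _ (by omega))) }
  have hpress := hpr (u := fun x => v x s) (p := fun x => q x s) (n := j - 1) (by omega) hslice
    (fun m hm => hmass m (by omega)) hY.le hL4 (h.slice_q s)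
    (memLp_q (h.slice_q s) (hg.q32.mono_set (hsub _ (by omega)))) (fun ψ h1 h2 h3 => by
      have := hg.pres ψ h1 h2 (h3.trans (hsub _ (by omega)))
      unfold presF at this
      linarith)
  -- splitting the flux into its convective part and its pressure part
  have hdm := dens_measurable (h.slice_v s) (shell_smooth c T R k j s)
  have h0 : ∀ x, x ∉ ball c ρ → dens (fun x => v x s) (shell c T R k j s) x = 0 := fun x hx =>
    dens_zero _ fun hh => hx (hsupp hh)
  have hdl : ∀ x, |dens (fun x => v x s) (shell c T R k j s) x| ≤ 3 * (A / ρ ^ 4) * ‖v x s‖ :=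
    fun x => dens_abs (fun x => v x s) (shell c T R k j s) (G := A / ρ ^ 4) fun i => hb1 i x
  have hconv : ∀ x, ‖‖v x s‖ ^ 2 * dens (fun x => v x s) (shell c T R k j s) x‖ ≤
      3 * (A / ρ ^ 4) * ‖v x s‖ ^ 3 := fun x => by
    rw [Real.norm_eq_abs, abs_mul, abs_of_nonneg (sq_nonneg _)]
    calc _ ≤ ‖v x s‖ ^ 2 * (3 * (A / ρ ^ 4) * ‖v x s‖) :=
          mul_le_mul_of_nonneg_left (hdl x) (sq_nonneg _)
      _ = _ := by ring
  have hi1 : Integrable fun x => ‖v x s‖ ^ 2 * dens (fun x => v x s) (shell c T R k j s) x := by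
    have : IntegrableOn (fun x => ‖v x s‖ ^ 2 * dens (fun x => v x s) (shell c T R k j s) x)
        (ball c ρ) :=
      (hc3i.const_mul (3 * (A / ρ ^ 4))).mono'
        (((h.slice_v s).norm.pow_const 2).mul hdm).aestronglyMeasurable (Eventually.of_forall hconv)
    exact (integrableOn_iff_integrable_of_support_subset (Function.support_subset_iff'.2 fun x hx => by
      rw [h0 x hx, mul_zero])).1 this
  have hi := (flux_integrable h (shell_smooth c T R k j s) (tsupport_shell_ball c T hR k j s) hb1 hw).1
  have hi2 : Integrable fun x => q x s * dens (fun x => v x s) (shell c T R k j s) x := by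
    refine ((hi.sub hi1).div_const 2).congr (Eventually.of_forall fun x => ?_)
    simp only [Pi.sub_apply]; ring
  have hsplit : fluxJ v q c T R k j s =
      (∫ x, ‖v x s‖ ^ 2 * dens (fun x => v x s) (shell c T R k j s) x) +
      2 * ∫ x, q x s * dens (fun x => v x s) (shell c T R k j s) x := by
    rw [← integral_const_mul, ← integral_add hi1 (hi2.const_mul 2), fluxJ]
    exact integral_congr_ae (Eventually.of_forall fun x => by simp only []; ring)
  have hA1 : |∫ x, ‖v x s‖ ^ 2 * dens (fun x => v x s) (shell c T R k j s) x| ≤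
      3 * A * (N * Y / ρ ^ 2) := by
    rw [← setIntegral_eq_integral_of_forall_compl_eq_zero (s := ball c ρ) fun x hx => by
      rw [h0 x hx, mul_zero], ← Real.norm_eq_abs]
    refine (norm_integral_le_of_norm_le (hc3i.const_mul (3 * (A / ρ ^ 4)))
      (Eventually.of_forall hconv)).trans ?_
    rw [integral_const_mul]
    calc _ ≤ 3 * (A / ρ ^ 4) * (N * Y * ρ ^ 2) := by gcongr
      _ = _ := by field_simp
  have hQ : ∫ x in ball c (2 ^ (j - 1) * ρ), |q x s| ≤ ∫ x in ball c R, |q x s| :=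
    setIntegral_mono_set (hg.q1.mono_set hc).abs (Eventually.of_forall fun _ => abs_nonneg _)
      (ball_subset_ball (hρR _ (by omega))).eventuallyLE
  set Q := ∫ x in ball c R, |q x s| with hQd
  have hQ0 : 0 ≤ Q := integral_nonneg fun _ => abs_nonneg _
  have hA2 : |∫ x, q x s * dens (fun x => v x s) (shell c T R k j s) x| ≤
      P * A * (N * Y / ρ ^ 2 + N ^ 3 / ρ + 16 * (N / R ^ 4 * Q)) := by
    refine hpress.trans ?_
    have : N / (2 ^ (j - 1) * ρ) ^ 4 * ∫ x in ball c (2 ^ (j - 1) * ρ), |q x s| ≤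
        16 * (N / R ^ 4 * Q) := by
      calc _ ≤ N / (2 ^ (j - 1) * ρ) ^ 4 * Q := by gcongr
        _ = _ := by rw [← hn, div_pow]; ring
    gcongr
  have hYN : N * Y / ρ ^ 2 = 3 * K * (N / ρ ^ 2 * E) + 24 * K * (N ^ 3 / ρ) := by
    rw [hYd]; field_simp; ring
  rw [hYN] at hA1 hA2
  have ha : 0 ≤ N / ρ ^ 2 * E := by positivity
  have hb : 0 ≤ N ^ 3 / ρ := by positivity
  have hd : 0 ≤ N / R ^ 4 * Q := by positivity
  generalize N / ρ ^ 2 * E = a at *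
  generalize N ^ 3 / ρ = b at *
  generalize N / R ^ 4 * Q = d at *
  rw [hsplit]
  refine (abs_add_le _ _).trans ?_
  rw [abs_mul, abs_two]
  have hPA : 0 < P * A := by positivity
  have h1 : 3 * A * (3 * K * a + 24 * K * b) ≤ 3 * A * ((24 * K + 17) * (a + b + d)) := by
    gcongr; nlinarith [mul_nonneg hK.le ha, mul_nonneg hK.le hb, mul_nonneg hK.le hd]
  have h2 : P * A * (3 * K * a + 24 * K * b + b + 16 * d) ≤ P * A * ((24 * K + 17) * (a + b + d)) := by
    gcongr; nlinarith [mul_nonneg hK.le ha, mul_nonneg hK.le hb, mul_nonneg hK.le hd]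
  linarith

/-! ### Time integral of the flux -/

/-- The inductive hypothesis at scale `ρ = R/2^j`: the kinetic energy at almost every time and the
dissipation on `Q((c,T),ρ)` are each at most `N²ρ³`. -/
def EnergyAt (v : E3 → ℝ → E3) (dv : E3 → ℝ → Fin 3 → E3) (c : E3) (T R N : ℝ) (j : ℕ) : Prop :=
  (∀ᵐ t ∂(volume.restrict (tI T (R / 2 ^ j))),
    ∫ x in ball c (R / 2 ^ j), ‖v x t‖ ^ 2 ≤ N ^ 2 * (R / 2 ^ j) ^ 3) ∧
  ∫ s in tI T (R / 2 ^ j), ∫ x in ball c (R / 2 ^ j), gradSq dv x s ≤ N ^ 2 * (R / 2 ^ j) ^ 3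

/-- Splitting at height `σ²`: large values are absorbed by `|y|^{3/2}`. -/
lemma q_split (y : ℝ) {σ : ℝ} (hσ : 0 < σ) : |y| ≤ 1 / σ * |y| ^ ((3:ℝ)/2) + σ ^ 2 := by
  rw [rpow_three_half (abs_nonneg y)]
  have h0 := abs_nonneg y
  rcases le_total (√|y|) σ with h | h
  · have h2 : |y| ≤ σ ^ 2 := by rw [← Real.sq_sqrt h0]; gcongr
    have : 0 ≤ 1 / σ * (|y| * √|y|) := by positivity
    linarith
  · have : |y| ≤ 1 / σ * (|y| * √|y|) := by
      rw [one_div, inv_mul_eq_div, le_div_iff₀ hσ]; gcongr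
    nlinarith [sq_nonneg σ]

lemma v_split {a : ℝ} (ha : 0 ≤ a) {σ : ℝ} (hσ : 0 < σ) : a ^ 2 ≤ 1 / σ * a ^ 3 + σ ^ 2 := by
  rcases le_total a σ with h | h
  · have h2 : a ^ 2 ≤ σ ^ 2 := by gcongr
    have : 0 ≤ 1 / σ * a ^ 3 := by positivity
    linarith
  · have : a ^ 2 ≤ 1 / σ * a ^ 3 := by
      rw [one_div, inv_mul_eq_div, le_div_iff₀ hσ, pow_succ a 2]; gcongr
    nlinarith [sq_nonneg σ]

lemma tI_mono {T a b : ℝ} (ha : 0 ≤ a) (h : a ≤ b) : tI T a ⊆ tI T b :=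
  Ioo_subset_Ioo (by nlinarith) le_rfl

lemma int_tI_const (T : ℝ) {ρ : ℝ} (b : ℝ) : ∫ _s in tI T ρ, b = ρ ^ 2 * b := by
  rw [setIntegral_const, tI, measureReal_def, Real.volume_Ioo, smul_eq_mul,
    ENNReal.toReal_ofReal (by nlinarith [sq_nonneg ρ])]
  ring

lemma meas_tI (T ρ : ℝ) : MeasurableSet (tI T ρ) := measurableSet_Ioo

lemma finite_tI (T ρ : ℝ) : volume (tI T ρ) ≠ ⊤ := measure_Ioo_lt_top.ne

lemma flux_eq_zero {v : E3 → ℝ → E3} {q : E3 → ℝ → ℝ} {c : E3} {T R s : ℝ} {k j : ℕ}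
    (h : ∀ x, shell c T R k j s x = 0) : fluxJ v q c T R k j s = 0 := by
  have e : shell c T R k j s = fun _ => 0 := funext h
  have : ∀ x, dens (fun x => v x s) (shell c T R k j s) x = 0 := fun x =>
    Finset.sum_eq_zero fun i _ => by rw [e, pd]; simp
  simp [fluxJ, this]

/-- The time integral of the flux through the `j`-th shell, with geometric decay in `j`. -/
lemma flux_one : ∃ C : ℝ, 0 < C ∧ ∀ {v : E3 → ℝ → E3} {q : E3 → ℝ → ℝ}
    {dv : E3 → ℝ → Fin 3 → E3} {x₀ : E3} {t₀ r : ℝ}, IsSuitableWeakSolution v q dv x₀ t₀ r → 0 < r →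
    ∀ {c : E3} {T R n ε : ℝ} {k j : ℕ}, 0 < R → ball c R ⊆ ball x₀ r →
    t₀ - r ^ 2 ≤ T - R ^ 2 → T ≤ t₀ → 0 < n → 0 < ε →
    IntegrableOn (fun z : E3 × ℝ => w3 v q z.1 z.2) (pCyl c T R) →
    ∫ z in pCyl c T R, w3 v q z.1 z.2 ≤ ε * R ^ 2 → j ≤ k →
    (∀ i, 1 ≤ i → i ≤ j → EnergyAt v dv c T R (n / R) i) →
    ∃ fb : ℝ → ℝ, IntegrableOn fb (tI T R) ∧
      (∀ᵐ s ∂(volume.restrict (tI T R)), |fluxJ v q c T R k j s| ≤ fb s) ∧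
      ∫ s in tI T R, fb s ≤ C * (ε + n ^ 3) / R ^ 2 * (2 / 3) ^ j := by
  obtain ⟨A, hA, hS⟩ := shell_bounds
  obtain ⟨C, hC, hfl⟩ := flux_small
  have hV := ballVol_nonneg
  refine ⟨9 * A * 2 ^ 16 * 6 + C * (514 + ballVol), by positivity, ?_⟩
  intro v q dv x₀ t₀ r h hr c T R n ε k j hR hc hT0 hT hn hε hw hwe hjk hind
  obtain ⟨hWi, hWe⟩ := int_cyl_slices hw
  have hW0 : ∀ s, 0 ≤ ∫ x in ball c R, w3 v q x s := fun s => integral_nonneg fun x => w3_nonneg _ _ _ _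
  have hsubR : tI T R ⊆ tI t₀ r := Ioo_subset_Ioo hT0 hT
  have hgood := ae_restrict_of_ae_restrict_of_subset hsubR (good_time h hr)
  have hmem := ae_restrict_mem (μ := (volume : Measure ℝ)) (meas_tI T R)
  set ρ := R / 2 ^ j with hρd
  have hρ : 0 < ρ := by positivity
  have hX : 0 ≤ (ε + n ^ 3) / R ^ 2 * (2 / 3) ^ j := by positivity
  -- the outer shells, of radius comparable to `R`, are handled by the smallness hypothesis; the
  -- inner ones by induction, with several doublings left up to `R` for the pressure estimate
  rcases lt_or_ge j 5 with hj | hj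
  · refine ⟨fun s => 9 * (A / ρ ^ 4) * ∫ x in ball c R, w3 v q x s, hWi.const_mul _, ?_, ?_⟩
    · filter_upwards [slice_integrable hw, hmem] with s hs hm
      exact (flux_integrable h (shell_smooth c T R k j s) (tsupport_shell_ball c T hR k j s)
        (hS c T R k j s hR hjk hm.2).2.1 hs).2
    · rw [integral_const_mul, hWe]
      have h2 : (2:ℝ) ^ j ≤ 2 ^ 4 := pow_le_pow_right₀ (by norm_num) (by omega)
      have h3 : (1:ℝ) / 6 ≤ (2 / 3) ^ j := by
        have : ((2:ℝ) / 3) ^ 4 ≤ (2 / 3) ^ j := pow_le_pow_of_le_one (by norm_num) (by norm_num) (by omega)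
        refine le_trans (by norm_num) this
      calc 9 * (A / ρ ^ 4) * (∫ z in pCyl c T R, w3 v q z.1 z.2) ≤ 9 * (A / ρ ^ 4) * (ε * R ^ 2) := by
            gcongr
        _ = 9 * A * (2 ^ j) ^ 4 * (ε / R ^ 2) := by rw [hρd]; field_simp
        _ ≤ 9 * A * (2 ^ 4) ^ 4 * (ε / R ^ 2) := by gcongr
        _ = 9 * A * 2 ^ 16 * 6 * (ε / R ^ 2 * (1 / 6)) := by ring
        _ ≤ 9 * A * 2 ^ 16 * 6 * ((ε + n ^ 3) / R ^ 2 * (2 / 3) ^ j) := by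
            gcongr; linarith [pow_pos hn 3]
        _ ≤ _ := by
            have : 0 ≤ C * (514 + ballVol) * ((ε + n ^ 3) / R ^ 2 * (2 / 3) ^ j) := by positivity
            rw [mul_div_assoc, mul_assoc, add_mul]
            linarith
  · set N := n / R with hNd
    have hN : 0 < N := by positivity
    have hle : ∀ i ≤ j, ρ ≤ R / 2 ^ i := fun i hi =>
      div_le_div_of_nonneg_left hR.le (by positivity) (pow_le_pow_right₀ (by norm_num) hi)
    have hρR : ρ ≤ R := by simpa using hle 0 (by omega)
    have hSs : ∀ i ≤ j, tI T ρ ⊆ tI T (R / 2 ^ i) := fun i hi => tI_mono hρ.le (hle i hi)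
    have hSR : tI T ρ ⊆ tI T R := tI_mono hρ.le hρR
    have e8 : R / 2 ^ (j - 3) = 8 * ρ := by
      obtain ⟨m, rfl⟩ := Nat.exists_eq_add_of_le' (show 3 ≤ j by omega)
      rw [hρd, Nat.add_sub_cancel, pow_add]; field_simp; norm_num
    have h8R : R / 2 ^ (j - 3) ≤ R := div_le_self hR.le (one_le_pow₀ (by norm_num))
    obtain ⟨hEi, -⟩ := int_cyl_slices (c := c) (T := T) (R := R / 2 ^ (j - 3))
      ((int_sub h.int_grad hc hT0 hT).mono_set
        (prod_mono (ball_subset_ball h8R) (tI_mono (by positivity) h8R)))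
    have hqi := (int_sub h.int_q hc hT0 hT).abs
    obtain ⟨hQi, -⟩ := int_cyl_slices hqi
    set E : ℝ → ℝ := fun s => ∫ x in ball c (R / 2 ^ (j - 3)), gradSq dv x s with hEd
    set Q : ℝ → ℝ := fun s => ∫ x in ball c R, |q x s| with hQd
    have hE1 : IntegrableOn E (tI T ρ) := hEi.mono_set (hSs _ (by omega))
    have hQ1 : IntegrableOn Q (tI T ρ) := hQi.mono_set hSR
    have hc1 : IntegrableOn (fun _ : ℝ => N ^ 3 / ρ) (tI T ρ) := integrableOn_const (finite_tI T ρ)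
    have hEc : IntegrableOn (fun s => N / ρ ^ 2 * E s) (tI T ρ) := hE1.const_mul _
    have hQc : IntegrableOn (fun s => N / R ^ 4 * Q s) (tI T ρ) := hQ1.const_mul _
    have hEN : IntegrableOn (fun s => N / ρ ^ 2 * E s + N ^ 3 / ρ) (tI T ρ) := hEc.add hc1
    have hG : IntegrableOn (fun s => C * (N / ρ ^ 2 * E s + N ^ 3 / ρ + N / R ^ 4 * Q s)) (tI T ρ) :=
      (hEN.add hQc).const_mul C
    refine ⟨(tI T ρ).indicator fun s => C * (N / ρ ^ 2 * E s + N ^ 3 / ρ + N / R ^ 4 * Q s),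
      (hG.integrable_indicator (meas_tI T ρ)).integrableOn, ?_, ?_⟩
    · have hall : ∀ᵐ s ∂(volume : Measure ℝ), ∀ i, 1 ≤ i → i ≤ j → s ∈ tI T (R / 2 ^ i) →
          ∫ x in ball c (R / 2 ^ i), ‖v x s‖ ^ 2 ≤ N ^ 2 * (R / 2 ^ i) ^ 3 := by
        rw [ae_all_iff]
        intro i
        by_cases hi : 1 ≤ i ∧ i ≤ j
        · have := (hind i hi.1 hi.2).1
          rw [ae_restrict_iff' (meas_tI _ _)] at this
          filter_upwards [this] with s hs _ _ using hs
        · exact Eventually.of_forall fun s h1 h2 => (hi ⟨h1, h2⟩).elim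
      filter_upwards [slice_integrable hw, hmem, hgood, ae_restrict_of_ae hall] with s h1 h2 h3 h4
      by_cases hs : s ∈ tI T ρ
      · rw [indicator_of_mem hs]
        exact hfl h h3 hR hc h2.2 hN hj hjk h1 fun i hi hi' => h4 i hi hi' (hSs i hi' hs)
      · rw [indicator_of_notMem hs, flux_eq_zero, abs_zero]
        refine (hS c T R k j s hR hjk h2.2).2.2 ?_
        have : s ≤ T - ρ ^ 2 := not_lt.1 fun hh => hs ⟨hh, h2.2⟩
        have : 0 < ρ ^ 2 := by positivity
        linarith
    · rw [setIntegral_indicator (meas_tI T ρ), inter_eq_right.2 hSR, integral_const_mul,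
        integral_add hEN hQc, integral_add hEc hc1, integral_const_mul, integral_const_mul, int_tI_const]
      have hE2 : ∫ s in tI T ρ, E s ≤ N ^ 2 * (8 * ρ) ^ 3 := by
        have := (hind (j - 3) (by omega) (by omega)).2
        rw [← e8]
        exact (setIntegral_mono_set hEi (Eventually.of_forall fun s =>
          integral_nonneg fun x => gradSq_nonneg _ _ _) (hSs _ (by omega)).eventuallyLE).trans this
      -- the choice of `σ` makes both terms of the split decay: `1/σ` like `(2/3)^j`,
      -- and `ρ²σ²` like `(9/16)^j`
      set σ := n * (3 / 2) ^ j / R with hσd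
      have hσ : 0 < σ := by positivity
      have hWS : ∫ s in tI T ρ, ∫ x in ball c R, w3 v q x s ≤ ε * R ^ 2 :=
        (setIntegral_mono_set hWi (Eventually.of_forall hW0) hSR.eventuallyLE).trans (hWe.le.trans hwe)
      have hQ2 : ∫ s in tI T ρ, Q s ≤ 1 / σ * (ε * R ^ 2) + ρ ^ 2 * (σ ^ 2 * (R ^ 3 * ballVol)) := by
        have hb : ∀ᵐ s ∂(volume.restrict (tI T ρ)), Q s ≤
            1 / σ * (∫ x in ball c R, w3 v q x s) + σ ^ 2 * (R ^ 3 * ballVol) := by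
          filter_upwards [ae_restrict_of_ae_restrict_of_subset hSR (slice_integrable hw),
            ae_restrict_of_ae_restrict_of_subset hSR (slice_integrable hqi)] with s h1 h2
          have hcc : IntegrableOn (fun _ : E3 => σ ^ 2) (ball c R) :=
            integrableOn_const measure_ball_lt_top.ne
          have hsum : IntegrableOn (fun x => 1 / σ * w3 v q x s + σ ^ 2) (ball c R) :=
            (h1.const_mul _).add hcc
          calc Q s ≤ ∫ x in ball c R, (1 / σ * w3 v q x s + σ ^ 2) := by
                refine integral_mono h2 hsum fun x => (q_split (q x s) hσ).trans ?_
                unfold w3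
                have : 0 ≤ ‖v x s‖ ^ 3 := by positivity
                gcongr; linarith
            _ = _ := by
                rw [integral_add (h1.const_mul _) hcc, integral_const_mul, setIntegral_const,
                  vol_ball c hR, smul_eq_mul]
                ring
        have hcc : IntegrableOn (fun _ : ℝ => σ ^ 2 * (R ^ 3 * ballVol)) (tI T ρ) :=
          integrableOn_const (finite_tI T ρ)
        have hWm := (hWi.mono_set hSR).const_mul (1 / σ)
        refine (integral_mono_ae hQ1 (hWm.add hcc) hb).trans ?_
        have : ∫ s in tI T ρ, (1 / σ * (∫ x in ball c R, w3 v q x s) + σ ^ 2 * (R ^ 3 * ballVol)) =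
            1 / σ * (∫ s in tI T ρ, ∫ x in ball c R, w3 v q x s) + ρ ^ 2 * (σ ^ 2 * (R ^ 3 * ballVol)) := by
          rw [integral_add hWm hcc, integral_const_mul, int_tI_const]
        refine this.le.trans ?_
        gcongr
      have p1 : (1:ℝ) / 2 ^ j ≤ (2 / 3) ^ j := by
        rw [← one_div_pow]; exact pow_le_pow_left₀ (by norm_num) (by norm_num) j
      have p2 : ((9:ℝ) / 16) ^ j ≤ (2 / 3) ^ j := pow_le_pow_left₀ (by norm_num) (by norm_num) j
      have t1 : N / ρ ^ 2 * (∫ s in tI T ρ, E s) ≤ 512 * n ^ 3 / R ^ 2 * (2 / 3) ^ j := by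
        calc _ ≤ N / ρ ^ 2 * (N ^ 2 * (8 * ρ) ^ 3) := by gcongr
          _ = 512 * n ^ 3 / R ^ 2 * (1 / 2 ^ j) := by rw [hNd, hρd]; field_simp; norm_num
          _ ≤ _ := by gcongr
      have t2 : ρ ^ 2 * (N ^ 3 / ρ) ≤ n ^ 3 / R ^ 2 * (2 / 3) ^ j := by
        calc _ = n ^ 3 / R ^ 2 * (1 / 2 ^ j) := by rw [hNd, hρd]; field_simp
          _ ≤ _ := by gcongr
      have t3 : N / R ^ 4 * (∫ s in tI T ρ, Q s) ≤
          (ε + n ^ 3 * ballVol) / R ^ 2 * (2 / 3) ^ j := by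
        have e1 : (2:ℝ) / 3 = (3 / 2)⁻¹ := by norm_num
        have e2 : ((9:ℝ) / 16) ^ j = ((3 / 2) ^ j) ^ 2 / (2 ^ j) ^ 2 := by
          rw [← pow_mul, ← pow_mul, mul_comm j 2, pow_mul, pow_mul, ← div_pow]; norm_num
        calc _ ≤ N / R ^ 4 * (1 / σ * (ε * R ^ 2) + ρ ^ 2 * (σ ^ 2 * (R ^ 3 * ballVol))) := by gcongr
          _ = ε / R ^ 2 * (2 / 3) ^ j + n ^ 3 * ballVol / R ^ 2 * (9 / 16) ^ j := by
              rw [e1, inv_pow, e2, hNd, hρd, hσd]; field_simp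
          _ ≤ ε / R ^ 2 * (2 / 3) ^ j + n ^ 3 * ballVol / R ^ 2 * (2 / 3) ^ j := by gcongr
          _ = _ := by ring
      calc _ ≤ C * (512 * n ^ 3 / R ^ 2 * (2 / 3) ^ j + n ^ 3 / R ^ 2 * (2 / 3) ^ j +
            (ε + n ^ 3 * ballVol) / R ^ 2 * (2 / 3) ^ j) := by gcongr
        _ = C * ((513 + ballVol) * (n ^ 3 / R ^ 2 * (2 / 3) ^ j) + ε / R ^ 2 * (2 / 3) ^ j) := by ring
        _ ≤ C * ((514 + ballVol) * (n ^ 3 / R ^ 2 * (2 / 3) ^ j) +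
              (514 + ballVol) * (ε / R ^ 2 * (2 / 3) ^ j)) := by
            have h1 : 0 ≤ ε / R ^ 2 * (2 / 3) ^ j := by positivity
            have h2 : 0 ≤ n ^ 3 / R ^ 2 * (2 / 3) ^ j := by positivity
            refine mul_le_mul_of_nonneg_left (add_le_add ?_ ?_) hC.le
            · exact mul_le_mul_of_nonneg_right (by linarith) h2
            · exact le_mul_of_one_le_left h1 (by linarith)
        _ = C * (514 + ballVol) * ((ε + n ^ 3) / R ^ 2 * (2 / 3) ^ j) := by ring
        _ ≤ _ := by
            have : 0 ≤ 9 * A * 2 ^ 16 * 6 * ((ε + n ^ 3) / R ^ 2 * (2 / 3) ^ j) := by positivity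
            rw [mul_div_assoc, mul_assoc (_ + _), add_mul]
            linarith

/-! ### Induction over dyadic scales -/

/-- Passing to the limit `t ↑ b` in a bound for primitives that is known only for almost every `t`. -/
lemma prim_limit {g : ℝ → ℝ} {a b M : ℝ} (hab : a < b) (hg : IntegrableOn g (Ioo a b))
    (h : ∀ᵐ t ∂(volume.restrict (Ioo a b)), ∫ s in Ioo a t, g s ≤ M) :
    ∫ s in Ioo a b, g s ≤ M := by
  have hg' : IntegrableOn g (Icc a b) := (integrableOn_Icc_iff_integrableOn_Ioo (by simp) (by simp)).2 hg
  have hc := intervalIntegral.continuousOn_primitive hg'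
  have ht : Tendsto (fun x => ∫ t in Ioc a x, g t) (𝓝[<] b) (𝓝 (∫ t in Ioc a b, g t)) := by
    have := (hc b (right_mem_Icc.2 hab.le)).mono_left
      (nhdsWithin_mono b (Ioo_subset_Icc_self (a := a) (b := b)))
    rwa [nhdsWithin_Ioo_eq_nhdsLT hab] at this
  rw [← integral_Ioc_eq_integral_Ioo]
  refine le_of_tendsto_of_frequently ht ?_
  intro hev
  obtain ⟨l, hl, hsub⟩ := (mem_nhdsLT_iff_exists_Ioo_subset' hab).1 hev
  have hl' : max a l < b := max_lt hab hl
  rw [ae_restrict_iff' measurableSet_Ioo] at h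
  have hz : volume (Ioo (max a l) b) = 0 := by
    refine measure_mono_null ?_ h
    intro t ht hh
    have h1 := hsub ⟨(le_max_right a l).trans_lt ht.1, ht.2⟩
    have h2 := hh ⟨(le_max_left a l).trans_lt ht.1, ht.2⟩
    rw [← integral_Ioc_eq_integral_Ioo] at h2
    exact h1 h2
  rw [Real.volume_Ioo, ENNReal.ofReal_eq_zero] at hz
  linarith

lemma volR_cyl (c : E3) (T : ℝ) {R : ℝ} (hR : 0 < R) :
    (volume : Measure (E3 × ℝ)).real (pCyl c T R) = R ^ 5 * ballVol := by
  rw [pCyl, Measure.volume_eq_prod, measureReal_prod_prod, vol_ball c hR, measureReal_def,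
    Real.volume_Ioo, ENNReal.toReal_ofReal (by nlinarith [sq_nonneg R])]
  ring

/-- Smallness of the space-time `L²` norm of `v`, splitting `|v|²` at height `(n²/R)²`. -/
lemma v2_small {v : E3 → ℝ → E3} {q : E3 → ℝ → ℝ} {c : E3} {T R n ε : ℝ} (hR : 0 < R) (hn : 0 < n)
    (hv : IntegrableOn (fun z : E3 × ℝ => ‖v z.1 z.2‖ ^ 2) (pCyl c T R))
    (hw : IntegrableOn (fun z : E3 × ℝ => w3 v q z.1 z.2) (pCyl c T R))
    (hwe : ∫ z in pCyl c T R, w3 v q z.1 z.2 ≤ ε * R ^ 2) :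
    ∫ z in pCyl c T R, ‖v z.1 z.2‖ ^ 2 ≤ R ^ 3 * (ε / n ^ 2 + ballVol * n ^ 4) := by
  have hσ : 0 < n ^ 2 / R := by positivity
  have hcc : IntegrableOn (fun _ : E3 × ℝ => (n ^ 2 / R) ^ 2) (pCyl c T R) := by
    have := finite_cyl c T R
    exact integrable_const _
  have hsum : IntegrableOn (fun z : E3 × ℝ => 1 / (n ^ 2 / R) * w3 v q z.1 z.2 + (n ^ 2 / R) ^ 2)
    (pCyl c T R) := (hw.const_mul _).add hcc
  calc ∫ z in pCyl c T R, ‖v z.1 z.2‖ ^ 2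
      ≤ ∫ z in pCyl c T R, (1 / (n ^ 2 / R) * w3 v q z.1 z.2 + (n ^ 2 / R) ^ 2) := by
        refine integral_mono hv hsum fun z => (v_split (norm_nonneg _) hσ).trans ?_
        unfold w3
        have : 0 ≤ |q z.1 z.2| ^ ((3:ℝ) / 2) := by positivity
        gcongr; linarith
    _ = 1 / (n ^ 2 / R) * (∫ z in pCyl c T R, w3 v q z.1 z.2) + R ^ 5 * ballVol * (n ^ 2 / R) ^ 2 := by
        rw [integral_add (hw.const_mul _) hcc, integral_const_mul, setIntegral_const, volR_cyl c T hR,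
          smul_eq_mul]
    _ ≤ 1 / (n ^ 2 / R) * (ε * R ^ 2) + R ^ 5 * ballVol * (n ^ 2 / R) ^ 2 := by gcongr
    _ = _ := by field_simp

/-- The smallness hypothesis at scale `R` propagates to every dyadic scale `R/2^j`: strong induction
on `j`, where the flux through the `j`-th shell is controlled by the bounds at scales up to `j`. -/
lemma energy_all : ∃ n ε : ℝ, 0 < n ∧ 0 < ε ∧ ∀ {v : E3 → ℝ → E3} {q : E3 → ℝ → ℝ}
    {dv : E3 → ℝ → Fin 3 → E3} {x₀ : E3} {t₀ r : ℝ}, IsSuitableWeakSolution v q dv x₀ t₀ r → 0 < r →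
    ∀ {c : E3} {T R : ℝ}, 0 < R → ball c R ⊆ ball x₀ r →
    t₀ - r ^ 2 ≤ T - R ^ 2 → T ≤ t₀ →
    IntegrableOn (fun z : E3 × ℝ => w3 v q z.1 z.2) (pCyl c T R) →
    ∫ z in pCyl c T R, w3 v q z.1 z.2 ≤ ε * R ^ 2 →
    ∀ j, 1 ≤ j → EnergyAt v dv c T R (n / R) j := by
  obtain ⟨C, hC, hES⟩ := energy_step
  obtain ⟨D, hD, hF1⟩ := flux_one
  have hV := ballVol_nonneg
  set K := C * (1 + ballVol) + 6 * D with hKd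
  have hK : 0 < K := by positivity
  -- the initial and flux terms contribute `8Kn³` where `n²` is wanted, so `8Kn ≤ 1` suffices
  set n := 1 / (8 * K + 1) with hnd
  have hn : 0 < n := by positivity
  have hn1 : n ≤ 1 := by rw [hnd, div_le_one (by positivity)]; linarith
  have hnK : 8 * K * n ≤ 1 := by
    rw [hnd, mul_one_div, div_le_one (by positivity)]; linarith
  -- with `ε = n⁵` the term `ε/n²` of `v2_small` is cubic in `n` like the fluxes
  refine ⟨n, n ^ 5, hn, by positivity, ?_⟩
  intro v q dv x₀ t₀ r h hr c T R hR hc hT0 hT hw hwe j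
  induction j using Nat.strong_induction_on with
  | _ m ih =>
  intro hm
  obtain ⟨k, rfl⟩ : ∃ k, m = k + 1 := ⟨m - 1, by omega⟩
  have hfx : ∀ j, ∃ fb : ℝ → ℝ, j ≤ k → (IntegrableOn fb (tI T R) ∧
      (∀ᵐ s ∂(volume.restrict (tI T R)), |fluxJ v q c T R k j s| ≤ fb s) ∧
      ∫ s in tI T R, fb s ≤ D * (n ^ 5 + n ^ 3) / R ^ 2 * (2 / 3) ^ j) := by
    intro j
    by_cases hj : j ≤ k
    · obtain ⟨fb, hfb⟩ := hF1 h hr hR hc hT0 hT hn (by positivity : 0 < n ^ 5) hw hwe hj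
        fun i hi hij => ih i (by omega) hi
      exact ⟨fb, fun _ => hfb⟩
    · exact ⟨0, fun hj' => absurd hj' hj⟩
  choose fb hfb using hfx
  have hmem : ∀ {j}, j ∈ Finset.range (k + 1) → j ≤ k := fun hj => by
    rw [Finset.mem_range] at hj; omega
  have hFi : IntegrableOn (fun s => ∑ j ∈ Finset.range (k + 1), fb j s) (tI T R) :=
    integrable_finsetSum _ fun j hj => (hfb j (hmem hj)).1
  have hFle : ∀ᵐ s ∂(volume.restrict (tI T R)), ∑ j ∈ Finset.range (k + 1), |fluxJ v q c T R k j s| ≤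
      ∑ j ∈ Finset.range (k + 1), fb j s := by
    have : ∀ᵐ s ∂(volume.restrict (tI T R)), ∀ j : ℕ, j ≤ k → |fluxJ v q c T R k j s| ≤ fb j s := by
      rw [ae_all_iff]; intro j
      by_cases hj : j ≤ k
      · filter_upwards [(hfb j hj).2.1] with s hs _ using hs
      · exact Eventually.of_forall fun s hj' => absurd hj' hj
    filter_upwards [this] with s hs
    exact Finset.sum_le_sum fun j hj => hs j (hmem hj)
  have hgeo : ∑ j ∈ Finset.range (k + 1), ((2:ℝ) / 3) ^ j ≤ 3 := by
    rw [geom_sum_eq (by norm_num)]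
    have : (0:ℝ) ≤ (2 / 3) ^ (k + 1) := by positivity
    rw [div_le_iff_of_neg (by norm_num)]
    linarith
  have hFint : ∫ s in tI T R, ∑ j ∈ Finset.range (k + 1), fb j s ≤ 6 * D * n ^ 3 / R ^ 2 := by
    rw [integral_finsetSum _ fun j hj => (hfb j (hmem hj)).1]
    have h5 : n ^ 5 ≤ n ^ 3 := pow_le_pow_of_le_one hn.le hn1 (by norm_num)
    calc _ ≤ ∑ j ∈ Finset.range (k + 1), D * (n ^ 5 + n ^ 3) / R ^ 2 * (2 / 3) ^ j :=
          Finset.sum_le_sum fun j hj => (hfb j (hmem hj)).2.2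
      _ = D * (n ^ 5 + n ^ 3) / R ^ 2 * ∑ j ∈ Finset.range (k + 1), ((2:ℝ) / 3) ^ j := by
          rw [Finset.mul_sum]
      _ ≤ D * (n ^ 3 + n ^ 3) / R ^ 2 * 3 := by gcongr
      _ = _ := by ring
  have hv2 := v2_small hR hn (int_sub h.int_v2 hc hT0 hT) hw hwe
  set κ := R / 2 ^ (k + 1) with hκd
  have hκ : 0 < κ := by positivity
  have hκR : κ ≤ R := div_le_self hR.le (one_le_pow₀ (by norm_num))
  have hmain : ∀ᵐ t ∂(volume.restrict (tI T κ)), (∫ x in ball c κ, ‖v x t‖ ^ 2) +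
      2 * (∫ s in Ioo (T - κ ^ 2) t, ∫ x in ball c κ, gradSq dv x s) ≤ (n / R) ^ 2 * κ ^ 3 := by
    filter_upwards [hES h hR hc hT0 hT hw hFi hFle] with t ht
    refine ht.trans ?_
    calc _ ≤ 8 * κ ^ 3 * (C / R ^ 5 * (R ^ 3 * (n ^ 5 / n ^ 2 + ballVol * n ^ 4)) +
          6 * D * n ^ 3 / R ^ 2) := by gcongr
      _ = 8 * κ ^ 3 / R ^ 2 * (C * (n ^ 3 + ballVol * n ^ 4) + 6 * D * n ^ 3) := by
          field_simp
      _ ≤ 8 * κ ^ 3 / R ^ 2 * (C * (n ^ 3 + ballVol * n ^ 3) + 6 * D * n ^ 3) := by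
          have : n ^ 4 ≤ n ^ 3 := pow_le_pow_of_le_one hn.le hn1 (by norm_num)
          gcongr
      _ = κ ^ 3 / R ^ 2 * n ^ 2 * (8 * K * n) := by rw [hKd]; ring
      _ ≤ κ ^ 3 / R ^ 2 * n ^ 2 * 1 := by gcongr
      _ = _ := by field_simp
  constructor
  · filter_upwards [hmain] with t ht
    have : 0 ≤ ∫ s in Ioo (T - κ ^ 2) t, ∫ x in ball c κ, gradSq dv x s :=
      integral_nonneg fun s => integral_nonneg fun x => gradSq_nonneg dv x s
    linarith
  · have hκ2 : κ ^ 2 ≤ R ^ 2 := by gcongr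
    have hg := int_sub h.int_grad ((ball_subset_ball hκR).trans hc) (by linarith : t₀ - r ^ 2 ≤ T - κ ^ 2) hT
    refine prim_limit (by nlinarith) (int_cyl_slices hg).1 ?_
    filter_upwards [hmain] with t ht
    have h1 : 0 ≤ ∫ s in Ioo (T - κ ^ 2) t, ∫ x in ball c κ, gradSq dv x s :=
      integral_nonneg fun s => integral_nonneg fun x => gradSq_nonneg dv x s
    have h2 : 0 ≤ ∫ x in ball c κ, ‖v x t‖ ^ 2 := integral_nonneg fun x => by positivity
    linarith

/-! ### Boundedness from smallness -/

lemma ballVol_pos : 0 < ballVol := by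
  have h := vol_ball (0 : E3) one_pos
  rw [one_pow, one_mul] at h
  rw [← h]
  exact ENNReal.toReal_pos (measure_ball_pos _ _ one_pos).ne' measure_ball_lt_top.ne

/-- Lebesgue differentiation along dyadic balls with centres in a dense set. -/
lemma ae_le_of_averages {f : E3 → ℝ} (hf : LocallyIntegrable f) {D : Set E3} (hD : Dense D) {x₀ : E3}
    {R M : ℝ} (hR : 0 < R) (f0 : ∀ x, 0 ≤ f x)
    (h : ∀ y ∈ D, y ∈ ball x₀ R → ∀ j : ℕ, 1 ≤ j →
      ∫ x in ball y (R / 2 ^ j), f x ≤ M * (R / 2 ^ j) ^ 3) :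
    ∀ᵐ x : E3, x ∈ ball x₀ R → f x ≤ 8 * M / ballVol := by
  have hV := ballVol_pos
  filter_upwards [IsUnifLocDoublingMeasure.ae_tendsto_average (volume : Measure E3) hf 1] with x hx hxB
  have hδ : ∀ j : ℕ, 0 < R / 2 ^ (j + 2) := fun j => by positivity
  have hex : ∀ j : ℕ, ∃ y ∈ D, y ∈ ball x₀ R ∧ y ∈ ball x (R / 2 ^ (j + 2)) := by
    intro j
    obtain ⟨y, hy, hyD⟩ := hD.inter_open_nonempty (ball x₀ R ∩ ball x (R / 2 ^ (j + 2)))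
      (isOpen_ball.inter isOpen_ball) ⟨x, hxB, mem_ball_self (hδ j)⟩
    exact ⟨y, hyD, hy.1, hy.2⟩
  choose w hwD hwB hwx using hex
  have hlim : Tendsto (fun j : ℕ => R / 2 ^ (j + 2)) atTop (𝓝[>] 0) := by
    refine tendsto_nhdsWithin_iff.2 ⟨?_, Eventually.of_forall hδ⟩
    have h1 : Tendsto (fun j : ℕ => (R / 4) * (1 / 2 : ℝ) ^ j) atTop (𝓝 ((R / 4) * 0)) :=
      (tendsto_pow_atTop_nhds_zero_of_lt_one (by norm_num) (by norm_num)).const_mul _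
    rw [mul_zero] at h1
    refine h1.congr fun j => ?_
    rw [one_div_pow, pow_add]; field_simp; norm_num
  have ht := hx w (fun j : ℕ => R / 2 ^ (j + 2)) hlim (Eventually.of_forall fun j => by
    rw [one_mul, mem_closedBall, dist_comm]; exact (hwx j).le)
  refine le_of_tendsto ht (Eventually.of_forall fun j => ?_)
  have hlt : R / 2 ^ (j + 2) < R / 2 ^ (j + 1) := by
    apply div_lt_div_of_pos_left hR (by positivity)
    exact pow_lt_pow_right₀ (by norm_num) (by omega)
  have h1 := h (w j) (hwD j) (hwB j) (j + 1) (by omega)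
  have hfi : IntegrableOn f (ball (w j) (R / 2 ^ (j + 1))) :=
    (hf.integrableOn_isCompact (isCompact_closedBall (w j) (R / 2 ^ (j + 1)))).mono_set
      ball_subset_closedBall
  have h2 : ∫ x in closedBall (w j) (R / 2 ^ (j + 2)), f x ≤ M * (R / 2 ^ (j + 1)) ^ 3 :=
    (setIntegral_mono_set hfi (Eventually.of_forall f0)
      (closedBall_subset_ball hlt).eventuallyLE).trans h1
  have hvol : volume.real (closedBall (w j) (R / 2 ^ (j + 2))) = (R / 2 ^ (j + 2)) ^ 3 * ballVol := by
    rw [measureReal_def, Measure.addHaar_closedBall_eq_addHaar_ball, ← measureReal_def,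
      vol_ball _ (hδ j)]
  rw [setAverage_eq, hvol, smul_eq_mul, inv_mul_le_iff₀ (by positivity)]
  refine h2.trans (le_of_eq ?_)
  rw [pow_succ 2 (j + 1)]
  field_simp
  norm_num

/-- Smallness on `Q(z₀,a)` forces an essential bound on `Q(z₀,a/2)`. -/
lemma bounded_of_small : ∃ ε : ℝ, 0 < ε ∧ ∀ {v : E3 → ℝ → E3} {q : E3 → ℝ → ℝ}
    {dv : E3 → ℝ → Fin 3 → E3} {x₀ : E3} {t₀ r : ℝ}, IsSuitableWeakSolution v q dv x₀ t₀ r → 0 < r →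
    ∀ {a : ℝ}, 0 < a → a ≤ r →
    IntegrableOn (fun z : E3 × ℝ => w3 v q z.1 z.2) (pCyl x₀ t₀ a) →
    ∫ z in pCyl x₀ t₀ a, w3 v q z.1 z.2 ≤ ε * a ^ 2 →
    ∃ C : ℝ, ∀ᵐ z : E3 × ℝ ∂(volume.restrict (pCyl x₀ t₀ (a / 2))), ‖v z.1 z.2‖ ≤ C := by
  obtain ⟨n, ε, hn, hε, H⟩ := energy_all
  refine ⟨ε / 4, by positivity, ?_⟩
  intro v q dv x₀ t₀ r h hr a ha har hw hwe
  have hV := ballVol_pos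
  set R := a / 2 with hRd
  have hR : 0 < R := by positivity
  have haR : a = 2 * R := by rw [hRd]; ring
  set D := TopologicalSpace.denseSeq E3
  have ha2 : a ^ 2 ≤ r ^ 2 := by gcongr
  have hball : ∀ y ∈ ball x₀ R, ball y R ⊆ ball x₀ a := fun y hy =>
    ball_subset_ball' (by rw [mem_ball] at hy; linarith)
  -- the bounds at countably many centres hold simultaneously at almost every time
  have key : ∀ᵐ t ∂(volume : Measure ℝ), ∀ (i : ℕ) (T : ℚ) (j : ℕ), D i ∈ ball x₀ R →
      t₀ - R ^ 2 < T → (T : ℝ) < t₀ → 1 ≤ j → t ∈ tI (T : ℝ) (R / 2 ^ j) →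
      ∫ x in ball (D i) (R / 2 ^ j), ‖v x t‖ ^ 2 ≤ (n / R) ^ 2 * (R / 2 ^ j) ^ 3 := by
    rw [ae_all_iff]; intro i
    rw [ae_all_iff]; intro T
    rw [ae_all_iff]; intro j
    by_cases hc : D i ∈ ball x₀ R ∧ t₀ - R ^ 2 < T ∧ (T : ℝ) < t₀ ∧ 1 ≤ j
    · obtain ⟨h1, h2, h3, h4⟩ := hc
      have hsub : pCyl (D i) T R ⊆ pCyl x₀ t₀ a :=
        prod_mono (hball _ h1) (Ioo_subset_Ioo (by rw [haR]; nlinarith) h3.le)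
      have := (H h hr hR ((hball _ h1).trans (ball_subset_ball har))
        (by rw [haR] at ha2; nlinarith) h3.le (hw.mono_set hsub)
        ((setIntegral_mono_set hw (Eventually.of_forall fun z => w3_nonneg _ _ _ _)
          hsub.eventuallyLE).trans (hwe.trans (le_of_eq (by rw [haR]; ring)))) j h4).1
      rw [ae_restrict_iff' (meas_tI _ _)] at this
      filter_upwards [this] with t ht _ _ _ _ htt using ht htt
    · refine Eventually.of_forall fun t a1 a2 a3 a4 _ => absurd ⟨a1, a2, a3, a4⟩ hc
  have hslice : ∀ᵐ t ∂(volume.restrict (tI t₀ R)), ∀ᵐ x ∂(volume.restrict (ball x₀ R)),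
      ‖v x t‖ ^ 2 ≤ 8 * (n / R) ^ 2 / ballVol := by
    have hi := slice_integrable h.int_v2
    have hsubt : tI t₀ R ⊆ tI t₀ r := tI_mono hR.le (by linarith)
    filter_upwards [ae_restrict_of_ae_restrict_of_subset hsubt hi, ae_restrict_of_ae key,
      ae_restrict_mem (meas_tI t₀ R)] with t hti hk htm
    rw [ae_restrict_iff' measurableSet_ball]
    set f : E3 → ℝ := (ball x₀ a).indicator fun x => ‖v x t‖ ^ 2 with hfd
    have hfi : Integrable f :=
      (hti.mono_set (ball_subset_ball har)).integrable_indicator measurableSet_ball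
    have hres := ae_le_of_averages hfi.locallyIntegrable
      (TopologicalSpace.denseRange_denseSeq E3) (x₀ := x₀) (M := (n / R) ^ 2) hR
      (fun x => indicator_nonneg (fun _ _ => by positivity) x) ?_
    · filter_upwards [hres] with x hx hxB
      have := hx hxB
      rwa [hfd, indicator_of_mem (ball_subset_ball (by linarith) hxB)] at this
    · rintro _ ⟨i, rfl⟩ hy j hj
      have hjR : R / 2 ^ j ≤ R := div_le_self hR.le (one_le_pow₀ (by norm_num))
      have hpos : 0 < R / 2 ^ j := by positivity
      have hmin : t < min t₀ (t + (R / 2 ^ j) ^ 2) := lt_min htm.2 (by nlinarith)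
      -- a rational top time slightly after `t`, so that `t` lies in the cylinder below it
      obtain ⟨T, hT1, hT2⟩ := exists_rat_btwn hmin
      have hT3 := hT2.trans_le (min_le_left _ _)
      have hT4 := hT2.trans_le (min_le_right _ _)
      have hb := hk i T j hy (htm.1.trans hT1) hT3 hj ⟨by linarith, hT1⟩
      refine le_trans (le_of_eq ?_) hb
      refine setIntegral_congr_fun measurableSet_ball fun x hx => ?_
      exact indicator_of_mem (hball _ hy (ball_subset_ball hjR hx)) _
  refine ⟨√(8 * (n / R) ^ 2 / ballVol), ?_⟩
  -- the slicewise bounds pass to space-time by Tonelli, applied to the excess over the bound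
  have hm : Measurable fun z : E3 × ℝ =>
      ENNReal.ofReal (‖v z.1 z.2‖ - √(8 * (n / R) ^ 2 / ballVol)) :=
    (h.mv.norm.sub_const _).ennreal_ofReal
  have hz : ∫⁻ z in pCyl x₀ t₀ R,
      ENNReal.ofReal (‖v z.1 z.2‖ - √(8 * (n / R) ^ 2 / ballVol)) = 0 := by
    rw [lintegral_cyl hm, lintegral_eq_zero_iff hm.lintegral_prod_left']
    filter_upwards [hslice] with t ht
    refine (lintegral_eq_zero_iff (hm.comp measurable_prodMk_right)).2 ?_
    filter_upwards [ht] with x hx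
    exact ENNReal.ofReal_eq_zero.2 (sub_nonpos.2 (Real.le_sqrt_of_sq_le hx))
  rw [lintegral_eq_zero_iff hm] at hz
  filter_upwards [hz] with z hz
  exact sub_nonpos.1 (ENNReal.ofReal_eq_zero.1 hz)

/-- ε-regularity, contrapositive form. There is a universal `ε > 0`
such that if `(v,q)` is a suitable weak solution on `Q(z₀,r)` and `z₀` is a singular
point, then `(1/a²)∫_{Q(z₀,a)} (|v|³ + |q|^{3/2}) > ε` for every `a ∈ (0,r]`. -/
theorem epsilon_regularity_lower_bound :
    ∃ ε : ℝ, 0 < ε ∧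
      ∀ (v : E3 → ℝ → E3) (q : E3 → ℝ → ℝ) (dv : E3 → ℝ → Fin 3 → E3)
        (x₀ : E3) (t₀ r : ℝ), 0 < r →
        IsSuitableWeakSolution v q dv x₀ t₀ r →
        IsSingularPointIn v x₀ t₀ r →
        ∀ a : ℝ, 0 < a → a ≤ r →
          ENNReal.ofReal (ε * a ^ 2) <
            ∫⁻ z in pCyl x₀ t₀ a,
              ((‖v z.1 z.2‖₊ : ℝ≥0∞) ^ 3 + ENNReal.ofReal (|q z.1 z.2| ^ ((3:ℝ)/2))) := by
  obtain ⟨ε, hε, H⟩ := bounded_of_small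
  refine ⟨ε, hε, ?_⟩
  intro v q dv x₀ t₀ r hr h hsing a ha har
  by_contra hcon
  rw [not_lt] at hcon
  have he : ∀ z : E3 × ℝ, (‖v z.1 z.2‖₊ : ℝ≥0∞) ^ 3 + ENNReal.ofReal (|q z.1 z.2| ^ ((3:ℝ)/2)) =
      ENNReal.ofReal (w3 v q z.1 z.2) := by
    intro z
    rw [w3, ENNReal.ofReal_add (by positivity) (by positivity), ENNReal.ofReal_pow (norm_nonneg _),
      ofReal_norm]
    rfl
  have hmw : Measurable fun z : E3 × ℝ => w3 v q z.1 z.2 :=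
    (h.mv.norm.pow_const 3).add (h.mq.abs.pow_const _)
  have h0 : ∀ᵐ z ∂(volume.restrict (pCyl x₀ t₀ a)), 0 ≤ w3 v q z.1 z.2 :=
    Eventually.of_forall fun z => w3_nonneg _ _ _ _
  rw [lintegral_congr he] at hcon
  have hw : IntegrableOn (fun z : E3 × ℝ => w3 v q z.1 z.2) (pCyl x₀ t₀ a) :=
    ⟨hmw.aestronglyMeasurable,
      (hasFiniteIntegral_iff_ofReal h0).2 (hcon.trans_lt ENNReal.ofReal_lt_top)⟩
  rw [← ofReal_integral_eq_lintegral_ofReal hw h0, ENNReal.ofReal_le_ofReal_iff (by positivity)] at hcon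
  exact hsing (a / 2) (by positivity) (by linarith) (H h hr ha har hw hcon)
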